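/- Let n ≥ 1, let σ : Fin n → Fin n be a bijection, and let Δ be a triple diagram without closed strands realizing σ, with arcs γ_i. Then Δ is minimal — i.e., its number of triple points is less than or equal to the number of triple points of every triple diagram whose arcs realize σ — if and only if both of the following hold: (1) no monogon: no arc γ_i passes through the same point of the disk at two distinct parameter values; and (2) no parallel bigon: there do not exist distinct indices i ≠ j, points x ≠ y of the open disk, and parameters s₁ < s₂ and t₁ < t₂ with γ_i(s₁) = γ_j(t₁) = x and γ_i(s₂) = γ_j(t₂) = y (i.e., two arcs meeting at two points with both arcs oriented from the first point to the second). -/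

import Mathlib

open Set Metric Real
open scoped RealInnerProductSpace

noncomputable section

/-- The Euclidean plane. -/
abbrev Plane : Type := EuclideanSpace ℝ (Fin 2)

/-- The point of the unit circle at angle `θ`. -/
def unitPt (θ : ℝ) : Plane := (WithLp.equiv 2 (Fin 2 → ℝ)).symm ![Real.cos θ, Real.sin θ]

/-- The `2n` marked boundary points `v_k = (cos (kπ/n), sin (kπ/n))`. -/
def bpoint (n k : ℕ) : Plane := unitPt (k * Real.pi / n)

/-- The underlying geometric data of a diagram in the closed unit disk:
`na` smooth immersed arcs with endpoints on the boundary circle (transverse to it,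
pairwise distinct endpoints, interior in the open disk) and `nl` smooth immersed
loops (1-periodic) contained in the open disk. -/
structure PreDiagram (na nl : ℕ) where
  arc : Fin na → ℝ → Plane
  loop : Fin nl → ℝ → Plane
  arc_smooth : ∀ i, ContDiff ℝ (⊤ : ℕ∞) (arc i)
  loop_smooth : ∀ i, ContDiff ℝ (⊤ : ℕ∞) (loop i)
  loop_periodic : ∀ i, Function.Periodic (loop i) 1
  arc_immersed : ∀ i, ∀ t ∈ Icc (0:ℝ) 1, deriv (arc i) t ≠ 0
  loop_immersed : ∀ i t, deriv (loop i) t ≠ 0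
  arc_in_disk : ∀ i, ∀ t ∈ Icc (0:ℝ) 1, ‖arc i t‖ ≤ 1
  arc_interior : ∀ i, ∀ t ∈ Ioo (0:ℝ) 1, ‖arc i t‖ < 1
  arc_start_bdry : ∀ i, ‖arc i 0‖ = 1
  arc_end_bdry : ∀ i, ‖arc i 1‖ = 1
  arc_transverse_start : ∀ i, ⟪deriv (arc i) 0, arc i 0⟫ ≠ 0
  arc_transverse_end : ∀ i, ⟪deriv (arc i) 1, arc i 1⟫ ≠ 0
  loop_in_disk : ∀ i t, ‖loop i t‖ < 1
  endpoints_distinct :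
    Function.Injective (Sum.elim (fun i => arc i 0) (fun i => arc i 1) :
      Fin na ⊕ Fin na → Plane)

variable {na nl : ℕ}

/-- The passages of the strands of a diagram through the point `p`: parameter values
(with the strand they belong to) mapping to `p`.  For arcs the relevant parameters lie in
`(0,1)`; for loops we take one period `[0,1)`. -/
def PreDiagram.passages (D : PreDiagram na nl) (p : Plane) :
    Set ((Fin na × ℝ) ⊕ (Fin nl × ℝ)) :=
  Sum.elim (fun q => q.2 ∈ Ioo (0:ℝ) 1 ∧ D.arc q.1 q.2 = p)
           (fun q => q.2 ∈ Ico (0:ℝ) 1 ∧ D.loop q.1 q.2 = p)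

/-- The (forward) tangent vector of the branch through a given passage. -/
def PreDiagram.tangent (D : PreDiagram na nl) :
    (Fin na × ℝ) ⊕ (Fin nl × ℝ) → Plane :=
  Sum.elim (fun q => deriv (D.arc q.1) q.2) (fun q => deriv (D.loop q.1) q.2)

/-- A multiple point: a point traversed more than once by the strands,
counting with multiplicity in the parameters. -/
def PreDiagram.IsMultiplePoint (D : PreDiagram na nl) (p : Plane) : Prop :=
  ¬ (D.passages p).Subsingleton

/-- A triple diagram: a diagram whose set of multiple points is finite, such that through
each multiple point exactly three branches pass, with pairwise linearly independent
tangent vectors, and such that at each such triple point the six tangent rays of the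
three branches alternate between outgoing and incoming in cyclic order (equivalently,
some positive combination of the three forward tangent vectors vanishes). -/
structure TripleDiagram (na nl : ℕ) extends PreDiagram na nl where
  multiple_finite : {p : Plane | toPreDiagram.IsMultiplePoint p}.Finite
  triple : ∀ p : Plane, toPreDiagram.IsMultiplePoint p →
    (toPreDiagram.passages p).ncard = 3
  branches_transverse : ∀ p : Plane, toPreDiagram.IsMultiplePoint p →
    ∀ q₁ ∈ toPreDiagram.passages p, ∀ q₂ ∈ toPreDiagram.passages p, q₁ ≠ q₂ →
      LinearIndependent ℝ ![toPreDiagram.tangent q₁, toPreDiagram.tangent q₂]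
  alternating : ∀ p : Plane, toPreDiagram.IsMultiplePoint p →
    ∃ q₁ q₂ q₃, toPreDiagram.passages p = {q₁, q₂, q₃} ∧
      ∃ a b c : ℝ, 0 < a ∧ 0 < b ∧ 0 < c ∧
        a • toPreDiagram.tangent q₁ + b • toPreDiagram.tangent q₂ +
          c • toPreDiagram.tangent q₃ = 0

/-- The number of triple points of a triple diagram. -/
def TripleDiagram.tripleCount (D : TripleDiagram na nl) : ℕ :=
  {p : Plane | D.toPreDiagram.IsMultiplePoint p}.ncard

/-- A triple diagram (with `n` arcs) realizes the bijection `σ` if its `i`-th arc runs from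
the 'in' point `v_{2i}` to the 'out' point `v_{2σ(i)+1}`. -/
def Realizes {n nl : ℕ} (D : TripleDiagram n nl) (σ : Equiv.Perm (Fin n)) : Prop :=
  ∀ i : Fin n, D.arc i 0 = bpoint n (2 * (i : ℕ)) ∧ D.arc i 1 = bpoint n (2 * (σ i : ℕ) + 1)

/-- `N(σ)`: the number of ordered pairs `(i,j)`, `i ≠ j`, such that with `a = 2i`, `b = 2j`,
`c = 2σ(i)+1`, `d = 2σ(j)+1` in `{0,…,2n−1}`, either `a < b < c < d` or `d < c < b < a`. -/
def Ncross (n : ℕ) (σ : Equiv.Perm (Fin n)) : ℕ :=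
  (Finset.univ.filter fun ij : Fin n × Fin n =>
    ij.1 ≠ ij.2 ∧
      ((2 * (ij.1 : ℕ) < 2 * (ij.2 : ℕ) ∧
        2 * (ij.2 : ℕ) < 2 * (σ ij.1 : ℕ) + 1 ∧
        2 * (σ ij.1 : ℕ) + 1 < 2 * (σ ij.2 : ℕ) + 1) ∨
       (2 * (σ ij.2 : ℕ) + 1 < 2 * (σ ij.1 : ℕ) + 1 ∧
        2 * (σ ij.1 : ℕ) + 1 < 2 * (ij.2 : ℕ) ∧
        2 * (ij.2 : ℕ) < 2 * (ij.1 : ℕ)))).card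

end

section Part1
open Set Metric Real
open scoped RealInnerProductSpace
namespace TD
open Filter Topology ComplexConjugate

/-- The closed unit square. -/
def sq : Set (ℝ × ℝ) := Icc 0 1 ×ˢ Icc 0 1

/-- Its boundary. -/
def bd : Set (ℝ × ℝ) := {x | x ∈ sq ∧ (x.1 = 0 ∨ x.1 = 1 ∨ x.2 = 0 ∨ x.2 = 1)}

/-- The displacement from `z`, as a complex number. -/
def wz (z x : ℝ × ℝ) : ℂ := ⟨x.1 - z.1, x.2 - z.2⟩

/-- `w` or its conjugate according to a sign. -/
noncomputable def fac (e : ℤ) (w : ℂ) : ℂ := if e = 1 then w else conj w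

/-- `F` has at `z` a nondegenerate zero of sign `e`. -/
def NZero (F : ℝ × ℝ → ℂ) (z : ℝ × ℝ) (e : ℤ) : Prop :=
  (e = 1 ∨ e = -1) ∧ ∃ κ : ℂ, κ ≠ 0 ∧ ∃ r : ℝ, r < 1 ∧
    ∀ᶠ x in 𝓝[≠] z, ‖F x / fac e (wz z x) - κ‖ ≤ r * ‖κ‖

lemma continuous_wz (z : ℝ × ℝ) : Continuous (wz z) := by
  have : wz z = fun x => ((x.1 - z.1 : ℝ) : ℂ) + ((x.2 - z.2 : ℝ) : ℂ) * Complex.I := by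
    funext x; apply Complex.ext <;> simp [wz]
  rw [this]; fun_prop

lemma wz_ne_zero {z x : ℝ × ℝ} (h : x ≠ z) : wz z x ≠ 0 := by
  intro h0
  apply h
  have h1 := congrArg Complex.re h0
  have h2 := congrArg Complex.im h0
  simp [wz] at h1 h2
  ext <;> linarith

lemma continuous_fac (e : ℤ) : Continuous (fac e) := by
  unfold fac; split_ifs
  · exact continuous_id
  · exact Complex.continuous_conj

lemma fac_ne_zero {e : ℤ} {w : ℂ} (h : w ≠ 0) : fac e w ≠ 0 := by
  unfold fac; split_ifs
  · exact h
  · simpa using h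

lemma exists_log_square (F : ℝ × ℝ → ℂ) (hF : ContinuousOn F sq) (h0 : ∀ x ∈ sq, F x ≠ 0) :
    ∃ l : ℝ × ℝ → ℂ, Continuous l ∧ ∀ x ∈ sq, F x = Complex.exp (l x) := by
  let c : ℝ → ℝ := fun t => max 0 (min 1 t)
  have hc : Continuous c := by fun_prop
  have hcm : ∀ t, c t ∈ Icc (0:ℝ) 1 := fun t => ⟨le_max_left _ _, max_le (by norm_num) (min_le_left _ _)⟩
  have hcid : ∀ t ∈ Icc (0:ℝ) 1, c t = t := by
    intro t ht; simp only [c]; rw [min_eq_right ht.2, max_eq_right ht.1]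
  let pr : ℝ × ℝ → ℝ × ℝ := fun x => (c x.1, c x.2)
  have hπ : Continuous pr := by fun_prop
  have hπm : ∀ x, pr x ∈ sq := fun x => ⟨hcm _, hcm _⟩
  have hFc : Continuous (F ∘ pr) := hF.comp_continuous hπ hπm
  let f : C(ℝ × ℝ, {z : ℂ // z ≠ 0}) := ⟨fun x => ⟨F (pr x), h0 _ (hπm x)⟩, by
    exact Continuous.subtype_mk hFc _⟩
  obtain ⟨G, ⟨-, hG⟩, -⟩ := Complex.isCoveringMap_exp.existsUnique_continuousMap_lifts f (0,0)
    (Complex.log (F (pr (0,0)))) (by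
      apply Subtype.ext; simp [f, Complex.exp_log (h0 _ (hπm _))])
  refine ⟨G, G.continuous, fun x hx => ?_⟩
  have := congrArg Subtype.val (congrFun hG x)
  simp only [Function.comp, f, ContinuousMap.coe_mk] at this
  rw [this]
  have : pr x = x := by
    ext
    · exact hcid _ hx.1
    · exact hcid _ hx.2
  rw [this]

lemma NZero.mul {F G : ℝ × ℝ → ℂ} {z : ℝ × ℝ} {e : ℤ} (h : NZero F z e)
    (hG : ContinuousAt G z) (h0 : G z ≠ 0) : NZero (fun x => F x * G x) z e := by
  obtain ⟨he, κ, hκ, r, hr, hev⟩ := h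
  have hGpos : 0 < ‖G z‖ := norm_pos_iff.2 h0
  have hκpos : 0 < ‖κ‖ := norm_pos_iff.2 hκ
  refine ⟨he, κ * G z, mul_ne_zero hκ h0, (max r 0 + 1) / 2, by
    have : max r 0 < 1 := max_lt hr one_pos
    linarith, ?_⟩
  have hr1 : max r 0 < 1 := max_lt hr one_pos
  have hlim : Tendsto (fun x => ‖G x‖ * max r 0 + ‖G x - G z‖) (𝓝 z) (𝓝 (‖G z‖ * max r 0 + 0)) := by
    apply Tendsto.add
    · exact hG.norm.mul_const _
    · have : Tendsto (fun x => ‖G x - G z‖) (𝓝 z) (𝓝 ‖G z - G z‖) :=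
        (hG.sub tendsto_const_nhds).norm
      simpa using this
  have hlt : ‖G z‖ * max r 0 + 0 < ‖G z‖ * ((max r 0 + 1) / 2) := by nlinarith
  have hev2 := (hlim.eventually_lt_const hlt).filter_mono (nhdsWithin_le_nhds (s := {z}ᶜ))
  filter_upwards [hev, hev2] with x hx hx2
  have e1 : F x * G x / fac e (wz z x) - κ * G z
      = G x * (F x / fac e (wz z x) - κ) + κ * (G x - G z) := by ring
  rw [e1]
  calc _ ≤ ‖G x‖ * ‖F x / fac e (wz z x) - κ‖ + ‖κ‖ * ‖G x - G z‖ := by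
        refine (norm_add_le _ _).trans ?_
        rw [norm_mul, norm_mul]
    _ ≤ ‖G x‖ * (max r 0 * ‖κ‖) + ‖κ‖ * ‖G x - G z‖ := by
        gcongr
        exact hx.trans (by gcongr; exact le_max_left _ _)
    _ = ‖κ‖ * (‖G x‖ * max r 0 + ‖G x - G z‖) := by ring
    _ ≤ ‖κ‖ * (‖G z‖ * ((max r 0 + 1) / 2)) := by gcongr
    _ = _ := by rw [norm_mul]; ring

lemma NZero.congr {F G : ℝ × ℝ → ℂ} {z : ℝ × ℝ} {e : ℤ} (h : NZero F z e)
    (hG : ∀ᶠ x in 𝓝 z, G x = F x) : NZero G z e := by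
  obtain ⟨he, κ, hκ, r, hr, hev⟩ := h
  refine ⟨he, κ, hκ, r, hr, ?_⟩
  filter_upwards [hev, hG.filter_mono nhdsWithin_le_nhds] with x hx hx2
  rw [hx2]; exact hx

lemma div_mem_slitPlane {a b : ℂ} (ha : 0 < a.re) (hb : 0 < b.re) : a / b ∈ Complex.slitPlane := by
  have hb0 : b ≠ 0 := by rintro rfl; simp at hb
  have hn : 0 < Complex.normSq b := Complex.normSq_pos.2 hb0
  rw [Complex.mem_slitPlane_iff]
  by_contra hcon
  push Not at hcon
  obtain ⟨h1, h2⟩ := hcon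
  have h3 : a = (a / b) * b := by field_simp
  have h4 : a / b = ((a / b).re : ℂ) := by apply Complex.ext <;> simp [h2]
  have h5 := congrArg Complex.re h3
  rw [h4, Complex.re_ofReal_mul] at h5
  nlinarith

/-- On each side of the square, both displacements lie in a common half plane. -/
lemma wz_ratio {z x : ℝ × ℝ} (hz : z ∈ Ioo (0:ℝ) 1 ×ˢ Ioo (0:ℝ) 1) (hx : x ∈ bd) :
    wz z x / wz (1/2, 1/2) x ∈ Complex.slitPlane := by
  obtain ⟨⟨hz1, hz2⟩, hz3, hz4⟩ := hz
  have key : ∀ c : ℂ, c ≠ 0 → 0 < (c * wz z x).re → 0 < (c * wz (1/2,1/2) x).re →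
      wz z x / wz (1/2, 1/2) x ∈ Complex.slitPlane := by
    intro c hc h1 h2
    have := div_mem_slitPlane h1 h2
    rwa [mul_div_mul_left _ _ hc] at this
  rcases hx.2 with h | h | h | h
  · apply key (-1) (by simp) <;> simp [wz, h] <;> linarith
  · apply key 1 (by simp) <;> simp [wz, h] <;> linarith
  · apply key Complex.I (by simp) <;> simp [wz, h] <;> linarith
  · apply key (-Complex.I) (by simp) <;> simp [wz, h] <;> linarith

lemma center_notMem {x : ℝ × ℝ} (hx : x ∈ bd) : x ≠ (1/2, 1/2) := by
  rintro rfl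
  rcases hx.2 with h | h | h | h <;> norm_num at h

lemma bd_ne {z x : ℝ × ℝ} (hz : z ∈ Ioo (0:ℝ) 1 ×ˢ Ioo (0:ℝ) 1) (hx : x ∈ bd) : x ≠ z := by
  rintro rfl
  obtain ⟨⟨hz1, hz2⟩, hz3, hz4⟩ := hz
  rcases hx.2 with h | h | h | h <;> linarith

/-- On the boundary, `fac e (wz z ·)` is `w_c ^ e` up to an exponential. -/
lemma fac_log {z : ℝ × ℝ} (hz : z ∈ Ioo (0:ℝ) 1 ×ˢ Ioo (0:ℝ) 1) {e : ℤ} (he : e = 1 ∨ e = -1) :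
    ∃ l : ℝ × ℝ → ℂ, ContinuousOn l bd ∧
      ∀ x ∈ bd, fac e (wz z x) = Complex.exp (l x) * (wz (1/2, 1/2) x) ^ e := by
  have hcont : ContinuousOn (fun x => Complex.log (wz z x / wz (1/2, 1/2) x)) bd := by
    apply ContinuousOn.clog
    · exact (continuous_wz _).continuousOn.div (continuous_wz _).continuousOn
        (fun x hx => wz_ne_zero (center_notMem hx))
    · intro x hx; exact wz_ratio hz hx
  have hval : ∀ x ∈ bd, Complex.exp (Complex.log (wz z x / wz (1/2, 1/2) x)) * wz (1/2,1/2) x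
      = wz z x := by
    intro x hx
    rw [Complex.exp_log (div_ne_zero (wz_ne_zero (bd_ne hz hx)) (wz_ne_zero (center_notMem hx)))]
    exact div_mul_cancel₀ _ (wz_ne_zero (center_notMem hx))
  rcases he with rfl | rfl
  · refine ⟨_, hcont, fun x hx => ?_⟩
    rw [zpow_one, hval x hx]; simp [fac]
  · refine ⟨fun x => ((2 * Real.log ‖wz z x‖ : ℝ) : ℂ) -
      Complex.log (wz z x / wz (1/2, 1/2) x), ?_, fun x hx => ?_⟩
    · refine ContinuousOn.sub ?_ hcont
      refine Complex.continuous_ofReal.comp_continuousOn (continuousOn_const.mul ?_)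
      exact ContinuousOn.log (continuous_wz _).norm.continuousOn
        (fun x hx => norm_ne_zero_iff.2 (wz_ne_zero (bd_ne hz hx)))
    · have h1 := wz_ne_zero (bd_ne hz hx)
      have h2 := wz_ne_zero (center_notMem hx)
      have hn : ‖wz z x‖ ≠ 0 := norm_ne_zero_iff.2 h1
      rw [Complex.exp_sub, Complex.exp_log (div_ne_zero h1 h2), ← Complex.ofReal_exp]
      have : Real.exp (2 * Real.log ‖wz z x‖) = ‖wz z x‖^2 := by
        rw [two_mul, Real.exp_add, Real.exp_log (norm_pos_iff.2 h1)]; ring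
      rw [this]
      have h3 : ((‖wz z x‖^2 : ℝ) : ℂ) = wz z x * conj (wz z x) := by
        rw [Complex.mul_conj, Complex.normSq_eq_norm_sq]
      rw [h3]
      simp only [fac, zpow_neg, zpow_one]
      norm_num
      field_simp

lemma degree_log (Z : Finset (ℝ × ℝ)) : ∀ (F : ℝ × ℝ → ℂ) (e : ℝ × ℝ → ℤ), ContinuousOn F sq →
    (∀ z ∈ Z, z ∈ Ioo (0:ℝ) 1 ×ˢ Ioo (0:ℝ) 1) → (∀ x ∈ sq, x ∉ Z → F x ≠ 0) →
    (∀ z ∈ Z, NZero F z (e z)) →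
    ∃ l : ℝ × ℝ → ℂ, ContinuousOn l bd ∧
      ∀ x ∈ bd, F x = Complex.exp (l x) * (wz (1/2, 1/2) x) ^ (∑ z ∈ Z, e z) := by
  classical
  induction Z using Finset.induction_on with
  | empty =>
    intro F e hF _ h0 _
    obtain ⟨l, hl, hl2⟩ := exists_log_square F hF (fun x hx => h0 x hx (by simp))
    exact ⟨l, hl.continuousOn, fun x hx => by simpa using hl2 x hx.1⟩
  | insert z Z hzZ ih =>
    intro F e hF hZ h0 hN
    have hz := hZ z (by simp)
    obtain ⟨he, κ, hκ, r, hr, hev⟩ := hN z (by simp)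
    have hκpos : 0 < ‖κ‖ := norm_pos_iff.2 hκ
    rw [eventually_nhdsWithin_iff] at hev
    have hop : IsOpen (Ioo (0:ℝ) 1 ×ˢ Ioo (0:ℝ) 1) := isOpen_Ioo.prod isOpen_Ioo
    have hZn : ∀ᶠ x in 𝓝 z, x ∉ Z :=
      (Z.finite_toSet.isClosed.isOpen_compl).mem_nhds (by simpa using hzZ)
    obtain ⟨ρ, hρ, hball⟩ := Metric.eventually_nhds_iff.1
      (hev.and ((show ∀ᶠ x in 𝓝 z, x ∈ Ioo (0:ℝ) 1 ×ˢ Ioo (0:ℝ) 1 from hop.mem_nhds hz).and hZn))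
    set G : ℝ × ℝ → ℂ := fun x => fac (e z) (wz z x) with hGdef
    have hGc : Continuous G := (continuous_fac _).comp (continuous_wz z)
    have hG0 : ∀ x, x ≠ z → G x ≠ 0 := fun x hx => fac_ne_zero (wz_ne_zero hx)
    let χ : ℝ × ℝ → ℝ := fun x => max 0 (min 1 (2 - 4 * dist x z / ρ))
    have hχc : Continuous χ := by fun_prop
    have hχ1 : ∀ x, dist x z < ρ / 4 → χ x = 1 := by
      intro x hx
      have : 4 * dist x z / ρ ≤ 1 := by rw [div_le_one hρ]; linarith
      simp only [χ]
      rw [min_eq_left (by linarith), max_eq_right (by norm_num)]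
    have hχ0 : ∀ x, ρ / 2 ≤ dist x z → χ x = 0 := by
      intro x hx
      have : 2 ≤ 4 * dist x z / ρ := by rw [le_div_iff₀ hρ]; linarith
      simp only [χ]
      rw [max_eq_left]
      exact (min_le_right _ _).trans (by linarith)
    have hχm : ∀ x, 0 ≤ χ x ∧ χ x ≤ 1 := fun x =>
      ⟨le_max_left _ _, max_le (by norm_num) (min_le_left _ _)⟩
    let F1 : ℝ × ℝ → ℂ := fun x => (1 - (χ x : ℂ)) * (F x / G x) + (χ x : ℂ) * κ
    have hF1far : ∀ x, ρ / 2 ≤ dist x z → F1 x = F x / G x := by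
      intro x hx; simp [F1, hχ0 x hx]
    have hF1c : ContinuousOn F1 sq := by
      intro x hx
      by_cases hxz : x = z
      · subst hxz
        have : ∀ᶠ y in 𝓝 x, F1 y = κ := by
          filter_upwards [Metric.ball_mem_nhds x (show 0 < ρ/4 by linarith)] with y hy
          simp [F1, hχ1 y hy]
        have hc : ContinuousAt F1 x := by
          refine (continuousAt_const (y := κ)).congr ?_
          filter_upwards [this] with y hy using hy.symm
        exact hc.continuousWithinAt
      · have hχx : ContinuousWithinAt (fun y => (χ y : ℂ)) sq x :=
          (Complex.continuous_ofReal.comp hχc).continuousWithinAt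
        exact ((continuousWithinAt_const.sub hχx).mul
          ((hF x hx).div hGc.continuousWithinAt (hG0 x hxz))).add (hχx.mul continuousWithinAt_const)
    have hF10 : ∀ x ∈ sq, x ∉ Z → F1 x ≠ 0 := by
      intro x hx hxZ
      by_cases hd : ρ / 2 ≤ dist x z
      · rw [hF1far x hd]
        have hxz : x ≠ z := by rintro rfl; simp at hd; linarith
        exact div_ne_zero (h0 x hx (by simp [hxz, hxZ])) (hG0 x hxz)
      · by_cases hxz : x = z
        · subst hxz
          have : F1 x = κ := by simp [F1, hχ1 x (by simp; linarith)]
          rw [this]; exact hκ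
        · intro hzero
          have h1 := (hball (show dist x z < ρ by linarith)).1 hxz
          have h2 : F1 x - κ = (1 - (χ x : ℂ)) * (F x / G x - κ) := by simp only [F1]; ring
          have h3 : ‖F1 x - κ‖ = (1 - χ x) * ‖F x / G x - κ‖ := by
            rw [h2, norm_mul]
            congr 1
            rw [← Complex.ofReal_one, ← Complex.ofReal_sub, Complex.norm_real, Real.norm_eq_abs,
              abs_of_nonneg (by linarith [(hχm x).2])]
          rw [hzero, zero_sub, norm_neg] at h3
          have h4 := hχm x
          have h5 : (1 - χ x) * ‖F x / G x - κ‖ ≤ ‖F x / G x - κ‖ := by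
            nlinarith [norm_nonneg (F x / G x - κ)]
          have h6 : ‖F x / G x - κ‖ ≤ r * ‖κ‖ := h1
          nlinarith
    have hF1N : ∀ z' ∈ Z, NZero F1 z' (e z') := by
      intro z' hz'
      have hne : z' ≠ z := by rintro rfl; exact hzZ hz'
      have hd : ρ ≤ dist z' z := by
        by_contra hcon
        push Not at hcon
        exact (hball hcon).2.2 hz'
      have h1 := (hN z' (by simp [hz'])).mul (G := fun x => (G x)⁻¹)
        (hGc.continuousAt.inv₀ (hG0 z' hne)) (inv_ne_zero (hG0 z' hne))
      refine h1.congr ?_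
      have : ∀ᶠ x in 𝓝 z', ρ/2 < dist x z :=
        (continuous_id.dist continuous_const).continuousAt.eventually_const_lt
          (show ρ / 2 < dist (id z') z by simp; linarith)
      filter_upwards [this] with x hx
      rw [hF1far x hx.le, div_eq_mul_inv]
    obtain ⟨l, hl, hl2⟩ := ih F1 e hF1c (fun z' hz' => hZ z' (by simp [hz'])) hF10 hF1N
    obtain ⟨l', hl', hl2'⟩ := fac_log hz he
    refine ⟨fun x => l x + l' x, hl.add hl', fun x hx => ?_⟩
    have hd : ρ / 2 ≤ dist x z := by
      by_contra hcon
      push Not at hcon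
      exact bd_ne (hball (show dist x z < ρ by linarith)).2.1 hx rfl
    have hxz : x ≠ z := bd_ne hz hx
    have h1 : F x = F1 x * G x := by
      rw [hF1far x hd, div_mul_cancel₀ _ (hG0 x hxz)]
    rw [h1, hl2 x hx]
    simp only [hGdef]
    rw [hl2' x hx, Finset.sum_insert hzZ, Complex.exp_add,
      zpow_add₀ (wz_ne_zero (center_notMem hx))]
    ring

/-- Constancy of a continuous function with values in `2πiℤ`-cosets. -/
lemma exp_const {S : Set ℝ} (hS : IsPreconnected S) {k : ℝ → ℂ} (hk : ContinuousOn k S)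
    (hc : ∀ x ∈ S, ∀ y ∈ S, Complex.exp (k x) = Complex.exp (k y)) {x y : ℝ} (hx : x ∈ S)
    (hy : y ∈ S) : k x = k y := by
  have hex : ∀ u ∈ S, ∃ m : ℤ, k u - k x = m * (2 * π * Complex.I) := by
    intro u hu
    obtain ⟨m, hm⟩ := Complex.exp_eq_exp_iff_exists_int.1 (hc u hu x hx)
    exact ⟨m, by rw [hm]; ring⟩
  choose! m hm using hex
  let g : ℝ → ℝ := fun u => ((k u - k x) / (2 * π * Complex.I)).re
  have hpi : (2 * π * Complex.I : ℂ) ≠ 0 := by simp [Real.pi_ne_zero]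
  have hg : ∀ u ∈ S, g u = m u := by
    intro u hu
    simp only [g]
    rw [hm u hu, mul_div_cancel_right₀ _ hpi]; simp
  have hgc : ContinuousOn g S := by
    apply Complex.continuous_re.comp_continuousOn
    exact (hk.sub continuousOn_const).div_const _
  have himg : IsPreconnected (g '' S) := hS.image g hgc
  have hsub : (g '' S).Subsingleton := by
    have key : ∀ a b : ℤ, (a:ℝ) ∈ g '' S → (b:ℝ) ∈ g '' S → ¬ a < b := by
      intro a b ha hb hab
      have h1 : (a:ℝ) + 1/2 ∈ g '' S := himg.Icc_subset ha hb ⟨by linarith, by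
        have : (a:ℝ) + 1 ≤ b := by exact_mod_cast hab
        linarith⟩
      obtain ⟨u, hu, hu2⟩ := h1
      rw [hg u hu] at hu2
      have h3 : ((2 * m u : ℤ):ℝ) = ((2 * a + 1 : ℤ):ℝ) := by push_cast; linarith
      have h4 : 2 * m u = 2 * a + 1 := by exact_mod_cast h3
      omega
    rintro _ ⟨u, hu, rfl⟩ _ ⟨v, hv, rfl⟩
    have hu' := mem_image_of_mem g hu
    have hv' := mem_image_of_mem g hv
    rw [hg u hu] at hu' ⊢
    rw [hg v hv] at hv' ⊢
    have h1 := key _ _ hu' hv'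
    have h2 := key _ _ hv' hu'
    have : m u = m v := by omega
    rw [this]
  have h1 := hsub ⟨x, hx, rfl⟩ ⟨y, hy, rfl⟩
  rw [hg x hx, hg y hy] at h1
  have h2 : m x = m y := by exact_mod_cast h1
  have h3 := hm x hx
  have h4 := hm y hy
  rw [← h2] at h4
  have : k x - k x = k y - k x := h3.trans h4.symm
  exact sub_left_injective this


/-- `w_c ^ m` has a continuous logarithm on the boundary of the square only for `m = 0`. -/
lemma zpow_log_zero {m : ℤ} {l : ℝ × ℝ → ℂ} (hl : ContinuousOn l bd)
    (h : ∀ x ∈ bd, (wz (1/2, 1/2) x) ^ m = Complex.exp (l x)) : m = 0 := by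
  let M : ℝ → ℝ := fun θ => max |cos θ| |sin θ|
  have hM : ∀ θ, 0 < M θ := by
    intro θ
    by_contra hcon
    have h1 : |cos θ| ≤ 0 := (le_max_left _ _).trans (not_lt.1 hcon)
    have h2 : |sin θ| ≤ 0 := (le_max_right _ _).trans (not_lt.1 hcon)
    have h3 := abs_nonpos_iff.1 h1
    have h4 := abs_nonpos_iff.1 h2
    have := Real.sin_sq_add_cos_sq θ
    rw [h3, h4] at this; norm_num at this
  have hMc : Continuous M := by fun_prop
  let P : ℝ → ℝ × ℝ := fun θ => (1/2 + cos θ / (2 * M θ), 1/2 + sin θ / (2 * M θ))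
  have hPc : Continuous P := by
    have : ∀ θ, 2 * M θ ≠ 0 := fun θ => by linarith [hM θ]
    exact Continuous.prodMk
      (continuous_const.add (continuous_cos.div (continuous_const.mul hMc) this))
      (continuous_const.add (continuous_sin.div (continuous_const.mul hMc) this))
  have hbound : ∀ θ a, |a| ≤ M θ → 0 ≤ 1/2 + a / (2 * M θ) ∧ 1/2 + a / (2 * M θ) ≤ 1 := by
    intro θ a ha
    have hm := hM θ
    obtain ⟨h1, h2⟩ := abs_le.1 ha
    have e : a / (2 * M θ) = (a / M θ) / 2 := by field_simp
    have h3 : a / M θ ≤ 1 := (div_le_one hm).2 h2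
    have h4 : -1 ≤ a / M θ := by rw [le_div_iff₀ hm]; linarith
    rw [e]; constructor <;> linarith
  have hside : ∀ θ a, |a| = M θ → 1/2 + a / (2 * M θ) = 0 ∨ 1/2 + a / (2 * M θ) = 1 := by
    intro θ a ha
    have hm := hM θ
    rcases abs_choice a with hh | hh
    · right; rw [← ha, hh]
      have : a ≠ 0 := by rintro rfl; simp at ha; linarith
      field_simp; norm_num
    · left; rw [← ha, hh]
      have : a ≠ 0 := by rintro rfl; simp at ha; linarith
      field_simp; norm_num
  have hPm : ∀ θ, P θ ∈ bd := by
    intro θ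
    refine ⟨⟨hbound θ _ (le_max_left _ _), hbound θ _ (le_max_right _ _)⟩, ?_⟩
    rcases max_choice |cos θ| |sin θ| with hh | hh
    · rcases hside θ (cos θ) hh.symm with h1 | h1
      · exact Or.inl h1
      · exact Or.inr (Or.inl h1)
    · rcases hside θ (sin θ) hh.symm with h1 | h1
      · exact Or.inr (Or.inr (Or.inl h1))
      · exact Or.inr (Or.inr (Or.inr h1))
  have hw : ∀ θ : ℝ, wz (1/2, 1/2) (P θ)
      = Complex.exp ((-Real.log (2 * M θ) : ℝ) + θ * Complex.I) := by
    intro θ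
    have hm := hM θ
    rw [Complex.exp_add, ← Complex.ofReal_exp, Real.exp_neg, Real.exp_log (by linarith)]
    rw [Complex.exp_mul_I, ← Complex.ofReal_cos, ← Complex.ofReal_sin]
    apply Complex.ext
    · simp [wz, P]; field_simp; exact (Complex.cos_ofReal_re θ).symm
    · simp [wz, P]; field_simp; exact (Complex.sin_ofReal_re θ).symm
  let k : ℝ → ℂ := fun θ => l (P θ) - m * ((-Real.log (2 * M θ) : ℝ) + θ * Complex.I)
  have hkc : Continuous k := by
    have hlog : Continuous fun θ => Real.log (2 * M θ) :=
      (continuous_const.mul hMc).log (fun θ => by have := hM θ; simp; linarith)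
    have h1 : Continuous fun θ => l (P θ) := hl.comp_continuous hPc hPm
    change Continuous fun θ : ℝ =>
      l (P θ) - m * (((-Real.log (2 * M θ) : ℝ) : ℂ) + θ * Complex.I)
    exact h1.sub (continuous_const.mul ((Complex.continuous_ofReal.comp hlog.neg).add
      (Complex.continuous_ofReal.mul continuous_const)))
  have hk1 : ∀ θ, Complex.exp (k θ) = 1 := by
    intro θ
    simp only [k]
    rw [Complex.exp_sub, ← h _ (hPm θ), hw, ← Complex.exp_int_mul, div_self (Complex.exp_ne_zero _)]
  have h2 := exp_const isPreconnected_univ hkc.continuousOn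
    (fun x _ y _ => by rw [hk1, hk1]) (mem_univ 0) (mem_univ (2 * π))
  have hP : P (2 * π) = P 0 := by simp [P, M]
  have hM2 : M (2 * π) = M 0 := by simp [M]
  simp only [k] at h2
  rw [hP, hM2] at h2
  have h3 : (m : ℂ) * ((2 * π : ℝ) * Complex.I) = 0 := by
    push_cast at h2 ⊢
    linear_combination h2
  simpa [Real.pi_ne_zero] using h3

/-- Two functions with nondegenerate zeros which are never opposite on the boundary have the
same signed count of zeros. -/
lemma degree_eq (Z Z' : Finset (ℝ × ℝ)) (F F' : ℝ × ℝ → ℂ) (e e' : ℝ × ℝ → ℤ)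
    (hF : ContinuousOn F sq) (hF' : ContinuousOn F' sq)
    (hZ : ∀ z ∈ Z, z ∈ Ioo (0:ℝ) 1 ×ˢ Ioo (0:ℝ) 1) (hZ' : ∀ z ∈ Z', z ∈ Ioo (0:ℝ) 1 ×ˢ Ioo (0:ℝ) 1)
    (h0 : ∀ x ∈ sq, x ∉ Z → F x ≠ 0) (h0' : ∀ x ∈ sq, x ∉ Z' → F' x ≠ 0)
    (hN : ∀ z ∈ Z, NZero F z (e z)) (hN' : ∀ z ∈ Z', NZero F' z (e' z))
    (hb : ∀ x ∈ bd, F' x / F x ∈ Complex.slitPlane) :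
    ∑ z ∈ Z, e z = ∑ z ∈ Z', e' z := by
  obtain ⟨l, hl, hl2⟩ := degree_log Z F e hF hZ h0 hN
  obtain ⟨l', hl', hl2'⟩ := degree_log Z' F' e' hF' hZ' h0' hN'
  have hbs : bd ⊆ sq := fun x hx => hx.1
  have hb0 : ∀ x ∈ bd, F x ≠ 0 := fun x hx => h0 x hx.1 (fun hxz => bd_ne (hZ x hxz) hx rfl)
  have hb0' : ∀ x ∈ bd, F' x ≠ 0 := fun x hx => h0' x hx.1 (fun hxz => bd_ne (hZ' x hxz) hx rfl)
  have hlog : ContinuousOn (fun x => Complex.log (F' x / F x)) bd :=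
    ((hF'.mono hbs).div (hF.mono hbs) hb0).clog hb
  have := zpow_log_zero (m := ∑ z ∈ Z', e' z - ∑ z ∈ Z, e z)
    (l := fun x => l x - l' x + Complex.log (F' x / F x)) ((hl.sub hl').add hlog) (by
      intro x hx
      rw [Complex.exp_add, Complex.exp_sub, Complex.exp_log (div_ne_zero (hb0' x hx) (hb0 x hx)),
        zpow_sub₀ (wz_ne_zero (center_notMem hx)), hl2 x hx, hl2' x hx]
      have h1 := Complex.exp_ne_zero (l x)
      have h2 := Complex.exp_ne_zero (l' x)
      have h3 : wz (1/2, 1/2) x ^ (∑ z ∈ Z, e z) ≠ 0 :=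
        zpow_ne_zero _ (wz_ne_zero (center_notMem hx))
      field_simp)
  linarith

lemma crossing_nzero {g h : ℝ → ℂ} {u v : ℂ} {s0 t0 : ℝ} (hg : HasDerivAt g u s0)
    (hh : HasDerivAt h v t0) (heq : g s0 = h t0) (hd : (conj u * v).im ≠ 0) :
    NZero (fun x => g x.1 - h x.2) (s0, t0) (if 0 < (conj u * v).im then -1 else 1) := by
  set α : ℂ := (u + Complex.I * v) / 2 with hα
  set β : ℂ := (u - Complex.I * v) / 2 with hβ
  have hab : ‖α‖ ^ 2 - ‖β‖ ^ 2 = - (conj u * v).im := by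
    rw [← Complex.normSq_eq_norm_sq, ← Complex.normSq_eq_norm_sq, hα, hβ]
    simp [Complex.normSq_apply]
    ring
  have hest : ∀ η > 0, ∀ᶠ x : ℝ × ℝ in 𝓝 (s0, t0),
      ‖(g x.1 - h x.2) - (α * wz (s0, t0) x + β * conj (wz (s0, t0) x))‖
        ≤ 2 * η * ‖wz (s0, t0) x‖ := by
    intro η hη
    have h1 := (hasDerivAt_iff_isLittleO.1 hg).bound hη
    have h2 := (hasDerivAt_iff_isLittleO.1 hh).bound hη
    have h1' : ∀ᶠ x : ℝ × ℝ in 𝓝 (s0, t0), _ := (continuous_fst.tendsto (s0, t0)).eventually h1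
    have h2' : ∀ᶠ x : ℝ × ℝ in 𝓝 (s0, t0), _ := (continuous_snd.tendsto (s0, t0)).eventually h2
    filter_upwards [h1', h2'] with x hx1 hx2
    have e1 : (g x.1 - h x.2) - (α * wz (s0, t0) x + β * conj (wz (s0, t0) x))
        = (g x.1 - g s0 - (x.1 - s0) • u) - (h x.2 - h t0 - (x.2 - t0) • v) := by
      have : α * wz (s0, t0) x + β * conj (wz (s0, t0) x)
          = (x.1 - s0) • u - (x.2 - t0) • v := by
        apply Complex.ext <;> simp [hα, hβ, wz] <;> ring
      rw [this, heq]; ring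
    rw [e1]
    have h3 : ‖x.1 - s0‖ ≤ ‖wz (s0, t0) x‖ := by
      have := Complex.abs_re_le_norm (wz (s0, t0) x)
      simpa [wz] using this
    have h4 : ‖x.2 - t0‖ ≤ ‖wz (s0, t0) x‖ := by
      have := Complex.abs_im_le_norm (wz (s0, t0) x)
      simpa [wz] using this
    calc _ ≤ η * ‖x.1 - s0‖ + η * ‖x.2 - t0‖ := (norm_sub_le _ _).trans (add_le_add hx1 hx2)
      _ ≤ η * ‖wz (s0, t0) x‖ + η * ‖wz (s0, t0) x‖ := by gcongr
      _ = _ := by ring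
  have main : ∀ (a b : ℂ) (e : ℤ), ‖b‖ < ‖a‖ → (∀ w, α * w + β * conj w
      = a * fac e w + b * conj (fac e w)) → (e = 1 ∨ e = -1) →
      NZero (fun x => g x.1 - h x.2) (s0, t0) e := by
    intro a b e hlt hform he
    have ha : 0 < ‖a‖ := (norm_nonneg b).trans_lt hlt
    refine ⟨he, a, norm_pos_iff.1 ha, (‖a‖ + ‖b‖) / (2 * ‖a‖), ?_, ?_⟩
    · rw [div_lt_one (by linarith)]; linarith
    · have h1 := (hest ((‖a‖ - ‖b‖) / 4) (by linarith)).filter_mono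
        (nhdsWithin_le_nhds (s := {(s0, t0)}ᶜ))
      filter_upwards [h1, self_mem_nhdsWithin] with x hx hxne
      have hw := wz_ne_zero hxne
      have hf := fac_ne_zero (e := e) hw
      have hfn : ‖fac e (wz (s0, t0) x)‖ = ‖wz (s0, t0) x‖ := by
        unfold fac; split_ifs <;> simp
      have hwpos : 0 < ‖wz (s0, t0) x‖ := norm_pos_iff.2 hw
      have e2 : (g x.1 - h x.2) / fac e (wz (s0, t0) x) - a
          = ((g x.1 - h x.2) - (α * wz (s0, t0) x + β * conj (wz (s0, t0) x))
              + b * conj (fac e (wz (s0, t0) x))) / fac e (wz (s0, t0) x) := by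
        rw [hform]; field_simp; ring
      rw [e2, norm_div, hfn, div_le_iff₀ hwpos]
      refine (norm_add_le _ _).trans ?_
      rw [norm_mul, Complex.norm_conj, hfn]
      have e3 : (‖a‖ + ‖b‖) / (2 * ‖a‖) * ‖a‖ = (‖a‖ + ‖b‖) / 2 := by field_simp
      rw [e3]
      nlinarith
  split_ifs with hpos
  · apply main β α (-1) ?_ ?_ (Or.inr rfl)
    · by_contra hcon
      push Not at hcon
      have : ‖β‖ ^ 2 ≤ ‖α‖ ^ 2 := by gcongr
      linarith
    · intro w; simp [fac]; ring
  · have hneg : (conj u * v).im < 0 := lt_of_le_of_ne (not_lt.1 hpos) hd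
    apply main α β 1 ?_ ?_ (Or.inl rfl)
    · by_contra hcon
      push Not at hcon
      have : ‖α‖ ^ 2 ≤ ‖β‖ ^ 2 := by gcongr
      linarith
    · intro w; simp [fac]

end TD

end Part1

section Part2
open Set Metric Real
open scoped RealInnerProductSpace
namespace TD
open Filter Topology ComplexConjugate

lemma arg_one_add {q : ℂ} (hq : q ∈ Complex.slitPlane) :
    Complex.arg (1 + q) - Complex.arg (1 + 1 / q) = Complex.arg q := by
  have hq0 : q ≠ 0 := Complex.slitPlane_ne_zero hq
  have h1 : 1 + q = q * (1 + 1 / q) := by field_simp; ring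
  have hn : 0 < Complex.normSq q := Complex.normSq_pos.2 hq0
  by_cases him : q.im = 0
  · have hre : 0 < q.re := by
      rcases Complex.mem_slitPlane_iff.1 hq with h | h
      · exact h
      · exact absurd him h
    have e : q = (q.re : ℂ) := by apply Complex.ext <;> simp [him]
    have h2 : 0 ≤ 1 + q.re := by linarith
    have h3 : 0 ≤ 1 + 1 / q.re := by positivity
    rw [e, Complex.arg_ofReal_of_nonneg hre.le]
    have e2 : (1 : ℂ) + (q.re : ℂ) = ((1 + q.re : ℝ) : ℂ) := by push_cast; ring
    have e3 : (1 : ℂ) + 1 / (q.re : ℂ) = ((1 + 1 / q.re : ℝ) : ℂ) := by push_cast; ring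
    rw [e2, e3, Complex.arg_ofReal_of_nonneg h2, Complex.arg_ofReal_of_nonneg h3]; simp
  · have hi : (1 + 1 / q).im = - q.im / Complex.normSq q := by simp
    have h0 : 1 + 1 / q ≠ 0 := by
      intro h
      have h' : - q.im / Complex.normSq q = 0 := by rw [← hi, h]; simp
      rcases div_eq_zero_iff.1 h' with h | h
      · exact him (by linarith)
      · exact hn.ne' h
    have hmem : Complex.arg q + Complex.arg (1 + 1 / q) ∈ Ioc (-π) π := by
      rcases lt_or_gt_of_ne him with h | h
      · have a1 := Complex.arg_neg_iff.2 h
        have a2 := Complex.neg_pi_lt_arg q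
        have a3 : 0 ≤ Complex.arg (1 + 1 / q) :=
          Complex.arg_nonneg_iff.2 (by rw [hi]; exact div_nonneg (by linarith) hn.le)
        have a4 := Complex.arg_le_pi (1 + 1 / q)
        constructor <;> linarith
      · have a1 : 0 ≤ Complex.arg q := Complex.arg_nonneg_iff.2 h.le
        have a2 := Complex.arg_le_pi q
        have a3 : Complex.arg (1 + 1 / q) < 0 :=
          Complex.arg_neg_iff.2 (by rw [hi]; exact div_neg_of_neg_of_pos (by linarith) hn)
        have a4 := Complex.neg_pi_lt_arg (1 + 1 / q)
        constructor <;> linarith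
    rw [h1, Complex.arg_mul hq0 h0 hmem]; ring

/-- A half-arc ending at `p` with final velocity `u`. -/
structure Half (α : ℝ → ℂ) (p u : ℂ) : Prop where
  cont : ContinuousOn α (Icc 0 1)
  one : α 1 = p
  der : HasDerivAt α u 1
  le : ∀ s ∈ Icc (0:ℝ) 1, ‖α s‖ ≤ 1
  zero : ‖α 0‖ = 1
  hu : u ≠ 0

/-- Logarithm of the direction seen from the end point. -/
structure HalfLog (α : ℝ → ℂ) (p u : ℂ) (μ : ℝ → ℂ) : Prop where
  cont : ContinuousOn μ (Icc 0 1)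
  one : μ 1 = 0
  eq : ∀ s ∈ Icc (0:ℝ) 1, α s - p = - u * (1 - s) * Complex.exp (μ s)

lemma Half.exists_log {α : ℝ → ℂ} {p u : ℂ} (h : Half α p u)
    (hne : ∀ s ∈ Ico (0:ℝ) 1, α s ≠ p) : ∃ μ, HalfLog α p u μ := by
  classical
  let H : ℝ → ℂ := fun s => if s = 1 then 1 else (α s - p) / (-u * (1 - s))
  have hlin : ∀ s : ℝ, s ≠ 1 → -u * (1 - (s:ℂ)) ≠ 0 := by
    intro s hs
    refine mul_ne_zero (neg_ne_zero.2 h.hu) ?_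
    rw [sub_ne_zero]; exact_mod_cast hs.symm
  have hHc : ContinuousOn H (Icc 0 1) := by
    intro s hs
    by_cases hs1 : s = 1
    · subst hs1
      have h1 := hasDerivAt_iff_tendsto_slope.1 h.der
      have h2 : ContinuousAt H 1 := by
        rw [← continuousWithinAt_compl_self]
        have h3 := h1.div_const u
        rw [div_self h.hu] at h3
        have e : H 1 = 1 := by simp [H]
        unfold ContinuousWithinAt
        rw [e]
        refine h3.congr' ?_
        filter_upwards [self_mem_nhdsWithin] with s hs
        have hs' : s ≠ 1 := hs
        simp only [H, if_neg hs', slope, vsub_eq_sub, h.one, Complex.real_smul]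
        have h4 := hlin s hs'
        have h5 : (s : ℂ) - 1 ≠ 0 := by rw [sub_ne_zero]; exact_mod_cast hs'
        have h6 := h.hu
        rw [div_eq_div_iff h6 h4]
        push_cast
        field_simp
        ring
      exact h2.continuousWithinAt
    · have hd : ContinuousWithinAt (fun s : ℝ => (α s - p) / (-u * (1 - s))) (Icc 0 1) s := by
        refine ((h.cont s hs).sub continuousWithinAt_const).div ?_ (hlin s hs1)
        exact Continuous.continuousWithinAt (by fun_prop)
      refine hd.congr_of_eventuallyEq ?_ (by simp [H, hs1])
      have : ∀ᶠ y in 𝓝 s, y ≠ 1 := isOpen_ne.mem_nhds hs1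
      filter_upwards [this.filter_mono nhdsWithin_le_nhds] with y hy
      simp [H, hy]
  have hH0 : ∀ s ∈ Icc (0:ℝ) 1, H s ≠ 0 := by
    intro s hs
    by_cases hs1 : s = 1
    · simp [H, hs1]
    · simp only [H, if_neg hs1]
      exact div_ne_zero (sub_ne_zero.2 (hne s ⟨hs.1, lt_of_le_of_ne hs.2 hs1⟩)) (hlin s hs1)
  obtain ⟨l, hl, hl2⟩ := exists_log_square (fun x => H x.1)
    (hHc.comp continuous_fst.continuousOn (fun x hx => hx.1)) (fun x hx => hH0 x.1 hx.1)
  have hmem : ∀ s ∈ Icc (0:ℝ) 1, ((s, 0) : ℝ × ℝ) ∈ sq := fun s hs => ⟨hs, by simp⟩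
  refine ⟨fun s => l (s, 0) - l (1, 0), ?_, by simp, ?_⟩
  · exact Continuous.continuousOn (by fun_prop)
  · intro s hs
    rw [Complex.exp_sub, ← hl2 _ (hmem s hs), ← hl2 _ (hmem 1 (by simp))]
    by_cases hs1 : s = 1
    · subst hs1; simp [h.one]
    · have := hlin s hs1
      simp only [H, if_neg hs1, if_true, div_one]
      rw [mul_div_cancel₀ _ this]

lemma re_pos_of_circle {z w : ℂ} (hz : ‖z‖ = 1) (hw : ‖w‖ ≤ 1) (hne : w ≠ z) :
    0 < ((z - w) / z).re := by
  have hz0 : z ≠ 0 := by rintro rfl; simp at hz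
  have e : (z - w) / z = 1 - w / z := by field_simp
  have hn : ‖w / z‖ ≤ 1 := by rw [norm_div, hz, div_one]; exact hw
  rw [e, Complex.sub_re, Complex.one_re]
  have h1 : (w / z).re ≤ ‖w / z‖ := Complex.re_le_norm _
  by_contra hcon
  push Not at hcon
  have h2 : (w / z).re = 1 := by linarith
  have h3 : ‖w / z‖ ^ 2 = (w / z).re ^ 2 + (w / z).im ^ 2 := by
    rw [← Complex.normSq_eq_norm_sq, Complex.normSq_apply]; ring
  have h4 : (w / z).im = 0 := by
    have : ‖w / z‖ ^ 2 ≤ 1 := by nlinarith [norm_nonneg (w / z)]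
    rw [h2] at h3
    have : (w / z).im ^ 2 ≤ 0 := by linarith
    nlinarith
  have h5 : w / z = 1 := by apply Complex.ext <;> simp [h2, h4]
  exact hne ((div_eq_one_iff_eq hz0).1 h5)

lemma slit_of_re {w : ℂ} (h : 0 < w.re) : w ∈ Complex.slitPlane := Or.inl h

lemma im_div_ne {u v : ℂ} (hu : u ≠ 0) (hd : (conj u * v).im ≠ 0) : (v / u).im ≠ 0 := by
  have e : v / u = (conj u * v) / (Complex.normSq u : ℂ) := by
    rw [Complex.normSq_eq_conj_mul_self]
    have : conj u ≠ 0 := by simpa using hu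
    field_simp
  rw [e, Complex.div_ofReal_im]
  exact div_ne_zero hd (by simpa using hu)

/-- The key angular relation between two half-arcs meeting only at their end. -/
lemma half_pair {α β : ℝ → ℂ} {p u v : ℂ} {μ ν : ℝ → ℂ} (hα : Half α p u) (hβ : Half β p v)
    (hμ : HalfLog α p u μ) (hν : HalfLog β p v ν) (hd : (conj u * v).im ≠ 0)
    (hne : ∀ s ∈ Icc (0:ℝ) 1, ∀ t ∈ Icc (0:ℝ) 1, ¬ (s = 1 ∧ t = 1) → α s ≠ β t) :
    ((μ 0).im - Complex.arg ((α 0 - p) / α 0)) - ((ν 0).im - Complex.arg ((β 0 - p) / β 0))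
      = Complex.arg (- v / u) - Complex.arg (- β 0 / α 0) := by
  classical
  have hd' : (conj v * u).im ≠ 0 := by
    have : (conj v * u).im = - (conj u * v).im := by simp; ring
    rw [this]; exact neg_ne_zero.2 hd
  let L : ℝ × ℝ → ℂ := fun x => (1 - x.2 : ℝ) * v - (1 - x.1 : ℝ) * u
  have hLc : Continuous L := by fun_prop
  have hLest : ∀ x, (|1 - x.1| + |1 - x.2|) * |(conj u * v).im| ≤ (‖u‖ + ‖v‖) * ‖L x‖ := by
    intro x
    have h1 : (conj u * L x).im = (1 - x.2) * (conj u * v).im := by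
      simp [L]; ring
    have h2 : (conj v * L x).im = (1 - x.1) * (conj u * v).im := by
      simp [L]; ring
    have h3 : |(conj u * L x).im| ≤ ‖u‖ * ‖L x‖ := by
      refine (Complex.abs_im_le_norm _).trans ?_
      rw [norm_mul, Complex.norm_conj]
    have h4 : |(conj v * L x).im| ≤ ‖v‖ * ‖L x‖ := by
      refine (Complex.abs_im_le_norm _).trans ?_
      rw [norm_mul, Complex.norm_conj]
    rw [h1, abs_mul] at h3
    rw [h2, abs_mul] at h4
    nlinarith
  have hdpos : 0 < |(conj u * v).im| := abs_pos.2 hd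
  have hL0 : ∀ x, x ≠ (1, 1) → L x ≠ 0 := by
    intro x hx h0
    have := hLest x
    rw [h0, norm_zero, mul_zero] at this
    have h1 : |1 - x.1| + |1 - x.2| ≤ 0 := by
      by_contra hcon; push Not at hcon; nlinarith
    have h2 : |1 - x.1| = 0 := by linarith [abs_nonneg (1 - x.1), abs_nonneg (1 - x.2)]
    have h3 : |1 - x.2| = 0 := by linarith [abs_nonneg (1 - x.1), abs_nonneg (1 - x.2)]
    apply hx
    ext
    · have := abs_eq_zero.1 h2; simp; linarith
    · have := abs_eq_zero.1 h3; simp; linarith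
  let F : ℝ × ℝ → ℂ := fun x => α x.1 - β x.2
  have hFc : ContinuousOn F sq :=
    (hα.cont.comp continuous_fst.continuousOn (fun x hx => hx.1)).sub
      (hβ.cont.comp continuous_snd.continuousOn (fun x hx => hx.2))
  have hest : ∀ η > 0, ∀ᶠ x : ℝ × ℝ in 𝓝 (1, 1), ‖F x - L x‖ ≤ η * (|1 - x.1| + |1 - x.2|) := by
    intro η hη
    have h1 := (hasDerivAt_iff_isLittleO.1 hα.der).bound hη
    have h2 := (hasDerivAt_iff_isLittleO.1 hβ.der).bound hη
    have h1' : ∀ᶠ x : ℝ × ℝ in 𝓝 (1, 1), _ :=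
      (continuous_fst.tendsto ((1, 1) : ℝ × ℝ)).eventually h1
    have h2' : ∀ᶠ x : ℝ × ℝ in 𝓝 (1, 1), _ :=
      (continuous_snd.tendsto ((1, 1) : ℝ × ℝ)).eventually h2
    filter_upwards [h1', h2'] with x hx1 hx2
    have e1 : F x - L x = (α x.1 - α 1 - (x.1 - 1) • u) - (β x.2 - β 1 - (x.2 - 1) • v) := by
      simp only [F, L, hα.one, hβ.one, Complex.real_smul]; push_cast; ring
    rw [e1, abs_sub_comm 1 x.1, abs_sub_comm 1 x.2]
    calc _ ≤ η * ‖x.1 - 1‖ + η * ‖x.2 - 1‖ := (norm_sub_le _ _).trans (add_le_add hx1 hx2)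
      _ = _ := by simp only [Real.norm_eq_abs]; ring
  let H : ℝ × ℝ → ℂ := fun x => if x = (1, 1) then 1 else F x / L x
  have hHc : ContinuousOn H sq := by
    intro x hx
    by_cases hx1 : x = (1, 1)
    · subst hx1
      have : ContinuousAt H (1, 1) := by
        rw [Metric.continuousAt_iff']
        intro ε hε
        have huv : 0 < ‖u‖ + ‖v‖ := add_pos (norm_pos_iff.2 hα.hu) (norm_pos_iff.2 hβ.hu)
        have hη : 0 < ε / 2 * |(conj u * v).im| / (‖u‖ + ‖v‖) := by positivity
        filter_upwards [hest _ hη] with x hx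
        by_cases hx1 : x = (1, 1)
        · rw [hx1, dist_self]; exact hε
        · simp only [H, if_neg hx1, if_true]
          have h0 := hL0 x hx1
          have hLp : 0 < ‖L x‖ := norm_pos_iff.2 h0
          have e : F x / L x - 1 = (F x - L x) / L x := by field_simp
          rw [dist_eq_norm, e, norm_div, div_lt_iff₀ hLp]
          refine hx.trans_lt ?_
          have h3 := hLest x
          have e2 : ε / 2 * |(conj u * v).im| / (‖u‖ + ‖v‖) * (|1 - x.1| + |1 - x.2|)
              = ε / 2 * ((|1 - x.1| + |1 - x.2|) * |(conj u * v).im|) / (‖u‖ + ‖v‖) := by ring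
          rw [e2, div_lt_iff₀ huv]
          have : 0 < (‖u‖ + ‖v‖) * ‖L x‖ := by positivity
          nlinarith
      exact this.continuousWithinAt
    · have hdv : ContinuousWithinAt (fun x => F x / L x) sq x :=
        (hFc x hx).div hLc.continuousWithinAt (hL0 x hx1)
      refine hdv.congr_of_eventuallyEq ?_ (by simp [H, hx1])
      have : ∀ᶠ y in 𝓝 x, y ≠ (1, 1) := isOpen_ne.mem_nhds hx1
      filter_upwards [this.filter_mono nhdsWithin_le_nhds] with y hy
      simp [H, hy]
  have hF0 : ∀ x ∈ sq, x ≠ (1, 1) → F x ≠ 0 := by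
    intro x hx hx1
    refine sub_ne_zero.2 (hne _ hx.1 _ hx.2 ?_)
    rintro ⟨h1, h2⟩; exact hx1 (Prod.ext h1 h2)
  have hH0 : ∀ x ∈ sq, H x ≠ 0 := by
    intro x hx
    by_cases hx1 : x = (1, 1)
    · simp [H, hx1]
    · simp only [H, if_neg hx1]
      exact div_ne_zero (hF0 x hx hx1) (hL0 x hx1)
  obtain ⟨l, hl, hl2⟩ := exists_log_square H hHc hH0
  have hm11 : ((1, 1) : ℝ × ℝ) ∈ sq := ⟨by simp, by simp⟩
  let lam : ℝ × ℝ → ℂ := fun x => l x - l (1, 1)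
  have hlc : Continuous lam := by fun_prop
  have hexp : ∀ x ∈ sq, Complex.exp (lam x) * L x = F x := by
    intro x hx
    simp only [lam]
    rw [Complex.exp_sub, ← hl2 x hx, ← hl2 _ hm11]
    by_cases hx1 : x = (1, 1)
    · subst hx1; simp [H, L, F, hα.one, hβ.one]
    · simp only [H, if_neg hx1, if_true, div_one]
      exact div_mul_cancel₀ _ (hL0 x hx1)
  have hexp1 : lam (1, 1) = 0 := by simp [lam]
  have hI : IsPreconnected (Icc (0:ℝ) 1) := isPreconnected_Icc
  have m0 : (0:ℝ) ∈ Icc (0:ℝ) 1 := by simp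
  have m1 : (1:ℝ) ∈ Icc (0:ℝ) 1 := by simp
  -- edge `t = 1`
  have E1 : lam (0, 1) = μ 0 := by
    have hex : ∀ s ∈ Icc (0:ℝ) 1, Complex.exp (lam (s, 1) - μ s) = 1 := by
      intro s hs
      rw [Complex.exp_sub, div_eq_one_iff_eq (Complex.exp_ne_zero _)]
      by_cases hs1 : s = 1
      · subst hs1; rw [hexp1, hμ.one]
      · have h1 := hexp (s, 1) ⟨hs, m1⟩
        have h2 := hμ.eq s hs
        have h3 : L (s, 1) = - u * (1 - s) := by simp [L]; ring
        have h4 : L (s, 1) ≠ 0 := hL0 _ (by simp [hs1])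
        have h5 : F (s, 1) = α s - p := by simp [F, hβ.one]
        rw [h5, h2, ← h3, mul_comm] at h1
        exact mul_left_cancel₀ h4 h1
    have := exp_const (k := fun s => lam (s, 1) - μ s) hI
      ((Continuous.continuousOn (by fun_prop)).sub hμ.cont)
      (fun x hx y hy => by rw [hex x hx, hex y hy]) m0 m1
    simp only [hexp1, hμ.one, sub_zero] at this
    exact sub_eq_zero.1 this
  have E2 : lam (1, 0) = ν 0 := by
    have hex : ∀ s ∈ Icc (0:ℝ) 1, Complex.exp (lam (1, s) - ν s) = 1 := by
      intro s hs
      rw [Complex.exp_sub, div_eq_one_iff_eq (Complex.exp_ne_zero _)]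
      by_cases hs1 : s = 1
      · subst hs1; rw [hexp1, hν.one]
      · have h1 := hexp (1, s) ⟨m1, hs⟩
        have h2 := hν.eq s hs
        have h3 : L (1, s) = v * (1 - s) := by simp [L]; ring
        have h4 : L (1, s) ≠ 0 := hL0 _ (by simp [hs1])
        have h5 : F (1, s) = - (β s - p) := by simp [F, hα.one]
        rw [h5, h2] at h1
        have h6 : -(-v * (1 - (s:ℂ)) * Complex.exp (ν s)) = L (1, s) * Complex.exp (ν s) := by
          rw [h3]; ring
        rw [h6, mul_comm] at h1
        exact mul_left_cancel₀ h4 h1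
    have := exp_const (k := fun s => lam (1, s) - ν s) hI
      ((Continuous.continuousOn (by fun_prop)).sub hν.cont)
      (fun x hx y hy => by rw [hex x hx, hex y hy]) m0 m1
    simp only [hexp1, hν.one, sub_zero] at this
    exact sub_eq_zero.1 this
  have hz0 : α 0 ≠ 0 := by intro h; have := hα.zero; rw [h] at this; simp at this
  have hw0 : β 0 ≠ 0 := by intro h; have := hβ.zero; rw [h] at this; simp at this
  have hslitL : ∀ {a b : ℂ} (ha : a ≠ 0) (hab : (conj a * b).im ≠ 0) (r : ℝ),
      1 - r * (b / a) ∈ Complex.slitPlane := by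
    intro a b ha hab r
    have hi := im_div_ne ha hab
    by_cases hr : r = 0
    · left; simp [hr]
    · right
      simp only [Complex.sub_im, Complex.one_im, Complex.im_ofReal_mul, zero_sub]
      exact neg_ne_zero.2 (mul_ne_zero hr hi)
  have E3 : lam (0, 0) + Complex.log (1 - (v / u)) - Complex.log ((α 0 - β 0) / α 0)
      = μ 0 - Complex.log ((α 0 - p) / α 0) := by
    have hre : ∀ t ∈ Icc (0:ℝ) 1, 0 < ((α 0 - β t) / α 0).re := fun t ht =>
      re_pos_of_circle hα.zero (hβ.le t ht) (hne 0 m0 t ht (by simp)).symm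
    have hsl : ∀ t : ℝ, 1 - ((1 - t : ℝ) : ℂ) * (v / u) ∈ Complex.slitPlane :=
      fun t => hslitL hα.hu hd _
    have hex : ∀ t ∈ Icc (0:ℝ) 1, Complex.exp (lam (0, t)
        + Complex.log (1 - ((1 - t : ℝ) : ℂ) * (v / u)) - Complex.log ((α 0 - β t) / α 0))
        = - α 0 / u := by
      intro t ht
      have h1 := Complex.slitPlane_ne_zero (hsl t)
      have h2 := Complex.slitPlane_ne_zero (slit_of_re (hre t ht))
      have h3 : α 0 - β t ≠ 0 := fun h => h2 (by rw [h]; simp)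
      rw [Complex.exp_sub, Complex.exp_add, Complex.exp_log h1, Complex.exp_log h2]
      have h4 := hexp (0, t) ⟨m0, ht⟩
      have h5 : L (0, t) = (1 - ((1 - t : ℝ) : ℂ) * (v / u)) * (-u) := by
        have := hα.hu
        simp only [L]; push_cast; field_simp; ring
      have h6 : F (0, t) = α 0 - β t := rfl
      rw [h5, h6, ← mul_assoc] at h4
      have h7 := hα.hu
      rw [div_eq_div_iff h2 h7]
      have : Complex.exp (lam (0, t)) * (1 - ((1 - t : ℝ) : ℂ) * (v / u)) * u
          = - (α 0 - β t) := by rw [← h4]; ring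
      rw [this]; field_simp
    have hc : ContinuousOn (fun t : ℝ => lam (0, t)
        + Complex.log (1 - ((1 - t : ℝ) : ℂ) * (v / u)) - Complex.log ((α 0 - β t) / α 0))
        (Icc 0 1) := by
      refine ContinuousOn.sub (ContinuousOn.add (Continuous.continuousOn (by fun_prop)) ?_) ?_
      · exact ContinuousOn.clog (Continuous.continuousOn (by fun_prop)) (fun t _ => hsl t)
      · exact ContinuousOn.clog ((continuousOn_const.sub hβ.cont).div_const _)
          (fun t ht => slit_of_re (hre t ht))
    have := exp_const hI hc (fun x hx y hy => by rw [hex x hx, hex y hy]) m0 m1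
    simpa [hβ.one, E1] using this
  have E4 : lam (0, 0) + Complex.log (1 - (u / v)) - Complex.log ((β 0 - α 0) / β 0)
      = ν 0 - Complex.log ((β 0 - p) / β 0) := by
    have hre : ∀ t ∈ Icc (0:ℝ) 1, 0 < ((β 0 - α t) / β 0).re := fun t ht =>
      re_pos_of_circle hβ.zero (hα.le t ht) (hne t ht 0 m0 (by simp))
    have hsl : ∀ t : ℝ, 1 - ((1 - t : ℝ) : ℂ) * (u / v) ∈ Complex.slitPlane :=
      fun t => hslitL hβ.hu hd' _
    have hex : ∀ t ∈ Icc (0:ℝ) 1, Complex.exp (lam (t, 0)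
        + Complex.log (1 - ((1 - t : ℝ) : ℂ) * (u / v)) - Complex.log ((β 0 - α t) / β 0))
        = - β 0 / v := by
      intro t ht
      have h1 := Complex.slitPlane_ne_zero (hsl t)
      have h2 := Complex.slitPlane_ne_zero (slit_of_re (hre t ht))
      have h3 : β 0 - α t ≠ 0 := fun h => h2 (by rw [h]; simp)
      rw [Complex.exp_sub, Complex.exp_add, Complex.exp_log h1, Complex.exp_log h2]
      have h4 := hexp (t, 0) ⟨ht, m0⟩
      have h5 : L (t, 0) = (1 - ((1 - t : ℝ) : ℂ) * (u / v)) * v := by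
        have := hβ.hu
        simp only [L]; push_cast; field_simp; ring
      have h6 : F (t, 0) = α t - β 0 := rfl
      rw [h5, h6, ← mul_assoc] at h4
      have h7 := hβ.hu
      rw [div_eq_div_iff h2 h7, h4]; field_simp; ring
    have hc : ContinuousOn (fun t : ℝ => lam (t, 0)
        + Complex.log (1 - ((1 - t : ℝ) : ℂ) * (u / v)) - Complex.log ((β 0 - α t) / β 0))
        (Icc 0 1) := by
      refine ContinuousOn.sub (ContinuousOn.add (Continuous.continuousOn (by fun_prop)) ?_) ?_
      · exact ContinuousOn.clog (Continuous.continuousOn (by fun_prop)) (fun t _ => hsl t)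
      · exact ContinuousOn.clog ((continuousOn_const.sub hα.cont).div_const _)
          (fun t ht => slit_of_re (hre t ht))
    have := exp_const hI hc (fun x hx y hy => by rw [hex x hx, hex y hy]) m0 m1
    simpa [hα.one, E2] using this
  have A1 := arg_one_add (q := - v / u) (by
    right
    rw [neg_div, Complex.neg_im]; exact neg_ne_zero.2 (im_div_ne hα.hu hd))
  have A2 := arg_one_add (q := - β 0 / α 0) (by
    rw [Complex.mem_slitPlane_iff]
    have hre := re_pos_of_circle hα.zero (hβ.le 0 m0) (hne 0 m0 0 m0 (by simp)).symm
    by_contra hcon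
    push Not at hcon
    obtain ⟨h1, h2⟩ := hcon
    have e : (α 0 - β 0) / α 0 = 1 + - β 0 / α 0 := by field_simp; ring
    rw [e, Complex.add_re, Complex.one_re] at hre
    have h3 : ‖- β 0 / α 0‖ = 1 := by rw [norm_div, norm_neg, hα.zero, hβ.zero]; norm_num
    have h4 : ‖- β 0 / α 0‖ ^ 2 = (- β 0 / α 0).re ^ 2 + (- β 0 / α 0).im ^ 2 := by
      rw [← Complex.normSq_eq_norm_sq, Complex.normSq_apply]; ring
    rw [h3, h2] at h4
    nlinarith)
  have f1 : (1:ℂ) + - v / u = 1 - v / u := by ring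
  have f2 : (1:ℂ) + 1 / (- v / u) = 1 - u / v := by
    have := hα.hu; have := hβ.hu; field_simp; ring
  have f3 : (1:ℂ) + - β 0 / α 0 = (α 0 - β 0) / α 0 := by field_simp; ring
  have f4 : (1:ℂ) + 1 / (- β 0 / α 0) = (β 0 - α 0) / β 0 := by field_simp; ring
  rw [f1, f2] at A1
  rw [f3, f4] at A2
  have I3 := congrArg Complex.im E3
  have I4 := congrArg Complex.im E4
  simp only [Complex.add_im, Complex.sub_im, Complex.log_im] at I3 I4
  rw [← A1, ← A2]
  linarith

lemma arg_circle {θ φ : ℝ} (h0 : 0 ≤ θ) (h0' : 0 ≤ φ) (h1 : θ < 2 * π) (h2 : φ < 2 * π)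
    (hlt : θ ≠ φ) :
    Complex.arg (- Complex.exp (φ * Complex.I) / Complex.exp (θ * Complex.I))
      = if θ < φ then φ - θ - π else φ - θ + π := by
  have e1 : - Complex.exp (φ * Complex.I) / Complex.exp (θ * Complex.I)
      = Complex.exp ((φ - θ - π : ℝ) * Complex.I) := by
    rw [neg_div, ← Complex.exp_sub]
    have : ((φ - θ - π : ℝ) : ℂ) * Complex.I = (φ * Complex.I - θ * Complex.I) - π * Complex.I := by
      push_cast; ring
    rw [this, Complex.exp_sub _ (π * Complex.I), Complex.exp_pi_mul_I]; ring
  have e2 : - Complex.exp (φ * Complex.I) / Complex.exp (θ * Complex.I)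
      = Complex.exp ((φ - θ + π : ℝ) * Complex.I) := by
    rw [neg_div, ← Complex.exp_sub]
    have : ((φ - θ + π : ℝ) : ℂ) * Complex.I = (φ * Complex.I - θ * Complex.I) + π * Complex.I := by
      push_cast; ring
    rw [this, Complex.exp_add _ (π * Complex.I), Complex.exp_pi_mul_I]; ring
  have key : ∀ x : ℝ, -π < x → x ≤ π → Complex.arg (Complex.exp ((x:ℂ) * Complex.I)) = x := by
    intro x a b
    rw [Complex.arg_exp_mul_I]
    exact (toIocMod_eq_self _).2 ⟨a, by linarith⟩
  split_ifs with h
  · rw [e1, key _ (by linarith) (by linarith)]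
  · have : φ < θ := lt_of_le_of_ne (not_lt.1 h) hlt.symm
    rw [e2, key _ (by linarith) (by linarith)]

lemma arg_neg_div {u v : ℂ} (hu : u ≠ 0) (h : 0 < (conj u * v).im) :
    Complex.arg (- v / u) < 0 := by
  rw [Complex.arg_neg_iff]
  have e : - v / u = ((-(Complex.normSq u)⁻¹ : ℝ) : ℂ) * (conj u * v) := by
    have h1 : conj u ≠ 0 := by simpa using hu
    push_cast
    rw [Complex.normSq_eq_conj_mul_self]
    field_simp
  rw [e, Complex.im_ofReal_mul]
  have : 0 < (Complex.normSq u)⁻¹ := inv_pos.2 (Complex.normSq_pos.2 hu)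
  nlinarith

lemma arg_cyc {u v w : ℂ} (hu : u ≠ 0) (hv : v ≠ 0) (hw : w ≠ 0) (h1 : 0 < (conj u * v).im)
    (h2 : 0 < (conj v * w).im) (h3 : 0 < (conj w * u).im) :
    Complex.arg (- v / u) + Complex.arg (- w / v) + Complex.arg (- u / w) = - π := by
  have a1 := arg_neg_div hu h1
  have a2 := arg_neg_div hv h2
  have a3 := arg_neg_div hw h3
  have b1 := Complex.neg_pi_lt_arg (- v / u)
  have b2 := Complex.neg_pi_lt_arg (- w / v)
  have b3 := Complex.neg_pi_lt_arg (- u / w)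
  have n1 : - v / u ≠ 0 := div_ne_zero (neg_ne_zero.2 hv) hu
  have n2 : - w / v ≠ 0 := div_ne_zero (neg_ne_zero.2 hw) hv
  have n3 : - u / w ≠ 0 := div_ne_zero (neg_ne_zero.2 hu) hw
  have hprod : (- v / u) * (- w / v) * (- u / w) = -1 := by field_simp
  have hang : ((Complex.arg (- v / u) + Complex.arg (- w / v) + Complex.arg (- u / w) : ℝ) :
      Real.Angle) = ((-π : ℝ) : Real.Angle) := by
    rw [Real.Angle.coe_add, Real.Angle.coe_add, ← Complex.arg_mul_coe_angle n1 n2,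
      ← Complex.arg_mul_coe_angle (mul_ne_zero n1 n2) n3, hprod, Complex.arg_neg_one]
    simp
  obtain ⟨k, hk⟩ := Real.Angle.angle_eq_iff_two_pi_dvd_sub.1 hang
  have hp := Real.pi_pos
  have k1 : (k:ℝ) < 1 := by nlinarith
  have k2 : (-1:ℝ) < k := by nlinarith
  have : k = 0 := by
    have k1' : k < 1 := by exact_mod_cast k1
    have k2' : -1 < k := by exact_mod_cast k2
    omega
  rw [this] at hk; push_cast at hk; linarith

/-- Sign of a comparison. -/
noncomputable def cmp3 (a b : ℝ) : ℤ := if a < b then 1 else -1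

/-- Three half-arcs ending at a common point and otherwise disjoint: their cyclic order at
the boundary circle is determined by the velocities. -/
lemma tripod {α : Fin 3 → ℝ → ℂ} {p : ℂ} {u : Fin 3 → ℂ} {θ : Fin 3 → ℝ}
    (hα : ∀ a, Half (α a) p (u a))
    (hθ : ∀ a, θ a ∈ Ico (0:ℝ) (2 * π)) (hz : ∀ a, α a 0 = Complex.exp (θ a * Complex.I))
    (hp : ‖p‖ < 1)
    (h01 : 0 < (conj (u 0) * u 1).im) (h12 : 0 < (conj (u 1) * u 2).im)
    (h20 : 0 < (conj (u 2) * u 0).im)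
    (hself : ∀ a, ∀ s ∈ Ico (0:ℝ) 1, α a s ≠ p)
    (hne : ∀ a b, a ≠ b → ∀ s ∈ Icc (0:ℝ) 1, ∀ t ∈ Icc (0:ℝ) 1, ¬ (s = 1 ∧ t = 1) →
      α a s ≠ α b t) :
    cmp3 (θ 0) (θ 1) + cmp3 (θ 1) (θ 2) + cmp3 (θ 2) (θ 0) = 1 := by
  choose μ hμ using fun a => (hα a).exists_log (hself a)
  have A := half_pair (hα 0) (hα 1) (hμ 0) (hμ 1) h01.ne' (hne 0 1 (by decide))
  have B := half_pair (hα 1) (hα 2) (hμ 1) (hμ 2) h12.ne' (hne 1 2 (by decide))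
  have C := half_pair (hα 2) (hα 0) (hμ 2) (hμ 0) h20.ne' (hne 2 0 (by decide))
  have S := arg_cyc (hα 0).hu (hα 1).hu (hα 2).hu h01 h12 h20
  have tne : ∀ a b, a ≠ b → θ a ≠ θ b := by
    intro a b hab h
    refine hne a b hab 0 (by simp) 0 (by simp) (by simp) ?_
    rw [hz, hz, h]
  have T := fun a b hab => arg_circle (hθ a).1 (hθ b).1 (hθ a).2 (hθ b).2 (tne a b hab)
  have T' : ∀ a b, a ≠ b → Complex.arg (- α b 0 / α a 0) = θ b - θ a - (cmp3 (θ a) (θ b)) * π := by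
    intro a b hab
    rw [hz, hz, T a b hab, cmp3]
    split_ifs <;> push_cast <;> ring
  rw [T' 0 1 (by decide)] at A
  rw [T' 1 2 (by decide)] at B
  rw [T' 2 0 (by decide)] at C
  have hfin : ((cmp3 (θ 0) (θ 1) + cmp3 (θ 1) (θ 2) + cmp3 (θ 2) (θ 0) : ℤ) : ℝ) * π = 1 * π := by
    push_cast; linarith
  have := mul_right_cancel₀ Real.pi_pos.ne' hfin
  exact_mod_cast this

end TD

end Part2

section Part3
open Set Metric Real
open scoped RealInnerProductSpace
namespace TD
open Filter Topology ComplexConjugate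

/-- Identification of the plane with `ℂ`. -/
noncomputable def cx : Plane ≃ₗᵢ[ℝ] ℂ := Complex.orthonormalBasisOneI.repr.symm

/-- The determinant of two vectors of the plane. -/
noncomputable def det (u v : Plane) : ℝ := (conj (cx u) * cx v).im

lemma det_add_right (u v w : Plane) : det u (v + w) = det u v + det u w := by
  simp [det]; ring

lemma det_smul_right (u v : Plane) (a : ℝ) : det u (a • v) = a * det u v := by
  simp [det]; ring

lemma det_swap (u v : Plane) : det v u = - det u v := by
  simp [det]; ring

lemma det_add_left (u v w : Plane) : det (v + w) u = det v u + det w u := by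
  simp [det]; ring

lemma det_smul_left (u v : Plane) (a : ℝ) : det (a • u) v = a * det u v := by
  simp [det]; ring

lemma det_self (u : Plane) : det u u = 0 := by
  simp [det]; ring

lemma det_zero_right (u : Plane) : det u 0 = 0 := by simp [det]

lemma det_le (u v : Plane) : |det u v| ≤ ‖u‖ * ‖v‖ := by
  unfold det
  refine (Complex.abs_im_le_norm _).trans ?_
  rw [norm_mul, Complex.norm_conj, cx.norm_map, cx.norm_map]

lemma indep_iff (u v : Plane) : LinearIndependent ℝ ![u, v] ↔ det u v ≠ 0 := by
  rw [LinearIndependent.pair_iff]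
  constructor
  · intro h hd
    have e : (Complex.normSq (cx u)) • v + (- (conj (cx u) * cx v).re) • u = 0 := by
      apply cx.injective
      rw [map_add, map_smul, map_smul, map_zero]
      unfold det at hd
      simp only [Complex.mul_im, Complex.conj_re, Complex.conj_im] at hd
      apply Complex.ext
      · simp [Complex.normSq_apply]; linear_combination (- (cx u).im) * hd
      · simp [Complex.normSq_apply]; linear_combination ((cx u).re) * hd
    rw [add_comm] at e
    have h1 := (h _ _ e).2
    have h2 : cx u = 0 := by simpa using h1
    have h3 : u = 0 := by simpa using h2
    have := (h 1 0 (by simp [h3])).1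
    norm_num at this
  · intro hd s t h
    have h1 : det u (s • u + t • v) = t * det u v := by
      rw [det_add_right, det_smul_right, det_smul_right, det_self]; ring
    have h2 : det (s • u + t • v) v = s * det u v := by
      rw [det_add_left, det_smul_left, det_smul_left, det_self]; ring
    rw [h, det_zero_right] at h1
    rw [h, det_swap, det_zero_right] at h2
    constructor
    · rcases mul_eq_zero.1 (by linarith : s * det u v = 0) with h | h
      · exact h
      · exact absurd h hd
    · rcases mul_eq_zero.1 (by linarith : t * det u v = 0) with h | h
      · exact h
      · exact absurd h hd

section count
variable {n nl : ℕ}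

/-- passages -/
abbrev Psg (n nl : ℕ) := (Fin n × ℝ) ⊕ (Fin nl × ℝ)

/-- The crossing sign. -/
noncomputable def sg (u v : Plane) : ℤ := if 0 < det u v then 1 else -1

/-- weight of an ordered pair of passages -/
noncomputable def wt (D : TripleDiagram n nl) : Psg n nl → Psg n nl → ℤ
  | Sum.inl a, Sum.inl b => if a.1 < b.1 then sg (deriv (D.arc a.1) a.2) (deriv (D.arc b.1) b.2) else 0
  | _, _ => 0

lemma passages_finite (D : TripleDiagram n nl) {p : Plane} (hp : D.IsMultiplePoint p) :
    (D.passages p).Finite :=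
  Set.finite_of_ncard_ne_zero (by rw [D.triple p hp]; norm_num)

lemma multiple_of {D : PreDiagram n nl} {p : Plane} {q q' : Psg n nl} (hq : q ∈ D.passages p)
    (hq' : q' ∈ D.passages p) (hne : q ≠ q') : D.IsMultiplePoint p :=
  fun h => hne (h hq hq')

open Classical in
/-- passages as a finset -/
noncomputable def Pf (D : TripleDiagram n nl) (p : Plane) : Finset (Psg n nl) :=
  if h : (D.passages p).Finite then h.toFinset else ∅

lemma mem_Pf {D : TripleDiagram n nl} {p : Plane} (hp : D.IsMultiplePoint p) {q : Psg n nl} :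
    q ∈ Pf D p ↔ q ∈ D.passages p := by
  unfold Pf; rw [dif_pos (passages_finite D hp)]; simp

/-- multiple points as a finset -/
noncomputable def Mf (D : TripleDiagram n nl) : Finset Plane := D.multiple_finite.toFinset

lemma mem_Mf {D : TripleDiagram n nl} {p : Plane} : p ∈ Mf D ↔ D.IsMultiplePoint p := by
  simp [Mf]

lemma card_Mf (D : TripleDiagram n nl) : (Mf D).card = D.tripleCount := by
  unfold Mf TripleDiagram.tripleCount
  rw [Set.ncard_eq_toFinset_card _ D.multiple_finite]

/-- crossings of two arcs -/
def Zs (D : TripleDiagram n nl) (i j : Fin n) : Set (ℝ × ℝ) :=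
  {z | z.1 ∈ Ioo (0:ℝ) 1 ∧ z.2 ∈ Ioo (0:ℝ) 1 ∧ D.arc i z.1 = D.arc j z.2}

lemma Zs_mult {D : TripleDiagram n nl} {i j : Fin n} (hij : i ≠ j) {z : ℝ × ℝ} (hz : z ∈ Zs D i j) :
    D.IsMultiplePoint (D.arc i z.1) ∧ Sum.inl (i, z.1) ∈ D.passages (D.arc i z.1) ∧
      Sum.inl (j, z.2) ∈ D.passages (D.arc i z.1) := by
  have h1 : (Sum.inl (i, z.1) : Psg n nl) ∈ D.passages (D.arc i z.1) := ⟨hz.1, rfl⟩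
  have h2 : (Sum.inl (j, z.2) : Psg n nl) ∈ D.passages (D.arc i z.1) := ⟨hz.2.1, hz.2.2.symm⟩
  refine ⟨multiple_of h1 h2 ?_, h1, h2⟩
  intro h
  exact hij (congrArg Prod.fst (Sum.inl.inj h))

lemma Zs_finite (D : TripleDiagram n nl) {i j : Fin n} (hij : i ≠ j) : (Zs D i j).Finite := by
  classical
  let big : Finset (Psg n nl × Psg n nl) := (Mf D).biUnion (fun p => Pf D p ×ˢ Pf D p)
  have : (Zs D i j) ⊆ (fun z : ℝ × ℝ => ((Sum.inl (i, z.1), Sum.inl (j, z.2)) :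
      Psg n nl × Psg n nl)) ⁻¹' (big : Set _) := by
    intro z hz
    obtain ⟨h1, h2, h3⟩ := Zs_mult hij hz
    simp only [big, mem_preimage, Finset.coe_biUnion, Set.mem_iUnion]
    refine ⟨_, mem_Mf.2 h1, ?_⟩
    simp only [Finset.coe_product, Set.mem_prod, Finset.mem_coe]
    exact ⟨(mem_Pf h1).2 h2, (mem_Pf h1).2 h3⟩
  refine Set.Finite.subset (Set.Finite.preimage ?_ big.finite_toSet) this
  intro a _ b _ h
  simp only [Prod.mk.injEq, Sum.inl.injEq, true_and] at h
  exact Prod.ext h.1 h.2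

open Classical in
/-- crossings as a finset -/
noncomputable def Zf (D : TripleDiagram n nl) (i j : Fin n) : Finset (ℝ × ℝ) :=
  if h : (Zs D i j).Finite then h.toFinset else ∅

lemma mem_Zf {D : TripleDiagram n nl} {i j : Fin n} (hij : i ≠ j) {z : ℝ × ℝ} :
    z ∈ Zf D i j ↔ z ∈ Zs D i j := by
  unfold Zf; rw [dif_pos (Zs_finite D hij)]; simp

/-- sign of a crossing -/
noncomputable def zs (D : TripleDiagram n nl) (i j : Fin n) (z : ℝ × ℝ) : ℤ :=
  sg (deriv (D.arc i) z.1) (deriv (D.arc j) z.2)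

lemma sum_swap (D : TripleDiagram n nl) :
    ∑ ij ∈ (Finset.univ : Finset (Fin n × Fin n)).filter (fun ij => ij.1 < ij.2),
      ∑ z ∈ Zf D ij.1 ij.2, zs D ij.1 ij.2 z
    = ∑ p ∈ Mf D, ∑ q ∈ Pf D p ×ˢ Pf D p, wt D q.1 q.2 := by
  classical
  rw [Finset.sum_sigma', Finset.sum_sigma']
  refine Finset.sum_of_injOn (fun x => ⟨D.arc x.1.1 x.2.1, (Sum.inl (x.1.1, x.2.1), Sum.inl (x.1.2, x.2.2))⟩)
    ?_ ?_ ?_ ?_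
  · rintro ⟨⟨i, j⟩, ⟨s, t⟩⟩ - ⟨⟨i', j'⟩, ⟨s', t'⟩⟩ - h
    simp only [Sigma.mk.injEq, heq_eq_eq, Prod.mk.injEq, Sum.inl.injEq] at h
    obtain ⟨-, ⟨h1, h2⟩, h3, h4⟩ := h
    subst h1 h2 h3 h4; rfl
  · rintro ⟨⟨i, j⟩, ⟨s, t⟩⟩ h
    simp only [Finset.coe_sigma, Set.mem_sigma_iff, Finset.mem_coe, Finset.mem_filter,
      Finset.mem_univ, true_and, Finset.mem_product] at h ⊢
    have h2 := Zs_mult h.1.ne ((mem_Zf h.1.ne).1 h.2)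
    exact ⟨mem_Mf.2 h2.1, (mem_Pf h2.1).2 h2.2.1, (mem_Pf h2.1).2 h2.2.2⟩
  · rintro ⟨p, ⟨q, q'⟩⟩ h hn
    simp only [Finset.mem_sigma, Finset.mem_product] at h
    obtain ⟨h1, h2, h3⟩ := h
    have h1 := mem_Mf.1 h1
    have h2 := (mem_Pf h1).1 h2
    have h3 := (mem_Pf h1).1 h3
    rcases q with ⟨i, s⟩ | q
    · rcases q' with ⟨j, t⟩ | q'
      · simp only [wt]
        rw [if_neg]
        intro hij
        apply hn
        obtain ⟨a1, a2⟩ := h2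
        obtain ⟨b1, b2⟩ := h3
        refine ⟨⟨(i, j), (s, t)⟩, ?_, ?_⟩
        · simp only [Finset.coe_sigma, Set.mem_sigma_iff, Finset.mem_coe, Finset.mem_filter,
            Finset.mem_univ, true_and]
          exact ⟨hij, (mem_Zf hij.ne).2 ⟨a1, b1, a2.trans b2.symm⟩⟩
        · simp only at a2
          simp [a2]
      · rfl
    · rfl
  · rintro ⟨⟨i, j⟩, ⟨s, t⟩⟩ h
    simp only [Finset.mem_sigma, Finset.mem_filter, Finset.mem_univ, true_and] at h
    simp only [wt, zs]; rw [if_pos h.1]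

lemma ncard_pair_le' {α : Type*} (a b : α) : ({a, b} : Set α).ncard ≤ 2 := by
  have := Set.ncard_insert_le a {b}
  rw [Set.ncard_singleton] at this
  omega

/-- local structure at a triple point -/
lemma exists_oriented (D : TripleDiagram n nl) {p : Plane} (hp : D.IsMultiplePoint p) :
    ∃ q : Fin 3 → Psg n nl, Function.Injective q ∧ D.passages p = {q 0, q 1, q 2} ∧
      0 < det (D.tangent (q 0)) (D.tangent (q 1)) ∧ 0 < det (D.tangent (q 1)) (D.tangent (q 2)) ∧
      0 < det (D.tangent (q 2)) (D.tangent (q 0)) := by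
  obtain ⟨q₁, q₂, q₃, hP, a, b, c, ha, hb, hc, h0⟩ := D.alternating p hp
  have h3 := D.triple p hp
  have hcard : ({q₁, q₂, q₃} : Set (Psg n nl)).ncard = 3 := by rw [← hP]; exact h3
  have n12 : q₁ ≠ q₂ := by
    rintro rfl
    rw [Set.insert_eq_of_mem (by simp)] at hcard
    have := ncard_pair_le' q₁ q₃; omega
  have n13 : q₁ ≠ q₃ := by
    rintro rfl
    rw [Set.insert_eq_of_mem (by simp)] at hcard
    have := ncard_pair_le' q₂ q₁; omega
  have n23 : q₂ ≠ q₃ := by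
    rintro rfl
    rw [Set.pair_eq_singleton] at hcard
    have := ncard_pair_le' q₁ q₂; omega
  have hd : det (D.tangent q₁) (D.tangent q₂) ≠ 0 :=
    (indep_iff _ _).1 (D.branches_transverse p hp q₁ (by rw [hP]; simp) q₂ (by rw [hP]; simp) n12)
  have e1 : b * det (D.tangent q₁) (D.tangent q₂) = c * det (D.tangent q₃) (D.tangent q₁) := by
    have := congrArg (det (D.tangent q₁)) h0
    rw [det_add_right, det_add_right, det_smul_right, det_smul_right, det_smul_right, det_self,
      det_zero_right, det_swap (D.tangent q₃)] at this
    linarith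
  have e2 : a * det (D.tangent q₁) (D.tangent q₂) = c * det (D.tangent q₂) (D.tangent q₃) := by
    have := congrArg (det (D.tangent q₂)) h0
    rw [det_add_right, det_add_right, det_smul_right, det_smul_right, det_smul_right, det_self,
      det_zero_right, det_swap (D.tangent q₁)] at this
    linarith
  rcases lt_or_gt_of_ne hd with h | h
  · refine ⟨![q₂, q₁, q₃], ?_, ?_, ?_, ?_, ?_⟩
    · intro x y hxy
      fin_cases x <;> fin_cases y <;> simp_all [eq_comm]
    · rw [hP]; simp only [Matrix.cons_val]; exact Set.insert_comm _ _ _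
    · simp only [Matrix.cons_val]
      rw [det_swap]; linarith
    · simp only [Matrix.cons_val]
      rw [det_swap]
      by_contra hcon; push Not at hcon; nlinarith
    · simp only [Matrix.cons_val]
      rw [det_swap]
      by_contra hcon; push Not at hcon; nlinarith
  · refine ⟨![q₁, q₂, q₃], ?_, ?_, ?_, ?_, ?_⟩
    · intro x y hxy
      fin_cases x <;> fin_cases y <;> simp_all [eq_comm]
    · rw [hP]; simp
    · simp only [Matrix.cons_val]; exact h
    · simp only [Matrix.cons_val]
      by_contra hcon; push Not at hcon; nlinarith
    · simp only [Matrix.cons_val]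
      by_contra hcon; push Not at hcon; nlinarith

/-- comparison of strand indices -/
def rr : Psg n nl → Psg n nl → ℤ
  | Sum.inl a, Sum.inl b => if a.1 < b.1 then 1 else if b.1 < a.1 then -1 else 0
  | _, _ => 0

lemma wt_add (D : TripleDiagram n nl) {q q' : Psg n nl} (h : 0 < det (D.tangent q) (D.tangent q')) :
    wt D q q' + wt D q' q = rr q q' := by
  rcases q with ⟨i, s⟩ | q <;> rcases q' with ⟨j, t⟩ | q' <;> simp only [wt, rr, add_zero]
  simp only [PreDiagram.tangent, Sum.elim_inl] at h
  have h' : ¬ 0 < det (deriv (D.arc j) t) (deriv (D.arc i) s) := by rw [det_swap]; linarith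
  simp only [sg, if_pos h, if_neg h']
  rcases lt_trichotomy i j with hl | hl | hl
  · simp [hl, hl.not_gt]
  · simp [hl]
  · simp [hl, hl.not_gt]

lemma wt_self (D : TripleDiagram n nl) (q : Psg n nl) : wt D q q = 0 := by
  rcases q with ⟨i, s⟩ | q <;> simp [wt]

lemma local_sum (D : TripleDiagram n nl) {p : Plane} (hp : D.IsMultiplePoint p)
    {q : Fin 3 → Psg n nl} (hq : Function.Injective q) (hP : D.passages p = {q 0, q 1, q 2})
    (h01 : 0 < det (D.tangent (q 0)) (D.tangent (q 1)))
    (h12 : 0 < det (D.tangent (q 1)) (D.tangent (q 2)))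
    (h20 : 0 < det (D.tangent (q 2)) (D.tangent (q 0))) :
    ∑ x ∈ Pf D p ×ˢ Pf D p, wt D x.1 x.2
      = rr (q 0) (q 1) + rr (q 1) (q 2) + rr (q 2) (q 0) := by
  classical
  have e : Pf D p = Finset.univ.image q := by
    ext x
    rw [mem_Pf hp, hP]
    simp [Fin.exists_fin_succ, eq_comm]
  rw [Finset.sum_product, e, Finset.sum_image (fun _ _ _ _ h => hq h)]
  simp only [Finset.sum_image (fun _ _ _ _ h => hq h), Fin.sum_univ_three, wt_self]
  rw [← wt_add D h01, ← wt_add D h12, ← wt_add D h20]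
  ring

lemma rr_cyc_le (q0 q1 q2 : Psg n nl) : rr q0 q1 + rr q1 q2 + rr q2 q0 ≤ 1 := by
  rcases q0 with ⟨i, s⟩ | q0 <;> rcases q1 with ⟨j, t⟩ | q1 <;> rcases q2 with ⟨k, r⟩ | q2 <;>
    simp only [rr] <;> (try split_ifs) <;> omega

lemma sum_le (D : TripleDiagram n nl) :
    ∑ p ∈ Mf D, ∑ q ∈ Pf D p ×ˢ Pf D p, wt D q.1 q.2 ≤ D.tripleCount := by
  rw [← card_Mf, Finset.cast_card]
  refine Finset.sum_le_sum (fun p hp => ?_)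
  obtain ⟨q, hq, hP, a, b, c⟩ := exists_oriented D (mem_Mf.1 hp)
  rw [local_sum D (mem_Mf.1 hp) hq hP a b c]
  exact rr_cyc_le _ _ _

end count
end TD

end Part3

section Part4
open Set Metric Real
open scoped RealInnerProductSpace
namespace TD
open Filter Topology ComplexConjugate
variable {n nl nl' : ℕ}

/-- complex version of an arc -/
noncomputable def cg (D : TripleDiagram n nl) (i : Fin n) (s : ℝ) : ℂ := cx (D.arc i s)

lemma cg_hasDeriv (D : TripleDiagram n nl) (i : Fin n) (s : ℝ) :
    HasDerivAt (cg D i) (cx (deriv (D.arc i) s)) s := by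
  have h1 : HasDerivAt (D.arc i) (deriv (D.arc i) s) s :=
    ((D.arc_smooth i).differentiable (by simp)).differentiableAt.hasDerivAt
  exact (cx.toContinuousLinearEquiv : Plane →L[ℝ] ℂ).hasFDerivAt.comp_hasDerivAt s h1

lemma cg_continuous (D : TripleDiagram n nl) (i : Fin n) : Continuous (cg D i) :=
  cx.continuous.comp (D.arc_smooth i).continuous

lemma cg_norm (D : TripleDiagram n nl) (i : Fin n) (s : ℝ) : ‖cg D i s‖ = ‖D.arc i s‖ :=
  cx.norm_map _

lemma start_ne_start (D : TripleDiagram n nl) {i j : Fin n} (h : i ≠ j) : D.arc i 0 ≠ D.arc j 0 :=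
  fun e => h (Sum.inl.inj (D.endpoints_distinct (a₁ := Sum.inl i) (a₂ := Sum.inl j) e))

lemma end_ne_end (D : TripleDiagram n nl) {i j : Fin n} (h : i ≠ j) : D.arc i 1 ≠ D.arc j 1 :=
  fun e => h (Sum.inr.inj (D.endpoints_distinct (a₁ := Sum.inr i) (a₂ := Sum.inr j) e))

lemma start_ne_end (D : TripleDiagram n nl) (i j : Fin n) : D.arc i 0 ≠ D.arc j 1 :=
  fun e => by
    have := D.endpoints_distinct (a₁ := Sum.inl i) (a₂ := Sum.inr j) e
    simp at this

/-- an end of an arc is not on any other point of the arcs -/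
lemma bdry_ne (D : TripleDiagram n nl) {i j : Fin n} {s t : ℝ} (hs : s = 0 ∨ s = 1)
    (ht : t ∈ Icc (0:ℝ) 1) (hne : ¬ (i = j ∧ s = t)) : D.arc i s ≠ D.arc j t := by
  intro h
  have hn : ‖D.arc i s‖ = 1 := by
    rcases hs with rfl | rfl
    · exact D.arc_start_bdry i
    · exact D.arc_end_bdry i
  have ht' : t = 0 ∨ t = 1 := by
    by_contra hcon
    push Not at hcon
    have := D.arc_interior j t ⟨lt_of_le_of_ne ht.1 hcon.1.symm, lt_of_le_of_ne ht.2 hcon.2⟩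
    rw [← h, hn] at this
    exact lt_irrefl _ this
  rcases hs with rfl | rfl <;> rcases ht' with rfl | rfl
  · exact start_ne_start D (fun e => hne ⟨e, rfl⟩) h
  · exact start_ne_end D _ _ h
  · exact start_ne_end D _ _ h.symm
  · exact end_ne_end D (fun e => hne ⟨e, rfl⟩) h

lemma bd_div {D : TripleDiagram n nl} {D' : TripleDiagram n nl'} {i j : Fin n} (hij : i ≠ j)
    (h0 : ∀ i, D.arc i 0 = D'.arc i 0) (h1 : ∀ i, D.arc i 1 = D'.arc i 1) {x : ℝ × ℝ}
    (hx : x ∈ bd) :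
    (cg D' i x.1 - cg D' j x.2) / (cg D i x.1 - cg D j x.2) ∈ Complex.slitPlane := by
  have key : ∀ z w w' : ℂ, ‖z‖ = 1 → ‖w‖ ≤ 1 → ‖w'‖ ≤ 1 → w ≠ z → w' ≠ z →
      (z - w') / (z - w) ∈ Complex.slitPlane := by
    intro z w w' hz hw hw' hn hn'
    have hz0 : z ≠ 0 := by rintro rfl; simp at hz
    have e : (z - w') / (z - w) = ((z - w') / z) / ((z - w) / z) := by field_simp
    rw [e]
    exact div_mem_slitPlane (re_pos_of_circle hz hw' hn') (re_pos_of_circle hz hw hn)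
  obtain ⟨⟨hx1, hx2⟩, hb⟩ := hx
  have first : (x.1 = 0 ∨ x.1 = 1) → (cg D' i x.1 - cg D' j x.2) / (cg D i x.1 - cg D j x.2) ∈ Complex.slitPlane := by
    intro hb
    have e : cg D' i x.1 = cg D i x.1 := by
      rcases hb with h | h <;> simp [cg, h, h0, h1]
    rw [e]
    apply key
    · rw [cg_norm]; rcases hb with h | h <;> rw [h]
      · exact D.arc_start_bdry i
      · exact D.arc_end_bdry i
    · rw [cg_norm]; exact D.arc_in_disk j _ hx2
    · rw [cg_norm]; exact D'.arc_in_disk j _ hx2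
    · intro h
      exact bdry_ne D hb hx2 (fun h => hij h.1) (cx.injective h).symm
    · intro h
      rw [← e] at h
      exact bdry_ne D' hb hx2 (fun h => hij h.1) (cx.injective h).symm
  have second : (x.2 = 0 ∨ x.2 = 1) → (cg D' i x.1 - cg D' j x.2) / (cg D i x.1 - cg D j x.2) ∈ Complex.slitPlane := by
    intro hb
    have e : cg D' j x.2 = cg D j x.2 := by
      rcases hb with h | h <;> simp [cg, h, h0, h1]
    rw [← neg_div_neg_eq, neg_sub, neg_sub, e]
    apply key
    · rw [cg_norm]; rcases hb with h | h <;> rw [h]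
      · exact D.arc_start_bdry j
      · exact D.arc_end_bdry j
    · rw [cg_norm]; exact D.arc_in_disk i _ hx1
    · rw [cg_norm]; exact D'.arc_in_disk i _ hx1
    · intro h
      exact bdry_ne D hb hx1 (fun h => hij h.1.symm) (cx.injective h).symm
    · intro h
      rw [← e] at h
      exact bdry_ne D' hb hx1 (fun h => hij h.1.symm) (cx.injective h).symm
  rcases hb with h | h | h | h
  · exact first (Or.inl h)
  · exact first (Or.inr h)
  · exact second (Or.inl h)
  · exact second (Or.inr h)

lemma arcs_zero {D : TripleDiagram n nl} {i j : Fin n} (hij : i ≠ j) :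
    ∀ x ∈ sq, x ∉ Zf D i j → cg D i x.1 - cg D j x.2 ≠ 0 := by
  intro x hx hxz h
  have h := cx.injective (sub_eq_zero.1 h)
  apply hxz
  rw [mem_Zf hij]
  have a1 : x.1 ≠ 0 := fun e => bdry_ne D (i := i) (j := j) (Or.inl e) hx.2 (fun h => hij h.1) h
  have a2 : x.1 ≠ 1 := fun e => bdry_ne D (i := i) (j := j) (Or.inr e) hx.2 (fun h => hij h.1) h
  have a3 : x.2 ≠ 0 := fun e => bdry_ne D (i := j) (j := i) (Or.inl e) hx.1 (fun h => hij h.1.symm) h.symm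
  have a4 : x.2 ≠ 1 := fun e => bdry_ne D (i := j) (j := i) (Or.inr e) hx.1 (fun h => hij h.1.symm) h.symm
  exact ⟨⟨lt_of_le_of_ne hx.1.1 a1.symm, lt_of_le_of_ne hx.1.2 a2⟩,
    ⟨lt_of_le_of_ne hx.2.1 a3.symm, lt_of_le_of_ne hx.2.2 a4⟩, h⟩

lemma arcs_nzero {D : TripleDiagram n nl} {i j : Fin n} (hij : i ≠ j) :
    ∀ z ∈ Zf D i j, NZero (fun x => cg D i x.1 - cg D j x.2) z (- zs D i j z) := by
  intro z hz
  rw [mem_Zf hij] at hz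
  have h := Zs_mult hij hz
  have hd := (indep_iff _ _).1 (D.branches_transverse _ h.1 _ h.2.1 _ h.2.2
    (fun e => hij (congrArg Prod.fst (Sum.inl.inj e))))
  simp only [PreDiagram.tangent, Sum.elim_inl] at hd
  have := crossing_nzero (cg_hasDeriv D i z.1) (cg_hasDeriv D j z.2)
    (congrArg cx hz.2.2) hd
  convert this using 1
  simp only [zs, sg]
  change _ = if 0 < det (deriv (D.arc i) z.1) (deriv (D.arc j) z.2) then (-1 : ℤ) else 1
  by_cases hpos : 0 < det (deriv (D.arc i) z.1) (deriv (D.arc j) z.2)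
  · simp [hpos]
  · simp [hpos]

lemma inter_eq {D : TripleDiagram n nl} {D' : TripleDiagram n nl'} {i j : Fin n} (hij : i ≠ j)
    (h0 : ∀ i, D.arc i 0 = D'.arc i 0) (h1 : ∀ i, D.arc i 1 = D'.arc i 1) :
    ∑ z ∈ Zf D i j, zs D i j z = ∑ z ∈ Zf D' i j, zs D' i j z := by
  have := degree_eq (Zf D i j) (Zf D' i j) (fun x => cg D i x.1 - cg D j x.2)
    (fun x => cg D' i x.1 - cg D' j x.2) (fun z => - zs D i j z) (fun z => - zs D' i j z)
    (by have := cg_continuous D i; have := cg_continuous D j; fun_prop)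
    (by have := cg_continuous D' i; have := cg_continuous D' j; fun_prop)
    (fun z hz => by rw [mem_Zf hij] at hz; exact ⟨hz.1, hz.2.1⟩)
    (fun z hz => by rw [mem_Zf hij] at hz; exact ⟨hz.1, hz.2.1⟩)
    (arcs_zero hij) (arcs_zero hij) (arcs_nzero hij) (arcs_nzero hij)
    (fun x hx => bd_div hij h0 h1 hx)
  simpa using this

lemma total_eq {D : TripleDiagram n nl} {D' : TripleDiagram n nl'}
    (h0 : ∀ i, D.arc i 0 = D'.arc i 0) (h1 : ∀ i, D.arc i 1 = D'.arc i 1) :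
    ∑ p ∈ Mf D, ∑ q ∈ Pf D p ×ˢ Pf D p, wt D q.1 q.2
      = ∑ p ∈ Mf D', ∑ q ∈ Pf D' p ×ˢ Pf D' p, wt D' q.1 q.2 := by
  rw [← sum_swap, ← sum_swap]
  refine Finset.sum_congr rfl (fun ij h => ?_)
  exact inter_eq (Finset.mem_filter.1 h).2.ne h0 h1

lemma cx_bpoint (n k : ℕ) : cx (bpoint n k) = Complex.exp ((k * π / n : ℝ) * Complex.I) := by
  rw [Complex.exp_mul_I]
  apply Complex.ext <;>
  simp [cx, bpoint, unitPt, Complex.orthonormalBasisOneI_repr_symm_apply,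
    ← Complex.ofReal_cos, ← Complex.ofReal_sin, -Complex.ofReal_mul, -Complex.ofReal_div]

/-- No monogons and no parallel bigons. -/
def Reduced (D : TripleDiagram n nl) : Prop :=
  (∀ (i : Fin n) (s t : ℝ), s ∈ Icc (0:ℝ) 1 → t ∈ Icc (0:ℝ) 1 → D.arc i s = D.arc i t → s = t) ∧
  (∀ (i j : Fin n), i ≠ j → ∀ s₁ s₂ t₁ t₂ : ℝ, s₁ ∈ Icc (0:ℝ) 1 → s₂ ∈ Icc (0:ℝ) 1 →
    t₁ ∈ Icc (0:ℝ) 1 → t₂ ∈ Icc (0:ℝ) 1 → s₁ < s₂ → t₁ < t₂ → D.arc i s₁ = D.arc j t₁ →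
    D.arc i s₂ ≠ D.arc j t₂)

lemma reduced_local (hn : 1 ≤ n) {D : TripleDiagram n 0} (hD : Reduced D)
    (h0 : ∀ i, D.arc i 0 = bpoint n (2 * (i : ℕ))) {p : Plane} {i : Fin 3 → Fin n} {s : Fin 3 → ℝ}
    (hs : ∀ a, s a ∈ Ioo (0:ℝ) 1) (hp : ∀ a, D.arc (i a) (s a) = p)
    (hi : Function.Injective i)
    (h01 : 0 < det (deriv (D.arc (i 0)) (s 0)) (deriv (D.arc (i 1)) (s 1)))
    (h12 : 0 < det (deriv (D.arc (i 1)) (s 1)) (deriv (D.arc (i 2)) (s 2)))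
    (h20 : 0 < det (deriv (D.arc (i 2)) (s 2)) (deriv (D.arc (i 0)) (s 0))) :
    cmp3 (i 0 : ℕ) (i 1 : ℕ) + cmp3 (i 1 : ℕ) (i 2 : ℕ) + cmp3 (i 2 : ℕ) (i 0 : ℕ) = 1 := by
  have hnp : (0:ℝ) < n := by exact_mod_cast hn
  have hpi := Real.pi_pos
  let θ : Fin 3 → ℝ := fun a => ((2 * (i a : ℕ) : ℕ) : ℝ) * π / n
  have hcmp : ∀ a b, cmp3 (θ a) (θ b) = cmp3 (i a : ℕ) (i b : ℕ) := by
    intro a b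
    unfold cmp3
    have : θ a < θ b ↔ ((i a : ℕ) : ℝ) < (i b : ℕ) := by
      simp only [θ]
      rw [div_lt_div_iff_of_pos_right hnp, mul_lt_mul_iff_left₀ hpi]
      push_cast
      constructor <;> intro h <;> linarith
    simp only [this]
  rw [← hcmp, ← hcmp, ← hcmp]
  have hmem : ∀ a, ∀ x ∈ Icc (0:ℝ) 1, x * s a ∈ Icc (0:ℝ) 1 := by
    intro a x hx
    exact ⟨mul_nonneg hx.1 (hs a).1.le, mul_le_one₀ hx.2 (hs a).1.le (hs a).2.le⟩
  have hin : ∀ a, D.arc (i a) (s a) = D.arc (i 0) (s 0) := fun a => by rw [hp, hp]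
  refine tripod (α := fun a x => cg D (i a) (x * s a)) (p := cx p)
    (u := fun a => cx (s a • deriv (D.arc (i a)) (s a))) (θ := θ) ?_ ?_ ?_ ?_ ?_ ?_ ?_ ?_ ?_
  · intro a
    refine ⟨?_, by simp [cg, hp], ?_, ?_, ?_, ?_⟩
    · have := cg_continuous D (i a); fun_prop
    · have h1 : HasDerivAt (fun x : ℝ => x * s a) (s a) 1 := by
        simpa using (hasDerivAt_id (1:ℝ)).mul_const (s a)
      have h2 := cg_hasDeriv D (i a) (1 * s a)
      have h3 := h2.scomp (1:ℝ) h1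
      rw [map_smul]
      rw [one_mul] at h3
      exact h3
    · intro x hx; rw [cg_norm]; exact D.arc_in_disk _ _ (hmem a x hx)
    · rw [cg_norm, zero_mul]; exact D.arc_start_bdry _
    · rw [map_smul]
      refine smul_ne_zero (hs a).1.ne' ?_
      simpa using D.arc_immersed (i a) (s a) ⟨(hs a).1.le, (hs a).2.le⟩
  · intro a
    refine ⟨by positivity, ?_⟩
    simp only [θ]
    rw [div_lt_iff₀ hnp]
    have : ((i a : ℕ) : ℝ) < n := by exact_mod_cast (i a).2
    push_cast
    nlinarith
  · intro a
    simp only [zero_mul, cg, h0, cx_bpoint, θ]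
  · rw [cx.norm_map, ← hp 0]; exact D.arc_interior _ _ (hs 0)
  · change 0 < det _ _
    rw [det_smul_left, det_smul_right]
    exact mul_pos (hs 0).1 (mul_pos (hs 1).1 h01)
  · change 0 < det _ _
    rw [det_smul_left, det_smul_right]
    exact mul_pos (hs 1).1 (mul_pos (hs 2).1 h12)
  · change 0 < det _ _
    rw [det_smul_left, det_smul_right]
    exact mul_pos (hs 2).1 (mul_pos (hs 0).1 h20)
  · intro a x hx h
    have h := cx.injective h
    rw [← hp a] at h
    have := hD.1 _ _ _ (hmem a x ⟨hx.1, hx.2.le⟩) ⟨(hs a).1.le, (hs a).2.le⟩ h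
    have h2 := (hs a).1
    have h3 := hx.2
    nlinarith
  · intro a b hab x hx y hy hxy h
    have h := cx.injective h
    have hx' := hmem a x hx
    have hy' := hmem b y hy
    have sa := hs a
    have sb := hs b
    have hab' : i a ≠ i b := fun e => hab (hi e)
    have hpp : D.arc (i a) (s a) = D.arc (i b) (s b) := by rw [hp, hp]
    by_cases h1 : x = 1
    · rw [h1, one_mul, hpp] at h
      have := hD.1 _ _ _ ⟨sb.1.le, sb.2.le⟩ hy' h
      apply hxy
      refine ⟨h1, ?_⟩
      have h2 : (1 - y) * s b = 0 := by linarith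
      rcases mul_eq_zero.1 h2 with h | h
      · linarith
      · linarith [sb.1]
    · by_cases h2 : y = 1
      · rw [h2, one_mul, ← hpp] at h
        have := hD.1 _ _ _ hx' ⟨sa.1.le, sa.2.le⟩ h
        have h2 : (1 - x) * s a = 0 := by linarith
        rcases mul_eq_zero.1 h2 with h | h
        · exact h1 (by linarith)
        · linarith [sa.1]
      · have hx1 : x < 1 := lt_of_le_of_ne hx.2 h1
        have hy1 : y < 1 := lt_of_le_of_ne hy.2 h2
        refine hD.2 _ _ hab' (x * s a) (s a) (y * s b) (s b) hx' ⟨sa.1.le, sa.2.le⟩ hy'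
          ⟨sb.1.le, sb.2.le⟩ ?_ ?_ h hpp
        · nlinarith [sa.1]
        · nlinarith [sb.1]

lemma reduced_sum (hn : 1 ≤ n) {D : TripleDiagram n 0} (hD : Reduced D)
    (h0 : ∀ i, D.arc i 0 = bpoint n (2 * (i : ℕ))) :
    ∑ p ∈ Mf D, ∑ q ∈ Pf D p ×ˢ Pf D p, wt D q.1 q.2 = D.tripleCount := by
  rw [← card_Mf, Finset.cast_card]
  refine Finset.sum_congr rfl (fun p hp => ?_)
  obtain ⟨q, hq, hP, a, b, c⟩ := exists_oriented D (mem_Mf.1 hp)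
  rw [local_sum D (mem_Mf.1 hp) hq hP a b c]
  have hx : ∀ k, ∃ (x : Fin n × ℝ), q k = Sum.inl x := by
    intro k
    rcases hk : q k with x | x
    · exact ⟨x, rfl⟩
    · exact x.1.elim0
  choose x hx using hx
  have hmem : ∀ k, q k ∈ D.passages p := by
    intro k; rw [hP]; fin_cases k <;> simp
  simp only [hx] at a b c hmem
  have hi : Function.Injective (fun k => (x k).1) := by
    intro k l hkl
    simp only at hkl
    apply hq
    rw [hx, hx]
    congr 1
    refine Prod.ext hkl ?_
    obtain ⟨a1, a2⟩ := hmem k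
    obtain ⟨b1, b2⟩ := hmem l
    refine hD.1 (x k).1 _ _ ⟨a1.1.le, a1.2.le⟩ ⟨b1.1.le, b1.2.le⟩ ?_
    rw [a2, hkl, b2]
  have := reduced_local hn hD h0 (p := p) (i := fun k => (x k).1) (s := fun k => (x k).2)
    (fun k => (hmem k).1) (fun k => (hmem k).2) hi a b c
  rw [← this]
  have key : ∀ k l, k ≠ l → rr (q k) (q l) = cmp3 ((x k).1 : ℕ) ((x l).1 : ℕ) := by
    intro k l hkl
    have hne : (x k).1 ≠ (x l).1 := fun e => hkl (hi e)
    rw [hx, hx]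
    simp only [rr, cmp3, Nat.cast_lt, Fin.val_fin_lt]
    rcases lt_or_gt_of_ne hne with h | h
    · simp [h]
    · simp [h, h.not_gt]
  rw [key 0 1 (by decide), key 1 2 (by decide), key 2 0 (by decide)]

lemma reduced_minimal (hn : 1 ≤ n) {σ : Equiv.Perm (Fin n)} {D : TripleDiagram n 0}
    (hσ : Realizes D σ) (hD : Reduced D) {D' : TripleDiagram n nl} (hσ' : Realizes D' σ) :
    D.tripleCount ≤ D'.tripleCount := by
  have h1 := reduced_sum hn hD (fun i => (hσ i).1)
  have h2 := sum_le D'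
  rw [total_eq (D' := D') (fun i => by rw [(hσ i).1, (hσ' i).1])
    (fun i => by rw [(hσ i).2, (hσ' i).2])] at h1
  rw [h1] at h2
  exact_mod_cast h2
end TD

end Part4

section Part5
open Set Metric Real
open scoped RealInnerProductSpace
namespace TD
open Filter Topology ComplexConjugate

/-- The smoothing profile. -/
structure Prof (ε : ℝ) (f : ℝ → ℝ) : Prop where
  smooth : ContDiff ℝ (⊤ : ℕ∞) f
  anti : ∀ s, f s - f (-s) = s
  zero : ∀ s, s ≤ -ε → f s = 0
  pos : ∀ s, -ε < s → 0 < f s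
  dpos : ∀ s, -ε < s → 0 < deriv f s
  dzero : ∀ s, s ≤ -ε → deriv f s = 0
  danti : ∀ s, deriv f s + deriv f (-s) = 1

lemma smoothTransition_symm (x : ℝ) :
    Real.smoothTransition x + Real.smoothTransition (1 - x) = 1 := by
  unfold Real.smoothTransition
  have h := (Real.smoothTransition.pos_denom x).ne'
  have e : 1 - (1 - x) = x := by ring
  rw [e, add_comm (expNegInvGlue (1 - x)) (expNegInvGlue x), ← add_div, div_self h]

lemma exists_prof {ε : ℝ} (hε : 0 < ε) : ∃ f, Prof ε f := by
  let h : ℝ → ℝ := fun s => Real.smoothTransition ((s + ε) / (2 * ε))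
  have hc : ContDiff ℝ (⊤ : ℕ∞) h := by
    have : ContDiff ℝ (⊤ : ℕ∞) (fun s : ℝ => (s + ε) / (2 * ε)) := by fun_prop
    exact Real.smoothTransition.contDiff.comp this
  have h0 : ∀ s, s ≤ -ε → h s = 0 := fun s hs =>
    Real.smoothTransition.zero_of_nonpos (div_nonpos_of_nonpos_of_nonneg (by linarith) (by linarith))
  have hpos : ∀ s, -ε < s → 0 < h s := fun s hs =>
    Real.smoothTransition.pos_of_pos (div_pos (by linarith) (by linarith))
  have hanti : ∀ s, h s + h (-s) = 1 := by
    intro s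
    have e : (-s + ε) / (2 * ε) = 1 - (s + ε) / (2 * ε) := by field_simp; ring
    simp only [h]; rw [e]; exact smoothTransition_symm _
  let f : ℝ → ℝ := fun s => ∫ x in (-ε)..s, h x
  have hd : ∀ s, HasDerivAt f (h s) s := fun s =>
    intervalIntegral.integral_hasDerivAt_right (hc.continuous.intervalIntegrable _ _)
      (hc.continuous.stronglyMeasurableAtFilter _ _) hc.continuous.continuousAt
  have hdf : deriv f = h := funext fun s => (hd s).deriv
  have hz : ∀ s, s ≤ -ε → f s = 0 := by
    intro s hs
    simp only [f]
    rw [intervalIntegral.integral_symm, intervalIntegral.integral_congr (g := fun _ => (0:ℝ))]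
    · simp
    · intro x hx
      rw [uIcc_of_le hs] at hx
      exact h0 x hx.2
  refine ⟨f, ?_, ?_, hz, ?_, ?_, ?_, ?_⟩
  · rw [contDiff_infty_iff_deriv]
    exact ⟨fun s => (hd s).differentiableAt, by rw [hdf]; exact hc⟩
  · intro s
    have hk : ∀ s, HasDerivAt (fun s => f s - f (-s) - s) 0 s := by
      intro s
      have h1 : HasDerivAt (fun s => f (-s)) (- h (-s)) s := by
        have := (hd (-s)).comp s (hasDerivAt_neg s)
        rw [mul_neg, mul_one] at this
        exact this
      have h2 := ((hd s).sub h1).sub (hasDerivAt_id s)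
      refine h2.congr_deriv ?_
      have := hanti s
      linarith
    have := is_const_of_deriv_eq_zero (fun s => (hk s).differentiableAt) (fun s => (hk s).deriv) s 0
    simp at this
    linarith
  · intro s hs
    exact intervalIntegral.intervalIntegral_pos_of_pos_on (hc.continuous.intervalIntegrable _ _)
      (fun x hx => hpos x hx.1) hs
  · intro s hs; rw [hdf]; exact hpos s hs
  · intro s hs; rw [hdf]; exact h0 s hs
  · intro s; rw [hdf]; exact hanti s

namespace Prof
variable {ε : ℝ} {f : ℝ → ℝ}

lemma nonneg (hf : Prof ε f) (s : ℝ) : 0 ≤ f s := by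
  rcases le_or_gt s (-ε) with h | h
  · rw [hf.zero s h]
  · exact (hf.pos s h).le

lemma mono (hf : Prof ε f) : Monotone f := by
  apply monotone_of_deriv_nonneg (hf.smooth.differentiable (by simp))
  intro s
  rcases le_or_gt s (-ε) with h | h
  · rw [hf.dzero s h]
  · exact (hf.dpos s h).le

lemma self (hf : Prof ε f) (s : ℝ) (hs : ε ≤ s) : f s = s := by
  have := hf.anti s
  rw [hf.zero (-s) (by linarith)] at this
  linarith

lemma done (hf : Prof ε f) (s : ℝ) (hs : ε ≤ s) : deriv f s = 1 := by
  have := hf.danti s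
  rw [hf.dzero (-s) (by linarith)] at this
  linarith

lemma le (hf : Prof ε f) (s : ℝ) (hs : s ≤ ε) : f s ≤ ε := by
  rw [← hf.self ε le_rfl]; exact hf.mono hs

end Prof

/-- The local chart at a crossing. -/
noncomputable def Phi (A B : ℝ → Plane) (a b : ℝ) : Plane := A a + B b - A 0

lemma lower_bound {u v : Plane} (hd : det u v ≠ 0) :
    ∃ m > 0, ∀ x y : ℝ, m * (|x| + |y|) ≤ ‖x • u + y • v‖ := by
  have hu : 0 < ‖u‖ := by
    rw [norm_pos_iff]; rintro rfl; rw [det_swap, det_zero_right] at hd; simp at hd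
  have hv : 0 < ‖v‖ := by
    rw [norm_pos_iff]; rintro rfl; rw [det_zero_right] at hd; simp at hd
  have hdp : 0 < |det u v| := abs_pos.2 hd
  refine ⟨|det u v| / (‖u‖ + ‖v‖), by positivity, fun x y => ?_⟩
  have h1 := det_le u (x • u + y • v)
  have h2 := det_le v (x • u + y • v)
  rw [det_add_right, det_smul_right, det_smul_right, det_self, mul_zero, zero_add, abs_mul] at h1
  rw [det_add_right, det_smul_right, det_smul_right, det_self, mul_zero, add_zero, abs_mul,
    det_swap u v, abs_neg] at h2
  rw [div_mul_eq_mul_div, div_le_iff₀ (by positivity)]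
  nlinarith

lemma strict_est {A : ℝ → Plane} {s : ℝ} (hA : ContDiff ℝ (⊤ : ℕ∞) A) {η : ℝ} (hη : 0 < η) :
    ∀ᶠ δ in 𝓝[>] (0:ℝ), ∀ a a', |a| ≤ δ → |a'| ≤ δ →
      ‖A (s + a) - A (s + a') - (a - a') • deriv A s‖ ≤ η * |a - a'| := by
  have h1 : HasStrictDerivAt A (deriv A s) s :=
    (hA.contDiffAt).hasStrictDerivAt (by simp)
  have h2 := (hasStrictDerivAt_iff_hasStrictFDerivAt.1 h1).isLittleO.bound hη
  rw [Metric.eventually_nhds_iff] at h2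
  obtain ⟨r, hr, h2⟩ := h2
  filter_upwards [Ioo_mem_nhdsGT hr] with δ hδ a a' ha ha'
  have := h2 (y := (s + a, s + a')) (by
    rw [Prod.dist_eq]
    simp only [Real.dist_eq, add_sub_cancel_left]
    exact max_lt (by linarith [hδ.2]) (by linarith [hδ.2]))
  simpa [Real.norm_eq_abs, add_sub_add_left_eq_sub] using this

lemma num_est {α β κ a b r X : ℝ} (hα : 0 < α) (hβ : 0 < β)
    (hX : X = |a + r * α| + |b + r * β|)
    (hκ : κ * (2 + α / β + β / α + 1 / α + 1 / β) < 1) (hκ0 : 0 ≤ κ)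
    (h : X ≤ κ * (|a| + |b| + |r|)) (hab : (a ≤ 0 ∧ 0 ≤ b)) : a = 0 ∧ b = 0 ∧ r = 0 := by
  have hX0 : 0 ≤ X := by rw [hX]; positivity
  have hX1 : |a + r * α| ≤ X := by rw [hX]; linarith [abs_nonneg (b + r * β)]
  have hX2 : |b + r * β| ≤ X := by rw [hX]; linarith [abs_nonneg (a + r * α)]
  have p1 : 0 < α / β := by positivity
  have p2 : 0 < β / α := by positivity
  have p3 : 0 < 1 / α := by positivity
  have p4 : 0 < 1 / β := by positivity
  have hK : |a| + |b| + |r| ≤ X * (2 + α / β + β / α + 1 / α + 1 / β) := by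
    rcases le_total 0 r with hr | hr
    · have e2 : |b + r * β| = b + r * β := abs_of_nonneg (add_nonneg hab.2 (by positivity))
      rw [e2] at hX2
      have hrβ : 0 ≤ r * β := by positivity
      have h1 : r ≤ X * (1 / β) := by rw [mul_one_div, le_div_iff₀ hβ]; linarith [hab.2]
      have h2 : |b| ≤ X := by rw [abs_of_nonneg hab.2]; linarith
      have h3 : |a| ≤ X + X * (α / β) := by
        have h4 : r * α ≤ X * (α / β) := by
          calc r * α ≤ X * (1 / β) * α := mul_le_mul_of_nonneg_right h1 hα.le
            _ = _ := by ring
        have := abs_le.1 hX1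
        rw [abs_of_nonpos hab.1]; linarith
      rw [abs_of_nonneg hr]
      nlinarith [mul_nonneg hX0 p2.le, mul_nonneg hX0 p3.le]
    · have hrα : 0 ≤ (-r) * α := mul_nonneg (by linarith) hα.le
      have e2 : |a + r * α| = -a - r * α := by
        rw [abs_of_nonpos (by linarith [hab.1])]; ring
      rw [e2] at hX1
      have h1 : -r ≤ X * (1 / α) := by rw [mul_one_div, le_div_iff₀ hα]; linarith [hab.1]
      have h2 : |a| ≤ X := by rw [abs_of_nonpos hab.1]; linarith
      have h3 : |b| ≤ X + X * (β / α) := by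
        have h4 : -r * β ≤ X * (β / α) := by
          calc -r * β ≤ X * (1 / α) * β := mul_le_mul_of_nonneg_right h1 hβ.le
            _ = _ := by ring
        have := abs_le.1 hX2
        rw [abs_of_nonneg hab.2]; linarith
      rw [abs_of_nonpos hr]
      nlinarith [mul_nonneg hX0 p1.le, mul_nonneg hX0 p4.le]
  have hX00 : X = 0 := by
    by_contra hne
    have hXp : 0 < X := lt_of_le_of_ne hX0 (Ne.symm hne)
    have : κ * (|a| + |b| + |r|) ≤ κ * (X * (2 + α / β + β / α + 1 / α + 1 / β)) :=
      mul_le_mul_of_nonneg_left hK hκ0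
    nlinarith
  rw [hX00, zero_mul] at hK
  have q1 := abs_nonneg a
  have q2 := abs_nonneg b
  have q3 := abs_nonneg r
  exact ⟨abs_eq_zero.1 (by linarith), abs_eq_zero.1 (by linarith), abs_eq_zero.1 (by linarith)⟩

end TD

end Part5

section Part6
open Set Metric Real
open scoped RealInnerProductSpace
namespace TD
open Filter Topology ComplexConjugate
variable {n nl nl' : ℕ}

lemma solve_third {x y z : Plane} {a b c : ℝ} (ha : 0 < a) (hb : 0 < b) (hc : 0 < c)
    (h : a • x + b • y + c • z = 0) :
    ∃ α β : ℝ, 0 < α ∧ 0 < β ∧ z = - (α • x + β • y) := by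
  refine ⟨a / c, b / c, by positivity, by positivity, ?_⟩
  have h1 : c • z = - (a • x + b • y) := by
    rw [eq_neg_iff_add_eq_zero, add_comm]; exact h
  have h2 : z = c⁻¹ • (c • z) := by rw [smul_smul, inv_mul_cancel₀ hc.ne', one_smul]
  rw [h2, h1, smul_neg, smul_add, smul_smul, smul_smul, div_eq_inv_mul, div_eq_inv_mul]

lemma exists_third (D : TripleDiagram n nl) {p : Plane} (hp : D.IsMultiplePoint p)
    {qA qB : Psg n nl} (hA : qA ∈ D.passages p) (hB : qB ∈ D.passages p) (hne : qA ≠ qB) :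
    ∃ qC, D.passages p = {qA, qB, qC} ∧ ∃ α β : ℝ, 0 < α ∧ 0 < β ∧
      D.tangent qC = - (α • D.tangent qA + β • D.tangent qB) := by
  obtain ⟨q₁, q₂, q₃, hP, a, b, c, ha, hb, hc, h0⟩ := D.alternating p hp
  rw [hP] at hA hB ⊢
  rcases hA with rfl | rfl | rfl <;> rcases hB with rfl | rfl | rfl
  · exact absurd rfl hne
  · exact ⟨q₃, rfl, solve_third ha hb hc h0⟩
  · refine ⟨q₂, ?_, solve_third ha hc hb (by rw [← h0]; abel)⟩
    ext x; simp only [mem_insert_iff, mem_singleton_iff]; tauto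
  · refine ⟨q₃, ?_, solve_third hb ha hc (by rw [← h0]; abel)⟩
    ext x; simp only [mem_insert_iff, mem_singleton_iff]; tauto
  · exact absurd rfl hne
  · refine ⟨q₁, ?_, solve_third hb hc ha (by rw [← h0]; abel)⟩
    ext x; simp only [mem_insert_iff, mem_singleton_iff]; tauto
  · refine ⟨q₂, ?_, solve_third hc ha hb (by rw [← h0]; abel)⟩
    ext x; simp only [mem_insert_iff, mem_singleton_iff]; tauto
  · refine ⟨q₁, ?_, solve_third hc hb ha (by rw [← h0]; abel)⟩
    ext x; simp only [mem_insert_iff, mem_singleton_iff]; tauto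
  · exact absurd rfl hne

/-- local chart at a crossing -/
noncomputable def Ph (D : TripleDiagram n nl) (i j : Fin n) (s0 t0 a b : ℝ) : Plane :=
  D.arc i (s0 + a) + D.arc j (t0 + b) - D.arc i s0

/-- `ε` is small enough for the surgery. -/
structure Good (D : TripleDiagram n 0) (i j : Fin n) (s0 t0 ε : ℝ) : Prop where
  eq : D.arc i s0 = D.arc j t0
  ne : (i, s0) ≠ (j, t0)
  hs : s0 ∈ Ioo (0:ℝ) 1
  ht : t0 ∈ Ioo (0:ℝ) 1
  hε : 0 < ε
  inn : ∀ a b, |a| ≤ ε → |b| ≤ ε → ‖Ph D i j s0 t0 a b‖ < 1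
  det : ∀ a b, |a| ≤ ε → |b| ≤ ε →
    det (deriv (D.arc i) (s0 + a)) (deriv (D.arc j) (t0 + b)) ≠ 0
  inj : ∀ a b a' b', |a| ≤ ε → |b| ≤ ε → |a'| ≤ ε → |b'| ≤ ε →
    Ph D i j s0 t0 a b = Ph D i j s0 t0 a' b' → a = a' ∧ b = b'
  key : ∀ a b, |a| ≤ ε → |b| ≤ ε → ((a ≤ 0 ∧ 0 ≤ b) ∨ (0 ≤ a ∧ b ≤ 0)) → ¬ (a = 0 ∧ b = 0) →
    ∀ k, ∀ x ∈ Ioo (0:ℝ) 1, D.arc k x = Ph D i j s0 t0 a b →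
      (k = i ∧ x = s0 + a ∧ b = 0) ∨ (k = j ∧ x = t0 + b ∧ a = 0)

lemma small_of_nhds {P : ℝ → ℝ → Prop} (h : ∀ᶠ x : ℝ × ℝ in 𝓝 (0, 0), P x.1 x.2) :
    ∀ᶠ ε in 𝓝[>] (0:ℝ), ∀ a b, |a| ≤ ε → |b| ≤ ε → P a b := by
  rw [Metric.eventually_nhds_iff] at h
  obtain ⟨r, hr, h⟩ := h
  filter_upwards [Ioo_mem_nhdsGT hr] with ε hε a b ha hb
  refine h (y := (a, b)) ?_
  rw [Prod.dist_eq]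
  simp only [Real.dist_eq, sub_zero]
  exact max_lt (by linarith [hε.2]) (by linarith [hε.2])

lemma good (D : TripleDiagram n 0) {i j : Fin n} {s0 t0 : ℝ} (hs : s0 ∈ Ioo (0:ℝ) 1)
    (ht : t0 ∈ Ioo (0:ℝ) 1) (heq : D.arc i s0 = D.arc j t0) (hne : (i, s0) ≠ (j, t0)) :
    ∀ᶠ ε in 𝓝[>] (0:ℝ), Good D i j s0 t0 ε := by
  set p := D.arc i s0 with hpdef
  have hA : (Sum.inl (i, s0) : Psg n 0) ∈ D.passages p := ⟨hs, rfl⟩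
  have hB : (Sum.inl (j, t0) : Psg n 0) ∈ D.passages p := ⟨ht, heq.symm⟩
  have hABne : (Sum.inl (i, s0) : Psg n 0) ≠ Sum.inl (j, t0) := fun h => hne (Sum.inl.inj h)
  have hp : D.IsMultiplePoint p := multiple_of hA hB hABne
  have hd := (indep_iff _ _).1 (D.branches_transverse p hp _ hA _ hB hABne)
  obtain ⟨qC, hP, α, β, hα, hβ, htan⟩ := exists_third D hp hA hB hABne
  rcases qC with ⟨k, r0⟩ | ⟨k, _⟩
  swap
  · exact k.elim0
  have hC : (Sum.inl (k, r0) : Psg n 0) ∈ D.passages p := by rw [hP]; simp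
  obtain ⟨hr, hCp⟩ := hC
  simp only [PreDiagram.tangent, Sum.elim_inl] at hd htan hr hCp
  have hpn : ‖p‖ < 1 := D.arc_interior i s0 hs
  have cA := (D.arc_smooth i)
  have cB := (D.arc_smooth j)
  have cC := (D.arc_smooth k)
  have ccA := cA.continuous
  have ccB := cB.continuous
  set u := deriv (D.arc i) s0 with hu
  set v := deriv (D.arc j) t0 with hv
  obtain ⟨m, hm, hlow⟩ := lower_bound hd
  set K := 2 + α / β + β / α + 1 / α + 1 / β with hK
  have hK2 : 2 ≤ K := by
    have p1 : 0 < α / β := by positivity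
    have p2 : 0 < β / α := by positivity
    have p3 : 0 < 1 / α := by positivity
    have p4 : 0 < 1 / β := by positivity
    linarith
  have hη : 0 < m / (2 * K) := by positivity
  have hηm : m / (2 * K) < m := by
    rw [div_lt_iff₀ (by positivity)]; nlinarith
  have sA := strict_est (s := s0) cA hη
  have sB := strict_est (s := t0) cB hη
  have sC := strict_est (s := r0) cC hη
  have hbase : Ph D i j s0 t0 0 0 = p := by
    simp only [Ph, add_zero]; rw [← heq]; simp [hpdef]
  -- injectivity
  have hinj : ∀ δ, (∀ a a', |a| ≤ δ → |a'| ≤ δ →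
      ‖D.arc i (s0 + a) - D.arc i (s0 + a') - (a - a') • u‖ ≤ m / (2 * K) * |a - a'|) →
      (∀ a a', |a| ≤ δ → |a'| ≤ δ →
      ‖D.arc j (t0 + a) - D.arc j (t0 + a') - (a - a') • v‖ ≤ m / (2 * K) * |a - a'|) →
      ∀ a b a' b', |a| ≤ δ → |b| ≤ δ → |a'| ≤ δ → |b'| ≤ δ →
      Ph D i j s0 t0 a b = Ph D i j s0 t0 a' b' → a = a' ∧ b = b' := by
    intro δ h1 h2 a b a' b' ha hb ha' hb' h
    have e1 := h1 a a' ha ha'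
    have e2 := h2 b b' hb hb'
    have e3 := hlow (a - a') (b - b')
    have e4 : (a - a') • u + (b - b') • v
        = - ((D.arc i (s0 + a) - D.arc i (s0 + a') - (a - a') • u)
          + (D.arc j (t0 + b) - D.arc j (t0 + b') - (b - b') • v)) := by
      have h' : D.arc i (s0 + a) + D.arc j (t0 + b) = D.arc i (s0 + a') + D.arc j (t0 + b') := by
        have := congrArg (fun x => x + D.arc i s0) h
        simpa [Ph] using this
      have h'' : D.arc i (s0 + a) - D.arc i (s0 + a') = - (D.arc j (t0 + b) - D.arc j (t0 + b')) := by
        rw [neg_sub, sub_eq_sub_iff_add_eq_add, h']; abel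
      rw [h'']; abel
    have e5 : ‖(a - a') • u + (b - b') • v‖ ≤ m / (2 * K) * (|a - a'| + |b - b'|) := by
      rw [e4, norm_neg, mul_add]
      exact (norm_add_le _ _).trans (add_le_add e1 e2)
    have h0 : |a - a'| + |b - b'| ≤ 0 := by
      by_contra hcon; push Not at hcon; nlinarith
    have q1 := abs_nonneg (a - a')
    have q2 := abs_nonneg (b - b')
    exact ⟨sub_eq_zero.1 (abs_eq_zero.1 (by linarith)), sub_eq_zero.1 (abs_eq_zero.1 (by linarith))⟩
  -- third branch
  have hthird : ∀ δ, (∀ a a', |a| ≤ δ → |a'| ≤ δ →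
      ‖D.arc i (s0 + a) - D.arc i (s0 + a') - (a - a') • u‖ ≤ m / (2 * K) * |a - a'|) →
      (∀ a a', |a| ≤ δ → |a'| ≤ δ →
      ‖D.arc j (t0 + a) - D.arc j (t0 + a') - (a - a') • v‖ ≤ m / (2 * K) * |a - a'|) →
      (∀ a a', |a| ≤ δ → |a'| ≤ δ →
      ‖D.arc k (r0 + a) - D.arc k (r0 + a') - (a - a') • deriv (D.arc k) r0‖
        ≤ m / (2 * K) * |a - a'|) →
      ∀ a b r, |a| ≤ δ → |b| ≤ δ → |r| ≤ δ → ((a ≤ 0 ∧ 0 ≤ b) ∨ (0 ≤ a ∧ b ≤ 0)) →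
      D.arc k (r0 + r) = Ph D i j s0 t0 a b → a = 0 ∧ b = 0 := by
    intro δ h1 h2 h3 a b r ha hb hr hab h
    have hδ0 : |(0:ℝ)| ≤ δ := by rw [abs_zero]; exact (abs_nonneg a).trans ha
    have e1 := h1 a 0 ha hδ0
    have e2 := h2 b 0 hb hδ0
    have e3 := h3 r 0 hr hδ0
    rw [htan] at e3
    simp only [sub_zero, add_zero] at e1 e2 e3
    have e4 : (a + r * α) • u + (b + r * β) • v
        = - ((D.arc i (s0 + a) - D.arc i s0 - a • u)
          + (D.arc j (t0 + b) - D.arc j t0 - b • v)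
          - (D.arc k (r0 + r) - D.arc k r0 - r • -(α • u + β • v))) := by
      rw [h, hCp, ← heq]
      simp only [Ph, ← hpdef]
      module
    have e5 : ‖(a + r * α) • u + (b + r * β) • v‖ ≤ m / (2 * K) * (|a| + |b| + |r|) := by
      rw [e4, norm_neg, mul_add, mul_add]
      exact (norm_sub_le _ _).trans (add_le_add ((norm_add_le _ _).trans (add_le_add e1 e2)) e3)
    have e6 := (hlow (a + r * α) (b + r * β)).trans e5
    have e7 : |a + r * α| + |b + r * β| ≤ 1 / (2 * K) * (|a| + |b| + |r|) := by
      have : m * (|a + r * α| + |b + r * β|) ≤ m * (1 / (2 * K) * (|a| + |b| + |r|)) := by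
        refine e6.trans (le_of_eq ?_); ring
      exact le_of_mul_le_mul_left this hm
    have hκ : 1 / (2 * K) * K < 1 := by
      rw [div_mul_eq_mul_div, div_lt_one (by positivity)]; linarith
    rcases hab with hab | hab
    · have := num_est hα hβ rfl hκ (by positivity) e7 hab
      exact ⟨this.1, this.2.1⟩
    · have hK' : K = 2 + β / α + α / β + 1 / β + 1 / α := by rw [hK]; ring
      have e8 : |b + r * β| + |a + r * α| ≤ 1 / (2 * K) * (|b| + |a| + |r|) := by linarith
      have hκ' : 1 / (2 * K) * (2 + β / α + α / β + 1 / β + 1 / α) < 1 := by rw [← hK']; exact hκ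
      have := num_est hβ hα rfl hκ' (by positivity) e8 ⟨hab.2, hab.1⟩
      exact ⟨this.2.1, this.1⟩
  obtain ⟨δ, ⟨⟨dA, dB⟩, dC⟩, hδ⟩ := (((sA.and sB).and sC).and self_mem_nhdsWithin).exists
  have hδ : 0 < δ := hδ
  -- far parameters
  let S : Fin n → Set ℝ := fun l => {x | x ∈ Icc (0:ℝ) 1 ∧ ¬ (l = i ∧ |x - s0| < δ) ∧
    ¬ (l = j ∧ |x - t0| < δ) ∧ ¬ (l = k ∧ |x - r0| < δ)}
  have hwin : ∀ (l l' : Fin n) (c : ℝ), IsClosed {x : ℝ | ¬ (l = l' ∧ |x - c| < δ)} := by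
    intro l l' c
    by_cases h : l = l'
    · simp only [h, true_and, not_lt]
      exact isClosed_le continuous_const (by fun_prop)
    · simp [h]
  have hScl : ∀ l, IsCompact (S l) := by
    intro l
    have : S l = Icc (0:ℝ) 1 ∩ ({x : ℝ | ¬ (l = i ∧ |x - s0| < δ)} ∩
      ({x : ℝ | ¬ (l = j ∧ |x - t0| < δ)} ∩ {x : ℝ | ¬ (l = k ∧ |x - r0| < δ)})) := rfl
    rw [this]
    exact isCompact_Icc.inter_right ((hwin _ _ _).inter ((hwin _ _ _).inter (hwin _ _ _)))
  have hUc : IsClosed (⋃ l, D.arc l '' S l) :=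
    isClosed_iUnion_of_finite (fun l => ((hScl l).image (D.arc_smooth l).continuous).isClosed)
  have hpU : p ∉ ⋃ l, D.arc l '' S l := by
    intro h
    obtain ⟨l, x, ⟨hx, w1, w2, w3⟩, hxp⟩ := mem_iUnion.1 h
    have hx0 : x ≠ 0 := by
      rintro rfl
      have := D.arc_start_bdry l
      rw [hxp] at this; linarith
    have hx1 : x ≠ 1 := by
      rintro rfl
      have := D.arc_end_bdry l
      rw [hxp] at this; linarith
    have hmem : (Sum.inl (l, x) : Psg n 0) ∈ D.passages p :=
      ⟨⟨lt_of_le_of_ne hx.1 hx0.symm, lt_of_le_of_ne hx.2 hx1⟩, hxp⟩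
    rw [hP] at hmem
    simp only [mem_insert_iff, mem_singleton_iff, Sum.inl.injEq, Prod.mk.injEq] at hmem
    rcases hmem with ⟨h1, h2⟩ | ⟨h1, h2⟩ | ⟨h1, h2⟩
    · exact w1 ⟨h1, by rw [h2]; simpa using hδ⟩
    · exact w2 ⟨h1, by rw [h2]; simpa using hδ⟩
    · exact w3 ⟨h1, by rw [h2]; simpa using hδ⟩
  have hPhc : Continuous (fun x : ℝ × ℝ => Ph D i j s0 t0 x.1 x.2) := by
    unfold Ph; fun_prop
  have hfar : ∀ᶠ x : ℝ × ℝ in 𝓝 (0, 0), Ph D i j s0 t0 x.1 x.2 ∈ (⋃ l, D.arc l '' S l)ᶜ := by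
    apply hPhc.continuousAt.eventually_mem
    rw [hbase]
    exact hUc.isOpen_compl.mem_nhds hpU
  have hin : ∀ᶠ x : ℝ × ℝ in 𝓝 (0, 0), ‖Ph D i j s0 t0 x.1 x.2‖ < 1 := by
    apply (hPhc.norm.tendsto (0, 0)).eventually_lt_const
    rw [hbase]; exact hpn
  have hdc : Continuous (fun x : ℝ × ℝ =>
      TD.det (deriv (D.arc i) (s0 + x.1)) (deriv (D.arc j) (t0 + x.2))) := by
    have c1 := cA.continuous_deriv (by simp)
    have c2 := cB.continuous_deriv (by simp)
    have c3 := cx.continuous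
    unfold TD.det
    fun_prop
  have hdd : ∀ᶠ x : ℝ × ℝ in 𝓝 (0, 0),
      TD.det (deriv (D.arc i) (s0 + x.1)) (deriv (D.arc j) (t0 + x.2)) ≠ 0 := by
    apply (hdc.tendsto (0, 0)).eventually_ne
    simpa using hd
  filter_upwards [small_of_nhds (P := fun a b => Ph D i j s0 t0 a b ∈ (⋃ l, D.arc l '' S l)ᶜ) hfar,
    small_of_nhds (P := fun a b => ‖Ph D i j s0 t0 a b‖ < 1) hin,
    small_of_nhds (P := fun a b =>
      TD.det (deriv (D.arc i) (s0 + a)) (deriv (D.arc j) (t0 + b)) ≠ 0) hdd, Ioo_mem_nhdsGT hδ]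
    with ε g1 g2 g3 g4
  refine ⟨heq, hne, hs, ht, g4.1, g2, g3, ?_, ?_⟩
  · intro a b a' b' ha hb ha' hb'
    exact hinj δ dA dB a b a' b' (ha.trans g4.2.le) (hb.trans g4.2.le) (ha'.trans g4.2.le)
      (hb'.trans g4.2.le)
  · intro a b ha hb hab hab0 l x hx hxe
    have hz : |(0:ℝ)| ≤ δ := by simpa using hδ.le
    by_cases w1 : l = i ∧ |x - s0| < δ
    · obtain ⟨rfl, w⟩ := w1
      have := hinj δ dA dB a b (x - s0) 0 (ha.trans g4.2.le) (hb.trans g4.2.le) w.le hz (by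
        rw [← hxe]; simp only [Ph, add_zero]; rw [← heq, add_sub_cancel]; simp [hpdef])
      left; exact ⟨rfl, by linarith [this.1], this.2⟩
    by_cases w2 : l = j ∧ |x - t0| < δ
    · obtain ⟨rfl, w⟩ := w2
      have := hinj δ dA dB a b 0 (x - t0) (ha.trans g4.2.le) (hb.trans g4.2.le) hz w.le (by
        rw [← hxe]; simp only [Ph, add_zero]; rw [add_sub_cancel]; simp)
      right; exact ⟨rfl, by linarith [this.2], this.1⟩
    by_cases w3 : l = k ∧ |x - r0| < δ
    · obtain ⟨rfl, w⟩ := w3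
      exact absurd (hthird δ dA dB dC a b (x - r0) (ha.trans g4.2.le) (hb.trans g4.2.le) w.le hab
        (by rw [add_sub_cancel]; exact hxe)) hab0
    have hm : Ph D i j s0 t0 a b ∈ ⋃ l, D.arc l '' S l :=
      mem_iUnion.2 ⟨l, x, ⟨⟨hx.1.le, hx.2.le⟩, w1, w2, w3⟩, hxe⟩
    exact absurd hm (g1 a b ha hb)

end TD

end Part6

section Part7
open Set Metric Real
open scoped RealInnerProductSpace
namespace TD
open Filter Topology ComplexConjugate
variable {n nl nl' : ℕ}

/-- All data for the surgery at a crossing. -/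
structure Surg (D : TripleDiagram n 0) (i j : Fin n) (s0 t0 ε : ℝ) (f : ℝ → ℝ) : Prop where
  g : Good D i j s0 t0 ε
  f : Prof ε f
  s1 : ε < s0
  s2 : s0 + ε < 1
  t1 : ε < t0
  t2 : t0 + ε < 1

lemma Ph_swap {D : TripleDiagram n nl} {i j : Fin n} {s0 t0 : ℝ} (h : D.arc i s0 = D.arc j t0)
    (a b : ℝ) : Ph D j i t0 s0 b a = Ph D i j s0 t0 a b := by
  simp only [Ph]; rw [h]; abel

lemma Good.symm {D : TripleDiagram n 0} {i j : Fin n} {s0 t0 ε : ℝ} (g : Good D i j s0 t0 ε) :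
    Good D j i t0 s0 ε := by
  refine ⟨g.eq.symm, g.ne.symm, g.ht, g.hs, g.hε, ?_, ?_, ?_, ?_⟩
  · intro a b ha hb; rw [Ph_swap g.eq]; exact g.inn b a hb ha
  · intro a b ha hb; rw [det_swap]; exact neg_ne_zero.2 (g.det b a hb ha)
  · intro a b a' b' ha hb ha' hb' h
    rw [Ph_swap g.eq, Ph_swap g.eq] at h
    exact (g.inj b a b' a' hb ha hb' ha' h).symm
  · intro a b ha hb hab h0 k x hx h
    rw [Ph_swap g.eq] at h
    exact (g.key b a hb ha (by tauto) (by tauto) k x hx h).symm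

lemma Surg.symm {D : TripleDiagram n 0} {i j : Fin n} {s0 t0 ε : ℝ} {f : ℝ → ℝ}
    (S : Surg D i j s0 t0 ε f) : Surg D j i t0 s0 ε f :=
  ⟨S.g.symm, S.f, S.t1, S.t2, S.s1, S.s2⟩

/-- The smoothed curve. -/
noncomputable def cc (D : TripleDiagram n 0) (i j : Fin n) (s0 t0 : ℝ) (f : ℝ → ℝ) (s : ℝ) : Plane :=
  Ph D i j s0 t0 (- f (-s)) (f s)

lemma arc_hasDeriv (D : TripleDiagram n nl) (i : Fin n) (s : ℝ) :
    HasDerivAt (D.arc i) (deriv (D.arc i) s) s :=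
  ((D.arc_smooth i).differentiable (by simp)).differentiableAt.hasDerivAt

section
variable {D : TripleDiagram n 0} {i j : Fin n} {s0 t0 ε : ℝ} {f : ℝ → ℝ}

lemma cc_left (S : Surg D i j s0 t0 ε f) {s : ℝ} (hs : s ≤ -ε) :
    cc D i j s0 t0 f s = D.arc i (s0 + s) := by
  simp only [cc, Ph]
  rw [S.f.zero s hs, S.f.self (-s) (by linarith), add_zero, neg_neg, ← S.g.eq]; abel

lemma cc_right (S : Surg D i j s0 t0 ε f) {s : ℝ} (hs : ε ≤ s) :
    cc D i j s0 t0 f s = D.arc j (t0 + s) := by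
  simp only [cc, Ph]
  rw [S.f.self s hs, S.f.zero (-s) (by linarith), neg_zero, add_zero]; abel

lemma cc_smooth (S : Surg D i j s0 t0 ε f) : ContDiff ℝ (⊤ : ℕ∞) (cc D i j s0 t0 f) := by
  have h1 := D.arc_smooth i
  have h2 := D.arc_smooth j
  have h3 := S.f.smooth
  unfold cc Ph
  refine ((h1.comp ?_).add (h2.comp ?_)).sub contDiff_const
  · exact contDiff_const.add (h3.comp contDiff_neg).neg
  · exact contDiff_const.add h3

lemma cc_hasDeriv (S : Surg D i j s0 t0 ε f) (s : ℝ) :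
    HasDerivAt (cc D i j s0 t0 f) (deriv f (-s) • deriv (D.arc i) (s0 + -f (-s))
      + deriv f s • deriv (D.arc j) (t0 + f s)) s := by
  have hf : ∀ s, HasDerivAt f (deriv f s) s := fun s =>
    (S.f.smooth.differentiable (by simp)).differentiableAt.hasDerivAt
  have h1 : HasDerivAt (fun s => s0 + -f (-s)) (deriv f (-s)) s := by
    have := (((hf (-s)).comp s (hasDerivAt_neg s)).neg).const_add s0
    refine this.congr_deriv ?_
    ring
  have h2 : HasDerivAt (fun s => t0 + f s) (deriv f s) s := (hf s).const_add t0
  have h3 := (arc_hasDeriv D i (s0 + -f (-s))).scomp s h1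
  have h4 := (arc_hasDeriv D j (t0 + f s)).scomp s h2
  exact (h3.add h4).sub_const _

lemma cc_deriv_left (S : Surg D i j s0 t0 ε f) {s : ℝ} (hs : s ≤ -ε) :
    deriv (cc D i j s0 t0 f) s = deriv (D.arc i) (s0 + s) := by
  rw [(cc_hasDeriv S s).deriv, S.f.dzero s hs, S.f.done (-s) (by linarith),
    S.f.self (-s) (by linarith)]
  simp

lemma cc_deriv_right (S : Surg D i j s0 t0 ε f) {s : ℝ} (hs : ε ≤ s) :
    deriv (cc D i j s0 t0 f) s = deriv (D.arc j) (t0 + s) := by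
  rw [(cc_hasDeriv S s).deriv, S.f.done s hs, S.f.dzero (-s) (by linarith),
    S.f.self s hs]
  simp

/-- Inside the window the two coordinates have opposite strict signs. -/
lemma win (S : Surg D i j s0 t0 ε f) {s : ℝ} (hs : |s| < ε) :
    -f (-s) < 0 ∧ 0 < f s ∧ |-f (-s)| ≤ ε ∧ |f s| ≤ ε := by
  obtain ⟨h1, h2⟩ := abs_lt.1 hs
  have a := S.f.pos s h1
  have b := S.f.pos (-s) (by linarith)
  refine ⟨by linarith, a, ?_, ?_⟩
  · rw [abs_neg, abs_of_pos b]; exact S.f.le _ (by linarith)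
  · rw [abs_of_pos a]; exact S.f.le _ (by linarith)

lemma cc_deriv_win (S : Surg D i j s0 t0 ε f) {s : ℝ} (hs : |s| < ε) :
    deriv (cc D i j s0 t0 f) s ≠ 0 := by
  obtain ⟨w1, w2, w3, w4⟩ := win S hs
  rw [(cc_hasDeriv S s).deriv]
  intro h
  have hd := S.g.det _ _ w3 w4
  have := congrArg (det (deriv (D.arc i) (s0 + -f (-s)))) h
  rw [det_add_right, det_smul_right, det_smul_right, det_self, det_zero_right, mul_zero,
    zero_add] at this
  exact (mul_ne_zero (S.f.dpos s (abs_lt.1 hs).1).ne' hd) this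

lemma cc_in_win (S : Surg D i j s0 t0 ε f) {s : ℝ} (hs : |s| < ε) :
    ‖cc D i j s0 t0 f s‖ < 1 := by
  obtain ⟨w1, w2, w3, w4⟩ := win S hs
  exact S.g.inn _ _ w3 w4

lemma cc_new (S : Surg D i j s0 t0 ε f) {s : ℝ} (hs : |s| < ε) {k : Fin n} {x : ℝ}
    (hx : x ∈ Ioo (0:ℝ) 1) : D.arc k x ≠ cc D i j s0 t0 f s := by
  obtain ⟨w1, w2, w3, w4⟩ := win S hs
  intro h
  rcases S.g.key _ _ w3 w4 (Or.inl ⟨w1.le, w2.le⟩) (fun h => w2.ne' h.2) k x hx h with h | h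
  · exact w2.ne' h.2.2
  · exact w1.ne h.2.2

lemma cc_inj (S : Surg D i j s0 t0 ε f) {s s' : ℝ} (hs : |s| < ε) (hs' : |s'| < ε)
    (h : cc D i j s0 t0 f s = cc D i j s0 t0 f s') : s = s' := by
  obtain ⟨w1, w2, w3, w4⟩ := win S hs
  obtain ⟨w1', w2', w3', w4'⟩ := win S hs'
  obtain ⟨h1, h2⟩ := S.g.inj _ _ _ _ w3 w4 w3' w4' h
  rw [← S.f.anti s, ← S.f.anti s']; linarith

lemma cc_cc (S : Surg D i j s0 t0 ε f) {s s' : ℝ} (hs : |s| < ε) (hs' : |s'| < ε) :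
    cc D i j s0 t0 f s ≠ cc D j i t0 s0 f s' := by
  obtain ⟨w1, w2, w3, w4⟩ := win S hs
  obtain ⟨w1', w2', w3', w4'⟩ := win S.symm hs'
  intro h
  simp only [cc] at h
  rw [Ph_swap S.g.eq] at h
  obtain ⟨h1, h2⟩ := S.g.inj _ _ _ _ w3 w4 w4' w3' h
  linarith

lemma cc_deriv_ne (S : Surg D i j s0 t0 ε f) {s : ℝ} (h1 : -s0 ≤ s) (h2 : s ≤ 1 - t0) :
    deriv (cc D i j s0 t0 f) s ≠ 0 := by
  have hε := S.g.hε
  rcases le_or_gt s (-ε) with h | h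
  · rw [cc_deriv_left S h]
    exact D.arc_immersed i _ ⟨by linarith, by linarith [S.g.hs.2]⟩
  rcases le_or_gt ε s with h' | h'
  · rw [cc_deriv_right S h']
    exact D.arc_immersed j _ ⟨by linarith [S.g.ht.1], by linarith⟩
  exact cc_deriv_win S (abs_lt.2 ⟨h, h'⟩)

lemma cc_in (S : Surg D i j s0 t0 ε f) {s : ℝ} (h1 : -s0 < s) (h2 : s < 1 - t0) :
    ‖cc D i j s0 t0 f s‖ < 1 := by
  have hε := S.g.hε
  rcases le_or_gt s (-ε) with h | h
  · rw [cc_left S h]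
    exact D.arc_interior i _ ⟨by linarith, by linarith [S.g.hs.2]⟩
  rcases le_or_gt ε s with h' | h'
  · rw [cc_right S h']
    exact D.arc_interior j _ ⟨by linarith [S.g.ht.1], by linarith⟩
  exact cc_in_win S (abs_lt.2 ⟨h, h'⟩)

/-- The new arc. -/
noncomputable def arcN (D : TripleDiagram n 0) (i j : Fin n) (s0 t0 : ℝ) (f : ℝ → ℝ) (τ : ℝ) : Plane :=
  cc D i j s0 t0 f (-s0 + τ * (1 - t0 + s0))

lemma arcN_smooth (S : Surg D i j s0 t0 ε f) : ContDiff ℝ (⊤ : ℕ∞) (arcN D i j s0 t0 f) := by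
  unfold arcN
  exact (cc_smooth S).comp (by fun_prop)

lemma arcN_deriv (S : Surg D i j s0 t0 ε f) (τ : ℝ) :
    deriv (arcN D i j s0 t0 f) τ
      = (1 - t0 + s0) • deriv (cc D i j s0 t0 f) (-s0 + τ * (1 - t0 + s0)) := by
  have h1 : HasDerivAt (fun τ : ℝ => -s0 + τ * (1 - t0 + s0)) (1 - t0 + s0) τ := by
    simpa using ((hasDerivAt_id τ).mul_const (1 - t0 + s0)).const_add (-s0)
  have h2 : HasDerivAt (cc D i j s0 t0 f) _ (-s0 + τ * (1 - t0 + s0)) :=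
    ((cc_smooth S).differentiable (by simp)).differentiableAt.hasDerivAt
  exact (h2.scomp τ h1).deriv

lemma arcN_L (S : Surg D i j s0 t0 ε f) : 0 < 1 - t0 + s0 := by
  linarith [S.g.hs.1, S.g.ht.2]

lemma arcN_immersed (S : Surg D i j s0 t0 ε f) {τ : ℝ} (hτ : τ ∈ Icc (0:ℝ) 1) :
    deriv (arcN D i j s0 t0 f) τ ≠ 0 := by
  have hL := arcN_L S
  rw [arcN_deriv S]
  refine smul_ne_zero hL.ne' (cc_deriv_ne S ?_ ?_)
  · nlinarith [hτ.1]
  · nlinarith [hτ.2]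

lemma arcN_in (S : Surg D i j s0 t0 ε f) {τ : ℝ} (hτ : τ ∈ Ioo (0:ℝ) 1) :
    ‖arcN D i j s0 t0 f τ‖ < 1 := by
  have hL := arcN_L S
  refine cc_in S ?_ ?_
  · nlinarith [hτ.1]
  · nlinarith [hτ.2]

lemma arcN_zero (S : Surg D i j s0 t0 ε f) : arcN D i j s0 t0 f 0 = D.arc i 0 := by
  unfold arcN
  rw [zero_mul, add_zero, cc_left S (by linarith [S.s1])]; simp

lemma arcN_one (S : Surg D i j s0 t0 ε f) : arcN D i j s0 t0 f 1 = D.arc j 1 := by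
  unfold arcN
  rw [cc_right S (by linarith [S.t2])]; congr 1; ring

lemma arcN_deriv_zero (S : Surg D i j s0 t0 ε f) :
    deriv (arcN D i j s0 t0 f) 0 = (1 - t0 + s0) • deriv (D.arc i) 0 := by
  rw [arcN_deriv S, zero_mul, add_zero, cc_deriv_left S (by linarith [S.s1])]; simp

lemma arcN_deriv_one (S : Surg D i j s0 t0 ε f) :
    deriv (arcN D i j s0 t0 f) 1 = (1 - t0 + s0) • deriv (D.arc j) 1 := by
  rw [arcN_deriv S, cc_deriv_right S (by linarith [S.t2])]; congr 2; ring

lemma arcN_le (S : Surg D i j s0 t0 ε f) {τ : ℝ} (hτ : τ ∈ Icc (0:ℝ) 1) :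
    ‖arcN D i j s0 t0 f τ‖ ≤ 1 := by
  rcases eq_or_lt_of_le hτ.1 with h | h
  · rw [← h, arcN_zero S, D.arc_start_bdry]
  rcases eq_or_lt_of_le hτ.2 with h' | h'
  · rw [h', arcN_one S, D.arc_end_bdry]
  exact (arcN_in S ⟨h, h'⟩).le

lemma arcN_trans_zero (S : Surg D i j s0 t0 ε f) :
    ⟪deriv (arcN D i j s0 t0 f) 0, arcN D i j s0 t0 f 0⟫ ≠ 0 := by
  rw [arcN_deriv_zero S, arcN_zero S, real_inner_smul_left]
  exact mul_ne_zero (arcN_L S).ne' (D.arc_transverse_start i)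

lemma arcN_trans_one (S : Surg D i j s0 t0 ε f) :
    ⟪deriv (arcN D i j s0 t0 f) 1, arcN D i j s0 t0 f 1⟫ ≠ 0 := by
  rw [arcN_deriv_one S, arcN_one S, real_inner_smul_left]
  exact mul_ne_zero (arcN_L S).ne' (D.arc_transverse_end j)

end

/-- valid parameters -/
def Vd (n nl : ℕ) : Set (Psg n nl) :=
  Sum.elim (fun q => q.2 ∈ Ioo (0:ℝ) 1) (fun q => q.2 ∈ Ico (0:ℝ) 1)

/-- the point of a passage -/
def pt (D : PreDiagram n nl) : Psg n nl → Plane :=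
  Sum.elim (fun q => D.arc q.1 q.2) (fun q => D.loop q.1 q.2)

lemma mem_passages {D : PreDiagram n nl} {p : Plane} {q : Psg n nl} :
    q ∈ D.passages p ↔ q ∈ Vd n nl ∧ pt D q = p := by
  rcases q with q | q <;> rfl

/-- Transfer of the triple diagram structure along a bijection of parameters outside windows. -/
lemma transfer (D : TripleDiagram n nl) (D' : PreDiagram n nl') (p0 : Plane)
    (hp0 : D.IsMultiplePoint p0) (W : Set (Psg n nl)) (W' : Set (Psg n nl'))
    (e : Psg n nl' → Psg n nl) (e' : Psg n nl → Psg n nl')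
    (h1 : ∀ q ∈ Vd n nl', q ∉ W' → e q ∈ Vd n nl ∧ e q ∉ W ∧ pt D.toPreDiagram (e q) = pt D' q ∧
      (∃ c : ℝ, 0 < c ∧ D'.tangent q = c • D.tangent (e q)) ∧ e' (e q) = q)
    (h2 : ∀ q ∈ Vd n nl, q ∉ W → e' q ∈ Vd n nl' ∧ e' q ∉ W' ∧ e (e' q) = q)
    (h3 : ∀ q ∈ Vd n nl', q ∈ W' → ∀ q'' ∈ Vd n nl', pt D' q'' = pt D' q → q'' = q)
    (h4 : ∀ q ∈ Vd n nl, q ∈ W → D.IsMultiplePoint (pt D.toPreDiagram q) →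
      pt D.toPreDiagram q = p0)
    (h5 : (D.passages p0 \ W).Subsingleton) :
    ∃ T : TripleDiagram n nl', T.toPreDiagram = D' ∧ T.tripleCount + 1 = D.tripleCount := by
  have hout : ∀ p, D'.IsMultiplePoint p → ∀ q ∈ D'.passages p, q ∉ W' := by
    intro p hp q hq hqW
    obtain ⟨hqV, hqp⟩ := mem_passages.1 hq
    apply hp
    intro x hx y hy
    obtain ⟨hxV, hxp⟩ := mem_passages.1 hx
    obtain ⟨hyV, hyp⟩ := mem_passages.1 hy
    rw [h3 q hqV hqW x hxV (hxp.trans hqp.symm), h3 q hqV hqW y hyV (hyp.trans hqp.symm)]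
  have hfw : ∀ p, ∀ q ∈ D'.passages p, q ∉ W' → e q ∈ D.passages p ∧ e q ∉ W := by
    intro p q hq hqW
    obtain ⟨hqV, hqp⟩ := mem_passages.1 hq
    obtain ⟨a, b, c, -⟩ := h1 q hqV hqW
    exact ⟨mem_passages.2 ⟨a, c.trans hqp⟩, b⟩
  have hbw : ∀ p, ∀ q ∈ D.passages p, q ∉ W → e' q ∈ D'.passages p ∧ e (e' q) = q := by
    intro p q hq hqW
    obtain ⟨hqV, hqp⟩ := mem_passages.1 hq
    obtain ⟨a, b, c⟩ := h2 q hqV hqW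
    have := h1 _ a b
    refine ⟨mem_passages.2 ⟨a, ?_⟩, c⟩
    rw [← this.2.2.1, c, hqp]
  have hinj : ∀ p, ∀ x ∈ D'.passages p, x ∉ W' → e' (e x) = x := by
    intro p x hx hxW
    exact (h1 x (mem_passages.1 hx).1 hxW).2.2.2.2
  have hmul : ∀ p, D'.IsMultiplePoint p → D.IsMultiplePoint p ∧ p ≠ p0 := by
    intro p hp
    have hp' := hp
    unfold PreDiagram.IsMultiplePoint Set.Subsingleton at hp
    push Not at hp
    obtain ⟨x, hx, y, hy, hxy⟩ := hp
    have wx := hout p hp' x hx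
    have wy := hout p hp' y hy
    obtain ⟨ex, ex2⟩ := hfw p x hx wx
    obtain ⟨ey, ey2⟩ := hfw p y hy wy
    have hne : e x ≠ e y := by
      intro h
      apply hxy
      rw [← hinj p x hx wx, ← hinj p y hy wy, h]
    refine ⟨multiple_of ex ey hne, ?_⟩
    rintro rfl
    exact hne (h5 ⟨ex, ex2⟩ ⟨ey, ey2⟩)
  have hW : ∀ p, D.IsMultiplePoint p → p ≠ p0 → ∀ q ∈ D.passages p, q ∉ W := by
    intro p hp hne q hq hqW
    obtain ⟨hqV, hqp⟩ := mem_passages.1 hq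
    apply hne
    rw [← hqp]
    exact h4 q hqV hqW (by rw [hqp]; exact hp)
  have himg : ∀ p, D.IsMultiplePoint p → p ≠ p0 → D'.passages p = e' '' D.passages p := by
    intro p hp hne
    ext x
    constructor
    · intro hx
      have hxW : x ∉ W' := by
        intro hxW
        have hp2 := hp
        unfold PreDiagram.IsMultiplePoint Set.Subsingleton at hp2
        push Not at hp2
        obtain ⟨y, hy, z, hz, hyz⟩ := hp2
        obtain ⟨b1, b2⟩ := hbw p y hy (hW p hp hne y hy)
        obtain ⟨c1, c2⟩ := hbw p z hz (hW p hp hne z hz)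
        exact hout p (multiple_of b1 c1 (fun h => hyz (by rw [← b2, ← c2, h]))) x hx hxW
      exact ⟨e x, (hfw p x hx hxW).1, hinj p x hx hxW⟩
    · rintro ⟨q, hq, rfl⟩
      exact (hbw p q hq (hW p hp hne q hq)).1
  have hinj' : ∀ p, D.IsMultiplePoint p → p ≠ p0 → InjOn e' (D.passages p) := by
    intro p hp hne x hx y hy hxy
    rw [← (hbw p x hx (hW p hp hne x hx)).2, ← (hbw p y hy (hW p hp hne y hy)).2, hxy]
  have hset : {p | D.IsMultiplePoint p} = insert p0 {p | D'.IsMultiplePoint p} := by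
    ext p
    simp only [mem_setOf_eq, mem_insert_iff]
    constructor
    · intro hp
      by_cases hne : p = p0
      · exact Or.inl hne
      right
      intro hsub
      apply hp
      rw [himg p hp hne] at hsub
      intro x hx y hy
      exact hinj' p hp hne hx hy (hsub ⟨x, hx, rfl⟩ ⟨y, hy, rfl⟩)
    · rintro (rfl | hp)
      · exact hp0
      · exact (hmul p hp).1
  have hp0' : p0 ∉ {p | D'.IsMultiplePoint p} := fun h => (hmul p0 h).2 rfl
  have hfin : {p | D'.IsMultiplePoint p}.Finite :=
    D.multiple_finite.subset (fun p hp => (hmul p hp).1)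
  have htan : ∀ p, D.IsMultiplePoint p → p ≠ p0 → ∀ q ∈ D.passages p,
      ∃ c : ℝ, 0 < c ∧ D'.tangent (e' q) = c • D.tangent q := by
    intro p hp hne q hq
    obtain ⟨hqV, hqp⟩ := mem_passages.1 hq
    obtain ⟨a, b, c⟩ := h2 q hqV (hW p hp hne q hq)
    have := (h1 _ a b).2.2.2.1
    rwa [c] at this
  refine ⟨{ D' with
    multiple_finite := hfin
    triple := ?_
    branches_transverse := ?_
    alternating := ?_ }, rfl, ?_⟩
  · intro p hp
    obtain ⟨hp1, hp2⟩ := hmul p hp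
    rw [himg p hp1 hp2, (hinj' p hp1 hp2).ncard_image]
    exact D.triple p hp1
  · intro p hp q₁ hq₁ q₂ hq₂ hne
    obtain ⟨hp1, hp2⟩ := hmul p hp
    rw [himg p hp1 hp2] at hq₁ hq₂
    obtain ⟨x, hx, rfl⟩ := hq₁
    obtain ⟨y, hy, rfl⟩ := hq₂
    obtain ⟨a, ha, ha'⟩ := htan p hp1 hp2 x hx
    obtain ⟨b, hb, hb'⟩ := htan p hp1 hp2 y hy
    have := (indep_iff _ _).1 (D.branches_transverse p hp1 x hx y hy (fun h => hne (by rw [h])))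
    rw [indep_iff]
    rw [ha', hb', det_smul_left, det_smul_right]
    exact mul_ne_zero ha.ne' (mul_ne_zero hb.ne' this)
  · intro p hp
    obtain ⟨hp1, hp2⟩ := hmul p hp
    obtain ⟨x, y, z, hP, a, b, c, ha, hb, hc, h0⟩ := D.alternating p hp1
    obtain ⟨a', ha', hx⟩ := htan p hp1 hp2 x (by rw [hP]; simp)
    obtain ⟨b', hb', hy⟩ := htan p hp1 hp2 y (by rw [hP]; simp)
    obtain ⟨c', hc', hz⟩ := htan p hp1 hp2 z (by rw [hP]; simp)
    refine ⟨e' x, e' y, e' z, ?_, a / a', b / b', c / c', by positivity, by positivity,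
      by positivity, ?_⟩
    · rw [himg p hp1 hp2, hP, image_insert_eq, image_insert_eq, image_singleton]
    · rw [hx, hy, hz, smul_smul, smul_smul, smul_smul, div_mul_cancel₀ _ ha'.ne',
        div_mul_cancel₀ _ hb'.ne', div_mul_cancel₀ _ hc'.ne']
      exact h0
  · unfold TripleDiagram.tripleCount
    rw [hset, Set.ncard_insert_of_notMem hp0' hfin]

end TD

end Part7

section Part8
open Set Metric Real
open scoped RealInnerProductSpace
namespace TD
open Filter Topology ComplexConjugate
variable {n nl nl' : ℕ}

section
variable {D : TripleDiagram n 0} {i j : Fin n} {s0 t0 ε : ℝ} {f : ℝ → ℝ}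

lemma arcN_ptL (S : Surg D i j s0 t0 ε f) {τ : ℝ} (h : τ * (1 - t0 + s0) ≤ s0 - ε) :
    arcN D i j s0 t0 f τ = D.arc i (τ * (1 - t0 + s0)) := by
  unfold arcN
  rw [cc_left S (by linarith)]; congr 1; ring

lemma arcN_ptR (S : Surg D i j s0 t0 ε f) {τ : ℝ} (h : s0 + ε ≤ τ * (1 - t0 + s0)) :
    arcN D i j s0 t0 f τ = D.arc j (τ * (1 - t0 + s0) - s0 + t0) := by
  unfold arcN
  rw [cc_right S (by linarith)]; congr 1; ring

lemma arcN_dL (S : Surg D i j s0 t0 ε f) {τ : ℝ} (h : τ * (1 - t0 + s0) ≤ s0 - ε) :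
    deriv (arcN D i j s0 t0 f) τ = (1 - t0 + s0) • deriv (D.arc i) (τ * (1 - t0 + s0)) := by
  rw [arcN_deriv S, cc_deriv_left S (by linarith)]; congr 2; ring

lemma arcN_dR (S : Surg D i j s0 t0 ε f) {τ : ℝ} (h : s0 + ε ≤ τ * (1 - t0 + s0)) :
    deriv (arcN D i j s0 t0 f) τ =
      (1 - t0 + s0) • deriv (D.arc j) (τ * (1 - t0 + s0) - s0 + t0) := by
  rw [arcN_deriv S, cc_deriv_right S (by linarith)]; congr 2; ring

/-- the old window -/
def Win (i j : Fin n) (s0 t0 ε : ℝ) : Set (Psg n 0) :=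
  {q | ∃ x, (q = Sum.inl (i, x) ∧ |x - s0| < ε) ∨ (q = Sum.inl (j, x) ∧ |x - t0| < ε)}

lemma surg_mult (S : Surg D i j s0 t0 ε f) : D.IsMultiplePoint (D.arc i s0) := by
  refine multiple_of (q := Sum.inl (i, s0)) (q' := Sum.inl (j, t0)) ?_ ?_ ?_
  · exact ⟨S.g.hs, rfl⟩
  · exact ⟨S.g.ht, S.g.eq.symm⟩
  · intro h; exact S.g.ne (Sum.inl.inj h)

lemma surg_h5 (S : Surg D i j s0 t0 ε f) :
    (D.passages (D.arc i s0) \ Win i j s0 t0 ε).Subsingleton := by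
  have hA : (Sum.inl (i, s0) : Psg n 0) ∈ D.passages (D.arc i s0) := ⟨S.g.hs, rfl⟩
  have hB : (Sum.inl (j, t0) : Psg n 0) ∈ D.passages (D.arc i s0) := ⟨S.g.ht, S.g.eq.symm⟩
  obtain ⟨qC, hP, -⟩ := exists_third D (surg_mult S) hA hB (fun h => S.g.ne (Sum.inl.inj h))
  have wA : (Sum.inl (i, s0) : Psg n 0) ∈ Win i j s0 t0 ε :=
    ⟨s0, Or.inl ⟨rfl, by simpa using S.g.hε⟩⟩
  have wB : (Sum.inl (j, t0) : Psg n 0) ∈ Win i j s0 t0 ε :=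
    ⟨t0, Or.inr ⟨rfl, by simpa using S.g.hε⟩⟩
  have : ∀ x ∈ D.passages (D.arc i s0) \ Win i j s0 t0 ε, x = qC := by
    rintro x ⟨hx, hw⟩
    rw [hP] at hx
    rcases hx with rfl | rfl | hx
    · exact absurd wA hw
    · exact absurd wB hw
    · exact hx
  intro x hx y hy
  rw [this x hx, this y hy]

lemma surg_h4a (S : Surg D i j s0 t0 ε f) {x : ℝ} (hx : |x - s0| < ε)
    (hm : D.IsMultiplePoint (D.arc i x)) : D.arc i x = D.arc i s0 := by
  by_cases h0 : x - s0 = 0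
  · rw [sub_eq_zero.1 h0]
  exfalso
  apply hm
  have hPh : D.arc i x = Ph D i j s0 t0 (x - s0) 0 := by
    simp only [Ph]; rw [add_zero, ← S.g.eq, add_sub_cancel]; abel
  have : ∀ q ∈ D.passages (D.arc i x), q = Sum.inl (i, x) := by
    rintro (⟨k, y⟩ | ⟨k, y⟩) hq
    · obtain ⟨hy, hk⟩ := hq
      rcases S.g.key (x - s0) 0 hx.le (by simpa using S.g.hε.le)
        (by rcases le_total (x - s0) 0 with h | h
            · exact Or.inl ⟨h, le_rfl⟩
            · exact Or.inr ⟨h, le_rfl⟩) (fun h => h0 h.1) k y hy (hk.trans hPh) with h | h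
      · rw [h.1, h.2.1]; congr 2; ring
      · exact absurd h.2.2 h0
    · exact k.elim0
  intro a ha b hb
  rw [this a ha, this b hb]

lemma surg_h4 (S : Surg D i j s0 t0 ε f) (q : Psg n 0) (hq : q ∈ Win i j s0 t0 ε)
    (hm : D.IsMultiplePoint (pt D.toPreDiagram q)) : pt D.toPreDiagram q = D.arc i s0 := by
  obtain ⟨x, ⟨rfl, hx⟩ | ⟨rfl, hx⟩⟩ := hq
  · exact surg_h4a S hx hm
  · exact (surg_h4a S.symm hx hm).trans S.g.eq.symm

/-- new arcs of the swap -/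
noncomputable def swArc (D : TripleDiagram n 0) (i j : Fin n) (s0 t0 : ℝ) (f : ℝ → ℝ)
    (k : Fin n) : ℝ → Plane :=
  if k = i then arcN D i j s0 t0 f else if k = j then arcN D j i t0 s0 f else D.arc k

lemma swArc_i : swArc D i j s0 t0 f i = arcN D i j s0 t0 f := by simp [swArc]
lemma swArc_j (h : i ≠ j) : swArc D i j s0 t0 f j = arcN D j i t0 s0 f := by
  simp [swArc, h.symm]
lemma swArc_k {k : Fin n} (h : k ≠ i) (h' : k ≠ j) : swArc D i j s0 t0 f k = D.arc k := by
  simp [swArc, h, h']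

lemma swArc_zero (S : Surg D i j s0 t0 ε f) (k : Fin n) :
    swArc D i j s0 t0 f k 0 = D.arc k 0 := by
  unfold swArc
  split_ifs with h h'
  · rw [arcN_zero S, h]
  · rw [arcN_zero S.symm, h']
  · rfl

lemma swArc_one (S : Surg D i j s0 t0 ε f) (k : Fin n) :
    swArc D i j s0 t0 f k 1 = D.arc (Equiv.swap i j k) 1 := by
  unfold swArc
  split_ifs with h h'
  · rw [arcN_one S, h, Equiv.swap_apply_left]
  · rw [arcN_one S.symm, h', Equiv.swap_apply_right]
  · rw [Equiv.swap_apply_of_ne_of_ne h h']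

lemma swArc_cases {P : (ℝ → Plane) → Prop} (h1 : P (arcN D i j s0 t0 f))
    (h2 : P (arcN D j i t0 s0 f)) (h3 : ∀ k, P (D.arc k)) (k : Fin n) :
    P (swArc D i j s0 t0 f k) := by
  unfold swArc
  split_ifs
  · exact h1
  · exact h2
  · exact h3 k

/-- the swapped diagram -/
noncomputable def swPre (S : Surg D i j s0 t0 ε f) : PreDiagram n 0 where
  arc := swArc D i j s0 t0 f
  loop := fun k => k.elim0
  arc_smooth := swArc_cases (P := fun g => ContDiff ℝ (⊤ : ℕ∞) g) (arcN_smooth S)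
    (arcN_smooth S.symm) D.arc_smooth
  loop_smooth := fun k => k.elim0
  loop_periodic := fun k => k.elim0
  arc_immersed := swArc_cases (P := fun g => ∀ t ∈ Icc (0:ℝ) 1, deriv g t ≠ 0)
    (fun _ h => arcN_immersed S h) (fun _ h => arcN_immersed S.symm h) D.arc_immersed
  loop_immersed := fun k => k.elim0
  arc_in_disk := swArc_cases (P := fun g => ∀ t ∈ Icc (0:ℝ) 1, ‖g t‖ ≤ 1)
    (fun _ h => arcN_le S h) (fun _ h => arcN_le S.symm h) D.arc_in_disk
  arc_interior := swArc_cases (P := fun g => ∀ t ∈ Ioo (0:ℝ) 1, ‖g t‖ < 1)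
    (fun _ h => arcN_in S h) (fun _ h => arcN_in S.symm h) D.arc_interior
  arc_start_bdry := fun k => by rw [swArc_zero S]; exact D.arc_start_bdry k
  arc_end_bdry := fun k => by rw [swArc_one S]; exact D.arc_end_bdry _
  arc_transverse_start := swArc_cases (P := fun g => ⟪deriv g 0, g 0⟫ ≠ 0)
    (arcN_trans_zero S) (arcN_trans_zero S.symm) D.arc_transverse_start
  arc_transverse_end := swArc_cases (P := fun g => ⟪deriv g 1, g 1⟫ ≠ 0)
    (arcN_trans_one S) (arcN_trans_one S.symm) D.arc_transverse_end
  loop_in_disk := fun k => k.elim0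
  endpoints_distinct := by
    have h := D.endpoints_distinct.comp
      ((Function.injective_id (α := Fin n)).sumMap (Equiv.swap i j).injective)
    convert h using 1
    ext1 x
    rcases x with x | x
    · simp [swArc_zero S]
    · simp [swArc_one S]

/-- reparametrization -/
noncomputable def ec (i j : Fin n) (s0 t0 τ : ℝ) : Psg n 0 :=
  if τ * (1 - t0 + s0) < s0 then Sum.inl (i, τ * (1 - t0 + s0))
  else Sum.inl (j, τ * (1 - t0 + s0) - s0 + t0)

/-- inverse reparametrization -/
noncomputable def ec' (i j : Fin n) (s0 t0 x : ℝ) : Psg n 0 :=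
  if x < s0 then Sum.inl (i, x / (1 - t0 + s0))
  else Sum.inl (j, (x - s0 + t0) / (1 - s0 + t0))

noncomputable def eS (i j : Fin n) (s0 t0 : ℝ) : Psg n 0 → Psg n 0 :=
  Sum.elim (fun q => if q.1 = i then ec i j s0 t0 q.2 else if q.1 = j then ec j i t0 s0 q.2
    else Sum.inl q) Sum.inr

noncomputable def eS' (i j : Fin n) (s0 t0 : ℝ) : Psg n 0 → Psg n 0 :=
  Sum.elim (fun q => if q.1 = i then ec' i j s0 t0 q.2 else if q.1 = j then ec' j i t0 s0 q.2
    else Sum.inl q) Sum.inr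

/-- new window -/
def WinS (i j : Fin n) (s0 t0 ε : ℝ) : Set (Psg n 0) :=
  {q | ∃ τ, (q = Sum.inl (i, τ) ∧ |τ * (1 - t0 + s0) - s0| < ε) ∨
    (q = Sum.inl (j, τ) ∧ |τ * (1 - s0 + t0) - t0| < ε)}

lemma WinS_symm : WinS i j s0 t0 ε = WinS j i t0 s0 ε := by
  ext q; simp only [WinS, mem_setOf_eq]
  exact exists_congr fun _ => or_comm
lemma Win_symm : Win i j s0 t0 ε = Win j i t0 s0 ε := by
  ext q; simp only [Win, mem_setOf_eq]
  exact exists_congr fun _ => or_comm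
lemma eS_symm (h : i ≠ j) : eS i j s0 t0 = eS j i t0 s0 := by
  funext q
  rcases q with q | q
  · simp only [eS, Sum.elim_inl]
    by_cases h1 : q.1 = i
    · simp [h1, h]
    · simp [h1]
  · rfl
lemma eS'_symm (h : i ≠ j) : eS' i j s0 t0 = eS' j i t0 s0 := by
  funext q
  rcases q with q | q
  · simp only [eS', Sum.elim_inl]
    by_cases h1 : q.1 = i
    · simp [h1, h]
    · simp [h1]
  · rfl
lemma swArc_symm (h : i ≠ j) : swArc D i j s0 t0 f = swArc D j i t0 s0 f := by
  funext k
  simp only [swArc]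
  by_cases h1 : k = i
  · simp [h1, h]
  · simp [h1]

lemma eS_i (x : ℝ) : eS i j s0 t0 (Sum.inl (i, x)) = ec i j s0 t0 x := by simp [eS]
lemma eS'_i (x : ℝ) : eS' i j s0 t0 (Sum.inl (i, x)) = ec' i j s0 t0 x := by simp [eS']
lemma eS_j (h : i ≠ j) (x : ℝ) : eS i j s0 t0 (Sum.inl (j, x)) = ec j i t0 s0 x := by
  simp [eS, h.symm]
lemma eS'_j (h : i ≠ j) (x : ℝ) : eS' i j s0 t0 (Sum.inl (j, x)) = ec' j i t0 s0 x := by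
  simp [eS', h.symm]

lemma Win_i (h : i ≠ j) {x : ℝ} : Sum.inl (i, x) ∈ Win i j s0 t0 ε ↔ |x - s0| < ε := by
  constructor
  · rintro ⟨y, ⟨h1, h2⟩ | ⟨h1, h2⟩⟩
    · obtain rfl : x = y := congrArg Prod.snd (Sum.inl.inj h1)
      exact h2
    · exact absurd (congrArg Prod.fst (Sum.inl.inj h1)) h
  · intro h; exact ⟨x, Or.inl ⟨rfl, h⟩⟩
lemma Win_j (h : i ≠ j) {x : ℝ} : Sum.inl (j, x) ∈ Win i j s0 t0 ε ↔ |x - t0| < ε := by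
  rw [Win_symm]; exact Win_i h.symm
lemma WinS_i (h : i ≠ j) {x : ℝ} :
    Sum.inl (i, x) ∈ WinS i j s0 t0 ε ↔ |x * (1 - t0 + s0) - s0| < ε := by
  constructor
  · rintro ⟨y, ⟨h1, h2⟩ | ⟨h1, h2⟩⟩
    · obtain rfl : x = y := congrArg Prod.snd (Sum.inl.inj h1)
      exact h2
    · exact absurd (congrArg Prod.fst (Sum.inl.inj h1)) h
  · intro h; exact ⟨x, Or.inl ⟨rfl, h⟩⟩
lemma WinS_j (h : i ≠ j) {x : ℝ} :
    Sum.inl (j, x) ∈ WinS i j s0 t0 ε ↔ |x * (1 - s0 + t0) - t0| < ε := by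
  rw [WinS_symm]; exact WinS_i h.symm

lemma out_cases {x a ε : ℝ} (h : ¬ |x - a| < ε) : x ≤ a - ε ∨ a + ε ≤ x := by
  rw [abs_lt] at h
  by_contra h'
  push Not at h'
  exact h ⟨by linarith, by linarith⟩

lemma sw_h1i (S : Surg D i j s0 t0 ε f) (h : i ≠ j) {τ : ℝ} (hτ : τ ∈ Ioo (0:ℝ) 1)
    (hw : ¬ |τ * (1 - t0 + s0) - s0| < ε) :
    eS i j s0 t0 (Sum.inl (i, τ)) ∈ Vd n 0 ∧ eS i j s0 t0 (Sum.inl (i, τ)) ∉ Win i j s0 t0 ε ∧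
      pt D.toPreDiagram (eS i j s0 t0 (Sum.inl (i, τ))) = arcN D i j s0 t0 f τ ∧
      (∃ c : ℝ, 0 < c ∧ deriv (arcN D i j s0 t0 f) τ =
        c • D.tangent (eS i j s0 t0 (Sum.inl (i, τ)))) ∧
      eS' i j s0 t0 (eS i j s0 t0 (Sum.inl (i, τ))) = Sum.inl (i, τ) := by
  have hL := arcN_L S
  have hε := S.g.hε
  have hs := S.g.hs
  have ht := S.g.ht
  have hp1 : 0 < τ * (1 - t0 + s0) := mul_pos hτ.1 hL
  have hp2 : τ * (1 - t0 + s0) < 1 - t0 + s0 := by nlinarith [hτ.2]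
  rw [eS_i]
  rcases out_cases hw with h1 | h1
  · have e1 : ec i j s0 t0 τ = Sum.inl (i, τ * (1 - t0 + s0)) := if_pos (by linarith)
    rw [e1, eS'_i, Win_i h]
    refine ⟨⟨hp1, by linarith [hs.2]⟩, hw, (arcN_ptL S h1).symm, ⟨_, hL, arcN_dL S h1⟩, ?_⟩
    rw [ec', if_pos (by linarith), mul_div_cancel_right₀ _ hL.ne']
  · have e1 : ec i j s0 t0 τ = Sum.inl (j, τ * (1 - t0 + s0) - s0 + t0) := if_neg (by linarith)
    rw [e1, eS'_j h, Win_j h]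
    refine ⟨⟨by show 0 < _; linarith [ht.1], by show _ < (1:ℝ); linarith⟩, ?_,
      (arcN_ptR S h1).symm, ⟨_, hL, arcN_dR S h1⟩, ?_⟩
    · rwa [add_sub_cancel_right]
    · rw [ec', if_neg (by linarith)]
      congr 2
      rw [div_eq_iff hL.ne']; ring

lemma sw_h2i (S : Surg D i j s0 t0 ε f) (h : i ≠ j) {x : ℝ} (hx : x ∈ Ioo (0:ℝ) 1)
    (hw : ¬ |x - s0| < ε) :
    eS' i j s0 t0 (Sum.inl (i, x)) ∈ Vd n 0 ∧ eS' i j s0 t0 (Sum.inl (i, x)) ∉ WinS i j s0 t0 ε ∧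
      eS i j s0 t0 (eS' i j s0 t0 (Sum.inl (i, x))) = Sum.inl (i, x) := by
  have hL := arcN_L S
  have hL' := arcN_L S.symm
  have hε := S.g.hε
  have hs := S.g.hs
  have ht := S.g.ht
  rw [eS'_i]
  rcases out_cases hw with h1 | h1
  · have e1 : ec' i j s0 t0 x = Sum.inl (i, x / (1 - t0 + s0)) := if_pos (by linarith)
    rw [e1, eS_i, WinS_i h, ec, div_mul_cancel₀ _ hL.ne', if_pos (by linarith)]
    exact ⟨⟨div_pos hx.1 hL, (div_lt_one hL).2 (by linarith [ht.2])⟩, hw, rfl⟩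
  · have e1 : ec' i j s0 t0 x = Sum.inl (j, (x - s0 + t0) / (1 - s0 + t0)) := if_neg (by linarith)
    rw [e1, eS_j h, WinS_j h, ec, div_mul_cancel₀ _ hL'.ne', if_neg (by linarith)]
    refine ⟨⟨div_pos (by show 0 < x - s0 + t0; linarith [ht.1]) hL', (div_lt_one hL').2
      (by show x - s0 + t0 < _; linarith [hx.2])⟩, ?_, ?_⟩
    · rwa [add_sub_cancel_right]
    · congr 2; ring

/-- Surgery at a crossing of two different arcs. -/
lemma surgery_swap (S : Surg D i j s0 t0 ε f) (h : i ≠ j) :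
    ∃ T : TripleDiagram n 0, T.tripleCount + 1 = D.tripleCount ∧
      T.arc = swArc D i j s0 t0 f := by
  have h1 : ∀ q ∈ Vd n 0, q ∉ WinS i j s0 t0 ε → eS i j s0 t0 q ∈ Vd n 0 ∧
      eS i j s0 t0 q ∉ Win i j s0 t0 ε ∧
      pt D.toPreDiagram (eS i j s0 t0 q) = pt (swPre S) q ∧
      (∃ c : ℝ, 0 < c ∧ (swPre S).tangent q = c • D.tangent (eS i j s0 t0 q)) ∧
      eS' i j s0 t0 (eS i j s0 t0 q) = q := by
    rintro (⟨k, τ⟩ | ⟨k, y⟩) hq hw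
    · show _ ∧ _ ∧ _ = swArc D i j s0 t0 f k τ ∧
        (∃ c : ℝ, 0 < c ∧ deriv (swArc D i j s0 t0 f k) τ = _) ∧ _
      by_cases hk : k = i
      · subst hk
        rw [WinS_i h] at hw
        rw [swArc_i]
        exact sw_h1i S h hq hw
      by_cases hk' : k = j
      · subst hk'
        rw [WinS_j h] at hw
        rw [swArc_j h, eS_symm h, Win_symm, eS'_symm h]
        exact sw_h1i S.symm h.symm hq hw
      · have e1 : eS i j s0 t0 (Sum.inl (k, τ)) = Sum.inl (k, τ) := by simp [eS, hk, hk']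
        have e2 : eS' i j s0 t0 (Sum.inl (k, τ)) = Sum.inl (k, τ) := by simp [eS', hk, hk']
        rw [e1, e2, swArc_k hk hk']
        refine ⟨hq, ?_, rfl, ⟨1, one_pos, (one_smul _ _).symm⟩, rfl⟩
        rintro ⟨x, ⟨hx, -⟩ | ⟨hx, -⟩⟩
        · exact hk (congrArg Prod.fst (Sum.inl.inj hx))
        · exact hk' (congrArg Prod.fst (Sum.inl.inj hx))
    · exact k.elim0
  have h2 : ∀ q ∈ Vd n 0, q ∉ Win i j s0 t0 ε → eS' i j s0 t0 q ∈ Vd n 0 ∧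
      eS' i j s0 t0 q ∉ WinS i j s0 t0 ε ∧ eS i j s0 t0 (eS' i j s0 t0 q) = q := by
    rintro (⟨k, x⟩ | ⟨k, y⟩) hq hw
    · by_cases hk : k = i
      · subst hk
        rw [Win_i h] at hw
        exact sw_h2i S h hq hw
      by_cases hk' : k = j
      · subst hk'
        rw [Win_j h] at hw
        rw [eS_symm h, WinS_symm, eS'_symm h]
        exact sw_h2i S.symm h.symm hq hw
      · have e1 : eS i j s0 t0 (Sum.inl (k, x)) = Sum.inl (k, x) := by simp [eS, hk, hk']
        have e2 : eS' i j s0 t0 (Sum.inl (k, x)) = Sum.inl (k, x) := by simp [eS', hk, hk']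
        rw [e2, e1]
        refine ⟨hq, ?_, rfl⟩
        rintro ⟨x, ⟨hx, -⟩ | ⟨hx, -⟩⟩
        · exact hk (congrArg Prod.fst (Sum.inl.inj hx))
        · exact hk' (congrArg Prod.fst (Sum.inl.inj hx))
    · exact k.elim0
  have h3 : ∀ q ∈ Vd n 0, q ∈ WinS i j s0 t0 ε → ∀ q'' ∈ Vd n 0,
      pt (swPre S) q'' = pt (swPre S) q → q'' = q := by
    intro q hq hw q'' hq'' heq
    have hnew : q'' ∈ WinS i j s0 t0 ε := by
      by_contra hw''
      obtain ⟨a, b, c, -⟩ := h1 q'' hq'' hw''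
      rw [heq] at c
      generalize eS i j s0 t0 q'' = r at a c
      rcases r with ⟨k, x⟩ | ⟨k, x⟩
      swap
      · exact k.elim0
      obtain ⟨τ, ⟨rfl, hτ⟩ | ⟨rfl, hτ⟩⟩ := hw
      · have c' : D.arc k x = swArc D i j s0 t0 f i τ := c
        rw [swArc_i] at c'
        exact cc_new S (by convert hτ using 2; ring) a c'
      · have c' : D.arc k x = swArc D i j s0 t0 f j τ := c
        rw [swArc_j h] at c'
        exact cc_new S.symm (by convert hτ using 2; ring) a c'
    obtain ⟨τ, ⟨rfl, hτ⟩ | ⟨rfl, hτ⟩⟩ := hw <;> obtain ⟨τ', ⟨rfl, hτ'⟩ | ⟨rfl, hτ'⟩⟩ := hnew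
    · have c' : swArc D i j s0 t0 f i τ' = swArc D i j s0 t0 f i τ := heq
      rw [swArc_i] at c'
      have := cc_inj S (by convert hτ' using 2; ring) (by convert hτ using 2; ring) c'
      rw [mul_right_cancel₀ (arcN_L S).ne' (add_left_cancel this)]
    · have c' : swArc D i j s0 t0 f j τ' = swArc D i j s0 t0 f i τ := heq
      rw [swArc_i, swArc_j h] at c'
      exact absurd c'.symm (cc_cc S (by convert hτ using 2; ring) (by convert hτ' using 2; ring))
    · have c' : swArc D i j s0 t0 f i τ' = swArc D i j s0 t0 f j τ := heq
      rw [swArc_i, swArc_j h] at c'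
      exact absurd c' (cc_cc S (by convert hτ' using 2; ring) (by convert hτ using 2; ring))
    · have c' : swArc D i j s0 t0 f j τ' = swArc D i j s0 t0 f j τ := heq
      rw [swArc_j h] at c'
      have := cc_inj S.symm (by convert hτ' using 2; ring) (by convert hτ using 2; ring) c'
      rw [mul_right_cancel₀ (arcN_L S.symm).ne' (add_left_cancel this)]
  obtain ⟨T, hT, hc⟩ := transfer D (swPre S) (D.arc i s0) (surg_mult S) _ _ _ _ h1 h2 h3
    (fun q _ hq hm => surg_h4 S q hq hm) (surg_h5 S)
  exact ⟨T, hc, by rw [hT]; rfl⟩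

end
end TD

end Part8

section Part9
open Set Metric Real
open scoped RealInnerProductSpace
namespace TD
open Filter Topology ComplexConjugate
variable {n nl nl' : ℕ}

section
variable {D : TripleDiagram n 0} {i : Fin n} {s0 t0 ε : ℝ} {f : ℝ → ℝ}

/-- the new loop -/
noncomputable def lpN (D : TripleDiagram n 0) (i : Fin n) (s0 t0 : ℝ) (f : ℝ → ℝ) (τ : ℝ) : Plane :=
  cc D i i t0 s0 f ((t0 - s0) * (Int.fract τ - 1 / 2))

lemma lpN_B {k : ℤ} {τ : ℝ} (h : (k : ℝ) ≤ τ) (h' : τ < k + 1) :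
    lpN D i s0 t0 f τ = cc D i i t0 s0 f ((t0 - s0) * (τ - k - 1 / 2)) := by
  unfold lpN
  have : Int.floor τ = k := Int.floor_eq_iff.2 ⟨h, h'⟩
  rw [Int.fract, this]

lemma lpN_A (S : Surg D i i s0 t0 ε f) (hm : s0 + ε < t0 - ε) {k : ℤ} {τ : ℝ}
    (h : (t0 - s0) * |τ - k| ≤ (t0 - s0) / 2 - ε) :
    lpN D i s0 t0 f τ = D.arc i ((s0 + t0) / 2 + (t0 - s0) * (τ - k)) := by
  have hε := S.g.hε
  have hP : 0 < t0 - s0 := by linarith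
  rcases le_or_gt (k : ℝ) τ with h1 | h1
  · rw [abs_of_nonneg (by linarith)] at h
    rw [lpN_B h1 (by nlinarith), cc_left S.symm (by nlinarith)]
    congr 1; ring
  · rw [abs_of_neg (by linarith)] at h
    rw [lpN_B (k := k - 1) (by push_cast; nlinarith) (by push_cast; linarith),
      cc_right S.symm (by push_cast; nlinarith)]
    congr 1; push_cast; ring

lemma lpN_local (S : Surg D i i s0 t0 ε f) (hm : s0 + ε < t0 - ε) (τ : ℝ) :
    (lpN D i s0 t0 f =ᶠ[𝓝 τ] fun x => cc D i i t0 s0 f ((t0 - s0) * (x - (⌊τ⌋ : ℤ) - 1 / 2))) ∨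
    (Int.fract τ = 0 ∧ lpN D i s0 t0 f =ᶠ[𝓝 τ]
      fun x => D.arc i ((s0 + t0) / 2 + (t0 - s0) * (x - (⌊τ⌋ : ℤ)))) := by
  have hε := S.g.hε
  by_cases h0 : Int.fract τ = 0
  · right
    refine ⟨h0, ?_⟩
    have hτ : τ - (⌊τ⌋ : ℤ) = 0 := h0
    have hc : ContinuousAt (fun x : ℝ => (t0 - s0) * |x - (⌊τ⌋ : ℤ)|) τ := by fun_prop
    have hlt : (fun x : ℝ => (t0 - s0) * |x - (⌊τ⌋ : ℤ)|) τ < (t0 - s0) / 2 - ε := by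
      simp only [hτ, abs_zero, mul_zero]; linarith
    filter_upwards [hc.eventually_lt_const hlt] with x hx
    exact lpN_A S hm hx.le
  · left
    have h1 : (⌊τ⌋ : ℝ) < τ := by
      have := Int.fract_nonneg τ
      have h2 : 0 < Int.fract τ := lt_of_le_of_ne this (Ne.symm h0)
      unfold Int.fract at h2; linarith
    filter_upwards [Ioo_mem_nhds h1 (Int.lt_floor_add_one τ)] with x hx
    exact lpN_B hx.1.le hx.2

lemma lpN_smooth (S : Surg D i i s0 t0 ε f) (hm : s0 + ε < t0 - ε) :
    ContDiff ℝ (⊤ : ℕ∞) (lpN D i s0 t0 f) := by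
  rw [contDiff_iff_contDiffAt]
  intro τ
  rcases lpN_local S hm τ with h | ⟨-, h⟩
  · refine ContDiffAt.congr_of_eventuallyEq ?_ h
    exact ((cc_smooth S.symm).comp (by fun_prop)).contDiffAt
  · refine ContDiffAt.congr_of_eventuallyEq ?_ h
    exact ((D.arc_smooth i).comp (by fun_prop)).contDiffAt

lemma lpN_deriv (S : Surg D i i s0 t0 ε f) (hm : s0 + ε < t0 - ε) (τ : ℝ) :
    deriv (lpN D i s0 t0 f) τ =
      (t0 - s0) • deriv (cc D i i t0 s0 f) ((t0 - s0) * (Int.fract τ - 1 / 2)) := by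
  have hε := S.g.hε
  rcases lpN_local S hm τ with h | ⟨h0, h⟩
  · rw [h.deriv_eq]
    have h1 : HasDerivAt (fun x : ℝ => (t0 - s0) * (x - (⌊τ⌋ : ℤ) - 1 / 2)) (t0 - s0) τ := by
      have := (((hasDerivAt_id τ).sub_const ((⌊τ⌋ : ℤ) : ℝ)).sub_const (1 / 2)).const_mul (t0 - s0)
      rw [mul_one] at this
      exact this
    have h2 : HasDerivAt (cc D i i t0 s0 f) _ ((t0 - s0) * (τ - (⌊τ⌋ : ℤ) - 1 / 2)) :=
      ((cc_smooth S.symm).differentiable (by simp)).differentiableAt.hasDerivAt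
    exact (h2.scomp τ h1).deriv
  · rw [h.deriv_eq]
    have h1 : HasDerivAt (fun x : ℝ => (s0 + t0) / 2 + (t0 - s0) * (x - (⌊τ⌋ : ℤ)))
        (t0 - s0) τ := by
      simpa using (((hasDerivAt_id τ).sub_const ((⌊τ⌋ : ℤ) : ℝ)).const_mul
        (t0 - s0)).const_add ((s0 + t0) / 2)
    have h2 := arc_hasDeriv D i ((s0 + t0) / 2 + (t0 - s0) * (τ - (⌊τ⌋ : ℤ)))
    have h3 : deriv (fun x => D.arc i ((s0 + t0) / 2 + (t0 - s0) * (x - (⌊τ⌋ : ℤ)))) τ = _ :=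
      (h2.scomp τ h1).deriv
    rw [h3, h0, cc_deriv_left S.symm (by linarith)]
    have hτ : τ - (⌊τ⌋ : ℤ) = 0 := h0
    rw [hτ]; congr 2; ring

lemma lpN_bd (τ : ℝ) (hP : s0 < t0) : -((t0 - s0) / 2) ≤ (t0 - s0) * (Int.fract τ - 1 / 2) ∧
    (t0 - s0) * (Int.fract τ - 1 / 2) ≤ (t0 - s0) / 2 := by
  have h1 := Int.fract_nonneg τ
  have h2 := (Int.fract_lt_one τ).le
  constructor <;> nlinarith

/-- new arcs of the loop surgery -/
noncomputable def lpArc (D : TripleDiagram n 0) (i : Fin n) (s0 t0 : ℝ) (f : ℝ → ℝ)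
    (k : Fin n) : ℝ → Plane :=
  if k = i then arcN D i i s0 t0 f else D.arc k

lemma lpArc_i : lpArc D i s0 t0 f i = arcN D i i s0 t0 f := by simp [lpArc]
lemma lpArc_k {k : Fin n} (h : k ≠ i) : lpArc D i s0 t0 f k = D.arc k := by
  simp [lpArc, h]

lemma lpArc_zero (S : Surg D i i s0 t0 ε f) (k : Fin n) :
    lpArc D i s0 t0 f k 0 = D.arc k 0 := by
  unfold lpArc
  split_ifs with h
  · rw [arcN_zero S, h]
  · rfl

lemma lpArc_one (S : Surg D i i s0 t0 ε f) (k : Fin n) :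
    lpArc D i s0 t0 f k 1 = D.arc k 1 := by
  unfold lpArc
  split_ifs with h
  · rw [arcN_one S, h]
  · rfl

lemma lpArc_cases {P : (ℝ → Plane) → Prop} (h1 : P (arcN D i i s0 t0 f))
    (h3 : ∀ k, P (D.arc k)) (k : Fin n) :
    P (lpArc D i s0 t0 f k) := by
  unfold lpArc
  split_ifs
  · exact h1
  · exact h3 k

/-- the diagram with a split off loop -/
noncomputable def lpPre (S : Surg D i i s0 t0 ε f) (hm : s0 + ε < t0 - ε) : PreDiagram n 1 where
  arc := lpArc D i s0 t0 f
  loop := fun _ => lpN D i s0 t0 f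
  arc_smooth := lpArc_cases (P := fun g => ContDiff ℝ (⊤ : ℕ∞) g) (arcN_smooth S) D.arc_smooth
  loop_smooth := fun _ => lpN_smooth S hm
  loop_periodic := fun _ τ => by simp [lpN, Int.fract_add_one]
  arc_immersed := lpArc_cases (P := fun g => ∀ t ∈ Icc (0:ℝ) 1, deriv g t ≠ 0)
    (fun _ h => arcN_immersed S h) D.arc_immersed
  loop_immersed := fun _ τ => by
    have hε := S.g.hε
    obtain ⟨h1, h2⟩ := lpN_bd (s0 := s0) (t0 := t0) τ (by linarith)
    rw [lpN_deriv S hm]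
    refine smul_ne_zero (by linarith) (cc_deriv_ne S.symm ?_ ?_)
    · linarith [S.g.hs.1]
    · linarith [S.g.ht.2]
  arc_in_disk := lpArc_cases (P := fun g => ∀ t ∈ Icc (0:ℝ) 1, ‖g t‖ ≤ 1)
    (fun _ h => arcN_le S h) D.arc_in_disk
  arc_interior := lpArc_cases (P := fun g => ∀ t ∈ Ioo (0:ℝ) 1, ‖g t‖ < 1)
    (fun _ h => arcN_in S h) D.arc_interior
  arc_start_bdry := fun k => by rw [lpArc_zero S]; exact D.arc_start_bdry k
  arc_end_bdry := fun k => by rw [lpArc_one S]; exact D.arc_end_bdry _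
  arc_transverse_start := lpArc_cases (P := fun g => ⟪deriv g 0, g 0⟫ ≠ 0)
    (arcN_trans_zero S) D.arc_transverse_start
  arc_transverse_end := lpArc_cases (P := fun g => ⟪deriv g 1, g 1⟫ ≠ 0)
    (arcN_trans_one S) D.arc_transverse_end
  loop_in_disk := fun _ τ => by
    have hε := S.g.hε
    obtain ⟨h1, h2⟩ := lpN_bd (s0 := s0) (t0 := t0) τ (by linarith)
    refine cc_in S.symm ?_ ?_
    · linarith [S.g.hs.1]
    · linarith [S.g.ht.2]
  endpoints_distinct := by
    have h := D.endpoints_distinct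
    convert h using 1
    ext1 x
    rcases x with x | x
    · simp [lpArc_zero S]
    · simp [lpArc_one S]

noncomputable def eL (i : Fin n) (s0 t0 : ℝ) : Psg n 1 → Psg n 0 :=
  Sum.elim (fun q => if q.1 = i then ec i i s0 t0 q.2 else Sum.inl q)
    (fun q => if (t0 - s0) * (q.2 - 1 / 2) < 0 then Sum.inl (i, t0 + (t0 - s0) * (q.2 - 1 / 2))
      else Sum.inl (i, s0 + (t0 - s0) * (q.2 - 1 / 2)))

noncomputable def eL' (i : Fin n) (s0 t0 : ℝ) : Psg n 0 → Psg n 1 :=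
  Sum.elim (fun q => if q.1 = i then
      (if q.2 < s0 then Sum.inl (i, q.2 / (1 - t0 + s0))
      else if q.2 < t0 then
        (if q.2 < (s0 + t0) / 2 then Sum.inr (0, (q.2 - s0) / (t0 - s0) + 1 / 2)
          else Sum.inr (0, (q.2 - t0) / (t0 - s0) + 1 / 2))
      else Sum.inl (i, (q.2 - t0 + s0) / (1 - t0 + s0))) else Sum.inl q)
    (fun q => q.1.elim0)

/-- new window -/
def WinL (i : Fin n) (s0 t0 ε : ℝ) : Set (Psg n 1) :=
  {q | ∃ τ, (q = Sum.inl (i, τ) ∧ |τ * (1 - t0 + s0) - s0| < ε) ∨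
    (q = Sum.inr (0, τ) ∧ |(t0 - s0) * (τ - 1 / 2)| < ε)}

lemma WinL_i {x : ℝ} :
    Sum.inl (i, x) ∈ WinL i s0 t0 ε ↔ |x * (1 - t0 + s0) - s0| < ε := by
  constructor
  · rintro ⟨y, ⟨h1, h2⟩ | ⟨h1, h2⟩⟩
    · obtain rfl : x = y := congrArg Prod.snd (Sum.inl.inj h1)
      exact h2
    · cases h1
  · intro h; exact ⟨x, Or.inl ⟨rfl, h⟩⟩

lemma WinL_r {x : ℝ} :
    Sum.inr (0, x) ∈ WinL i s0 t0 ε ↔ |(t0 - s0) * (x - 1 / 2)| < ε := by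
  constructor
  · rintro ⟨y, ⟨h1, h2⟩ | ⟨h1, h2⟩⟩
    · cases h1
    · obtain rfl : x = y := congrArg Prod.snd (Sum.inr.inj h1)
      exact h2
  · intro h; exact ⟨x, Or.inr ⟨rfl, h⟩⟩

lemma Win_ii {x : ℝ} : Sum.inl (i, x) ∈ Win i i s0 t0 ε ↔ (|x - s0| < ε ∨ |x - t0| < ε) := by
  constructor
  · rintro ⟨y, ⟨h1, h2⟩ | ⟨h1, h2⟩⟩
    · obtain rfl : x = y := congrArg Prod.snd (Sum.inl.inj h1)
      exact Or.inl h2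
    · obtain rfl : x = y := congrArg Prod.snd (Sum.inl.inj h1)
      exact Or.inr h2
  · rintro (h | h)
    · exact ⟨x, Or.inl ⟨rfl, h⟩⟩
    · exact ⟨x, Or.inr ⟨rfl, h⟩⟩

lemma eL_i (x : ℝ) : eL i s0 t0 (Sum.inl (i, x)) = ec i i s0 t0 x := by simp [eL]

lemma far_not {x a ε : ℝ} (h : x ≤ a - ε ∨ a + ε ≤ x) : ¬ |x - a| < ε := by
  rw [abs_lt]; rintro ⟨h1, h2⟩
  rcases h with h | h <;> linarith

lemma lp_h1i (S : Surg D i i s0 t0 ε f) (hm : s0 + ε < t0 - ε) {τ : ℝ} (hτ : τ ∈ Ioo (0:ℝ) 1)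
    (hw : ¬ |τ * (1 - t0 + s0) - s0| < ε) :
    eL i s0 t0 (Sum.inl (i, τ)) ∈ Vd n 0 ∧ eL i s0 t0 (Sum.inl (i, τ)) ∉ Win i i s0 t0 ε ∧
      pt D.toPreDiagram (eL i s0 t0 (Sum.inl (i, τ))) = arcN D i i s0 t0 f τ ∧
      (∃ c : ℝ, 0 < c ∧ deriv (arcN D i i s0 t0 f) τ =
        c • D.tangent (eL i s0 t0 (Sum.inl (i, τ)))) ∧
      eL' i s0 t0 (eL i s0 t0 (Sum.inl (i, τ))) = Sum.inl (i, τ) := by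
  have hL := arcN_L S
  have hε := S.g.hε
  have hs := S.g.hs
  have ht := S.g.ht
  have hp1 : 0 < τ * (1 - t0 + s0) := mul_pos hτ.1 hL
  have hp2 : τ * (1 - t0 + s0) < 1 - t0 + s0 := by nlinarith [hτ.2]
  rw [eL_i]
  rcases out_cases hw with h1 | h1
  · have e1 : ec i i s0 t0 τ = Sum.inl (i, τ * (1 - t0 + s0)) := if_pos (by linarith)
    rw [e1, Win_ii]
    refine ⟨⟨hp1, by linarith [hs.2]⟩, ?_, (arcN_ptL S h1).symm, ⟨_, hL, arcN_dL S h1⟩, ?_⟩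
    · rintro (h | h)
      · exact hw h
      · exact far_not (Or.inl (by linarith)) h
    · simp only [eL', Sum.elim_inl, if_true]
      rw [if_pos (by linarith), mul_div_cancel_right₀ _ hL.ne']
  · have e1 : ec i i s0 t0 τ = Sum.inl (i, τ * (1 - t0 + s0) - s0 + t0) := if_neg (by linarith)
    rw [e1, Win_ii]
    refine ⟨⟨by show 0 < _; linarith [ht.1], by show _ < (1:ℝ); linarith⟩, ?_,
      (arcN_ptR S h1).symm, ⟨_, hL, arcN_dR S h1⟩, ?_⟩
    · rintro (h | h)
      · exact far_not (Or.inr (by linarith)) h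
      · exact far_not (Or.inr (by linarith)) h
    · simp only [eL', Sum.elim_inl, if_true]
      rw [if_neg (by linarith), if_neg (by linarith)]
      congr 2
      rw [div_eq_iff hL.ne']; ring

lemma lp_h1r (S : Surg D i i s0 t0 ε f) (hm : s0 + ε < t0 - ε) {τ : ℝ} (hτ : τ ∈ Ico (0:ℝ) 1)
    (hw : ¬ |(t0 - s0) * (τ - 1 / 2)| < ε) :
    eL i s0 t0 (Sum.inr (0, τ)) ∈ Vd n 0 ∧ eL i s0 t0 (Sum.inr (0, τ)) ∉ Win i i s0 t0 ε ∧
      pt D.toPreDiagram (eL i s0 t0 (Sum.inr (0, τ))) = lpN D i s0 t0 f τ ∧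
      (∃ c : ℝ, 0 < c ∧ deriv (lpN D i s0 t0 f) τ =
        c • D.tangent (eL i s0 t0 (Sum.inr (0, τ)))) ∧
      eL' i s0 t0 (eL i s0 t0 (Sum.inr (0, τ))) = Sum.inr (0, τ) := by
  have hε := S.g.hε
  have hs := S.g.hs
  have ht := S.g.ht
  have hP : 0 < t0 - s0 := by linarith
  have hfr : Int.fract τ = τ := Int.fract_eq_self.2 hτ
  have hp1 : -((t0 - s0) / 2) ≤ (t0 - s0) * (τ - 1 / 2) := by nlinarith [hτ.1]
  have hp2 : (t0 - s0) * (τ - 1 / 2) < (t0 - s0) / 2 := by nlinarith [hτ.2]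
  have hd := lpN_deriv S hm τ
  have hv : lpN D i s0 t0 f τ = cc D i i t0 s0 f ((t0 - s0) * (τ - 1 / 2)) := by
    unfold lpN; rw [hfr]
  rw [hfr] at hd
  rw [hv, hd]
  have hback : (t0 - s0) * (τ - 1 / 2) / (t0 - s0) + 1 / 2 = τ := by
    rw [mul_div_cancel_left₀ _ hP.ne']; ring
  generalize hσ : (t0 - s0) * (τ - 1 / 2) = σ at *
  rcases out_cases (a := 0) (by rwa [sub_zero]) with h1 | h1
  · have e1 : eL i s0 t0 (Sum.inr (0, τ)) = Sum.inl (i, t0 + σ) := by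
      simp only [eL, Sum.elim_inr]; rw [hσ, if_pos (by linarith)]
    rw [e1, Win_ii]
    refine ⟨⟨by show 0 < _; linarith [hs.1], by show _ < (1:ℝ); linarith [ht.2]⟩, ?_,
      (cc_left S.symm (by linarith)).symm, ⟨_, hP, by rw [cc_deriv_left S.symm (by linarith)]; rfl⟩,
      ?_⟩
    · rintro (h | h)
      · exact far_not (Or.inr (by linarith)) h
      · exact far_not (Or.inl (by linarith)) h
    · simp only [eL', Sum.elim_inl, if_true]
      rw [if_neg (by linarith), if_pos (by linarith), if_neg (by linarith), add_sub_cancel_left,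
        hback]
  · have e1 : eL i s0 t0 (Sum.inr (0, τ)) = Sum.inl (i, s0 + σ) := by
      simp only [eL, Sum.elim_inr]; rw [hσ, if_neg (by linarith)]
    rw [e1, Win_ii]
    refine ⟨⟨by show 0 < _; linarith [hs.1], by show _ < (1:ℝ); linarith [ht.2]⟩, ?_,
      (cc_right S.symm (by linarith)).symm,
      ⟨_, hP, by rw [cc_deriv_right S.symm (by linarith)]; rfl⟩, ?_⟩
    · rintro (h | h)
      · exact far_not (Or.inr (by linarith)) h
      · exact far_not (Or.inl (by linarith)) h
    · simp only [eL', Sum.elim_inl, if_true]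
      rw [if_neg (by linarith), if_pos (by linarith), if_pos (by linarith), add_sub_cancel_left,
        hback]

lemma lp_h2i (S : Surg D i i s0 t0 ε f) (hm : s0 + ε < t0 - ε) {x : ℝ} (hx : x ∈ Ioo (0:ℝ) 1)
    (hw1 : ¬ |x - s0| < ε) (hw2 : ¬ |x - t0| < ε) :
    eL' i s0 t0 (Sum.inl (i, x)) ∈ Vd n 1 ∧ eL' i s0 t0 (Sum.inl (i, x)) ∉ WinL i s0 t0 ε ∧
      eL i s0 t0 (eL' i s0 t0 (Sum.inl (i, x))) = Sum.inl (i, x) := by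
  have hL := arcN_L S
  have hε := S.g.hε
  have hs := S.g.hs
  have ht := S.g.ht
  have hP : 0 < t0 - s0 := by linarith
  rcases out_cases hw1 with h1 | h1
  · have e1 : eL' i s0 t0 (Sum.inl (i, x)) = Sum.inl (i, x / (1 - t0 + s0)) := by
      simp only [eL', Sum.elim_inl, if_true]; exact if_pos (by linarith)
    rw [e1, eL_i, WinL_i, ec, div_mul_cancel₀ _ hL.ne', if_pos (by linarith)]
    exact ⟨⟨div_pos hx.1 hL, (div_lt_one hL).2 (by linarith [ht.2])⟩, hw1, rfl⟩
  rcases out_cases hw2 with h2 | h2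
  swap
  · have e1 : eL' i s0 t0 (Sum.inl (i, x)) = Sum.inl (i, (x - t0 + s0) / (1 - t0 + s0)) := by
      simp only [eL', Sum.elim_inl, if_true]; rw [if_neg (by linarith), if_neg (by linarith)]
    rw [e1, eL_i, WinL_i, ec, div_mul_cancel₀ _ hL.ne', if_neg (by linarith)]
    refine ⟨⟨div_pos (by show 0 < x - t0 + s0; linarith [hs.1]) hL, (div_lt_one hL).2
      (by show x - t0 + s0 < _; linarith [hx.2])⟩, ?_, ?_⟩
    · rwa [add_sub_cancel_right]
    · congr 2; ring
  rcases lt_or_ge x ((s0 + t0) / 2) with h3 | h3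
  · have e1 : eL' i s0 t0 (Sum.inl (i, x)) = Sum.inr (0, (x - s0) / (t0 - s0) + 1 / 2) := by
      simp only [eL', Sum.elim_inl, if_true]
      rw [if_neg (by linarith), if_pos (by linarith), if_pos h3]
    have e2 : (t0 - s0) * ((x - s0) / (t0 - s0) + 1 / 2 - 1 / 2) = x - s0 := by
      rw [add_sub_cancel_right, mul_div_cancel₀ _ hP.ne']
    rw [e1, WinL_r]
    simp only [eL, Sum.elim_inr]
    rw [e2, if_neg (by linarith)]
    refine ⟨⟨?_, ?_⟩, hw1, by congr 2; ring⟩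
    · have : 0 ≤ (x - s0) / (t0 - s0) := div_nonneg (by linarith) hP.le
      show 0 ≤ (x - s0) / (t0 - s0) + 1 / 2
      linarith
    · have : (x - s0) / (t0 - s0) < 1 / 2 := (div_lt_iff₀ hP).2 (by linarith)
      show (x - s0) / (t0 - s0) + 1 / 2 < 1
      linarith
  · have e1 : eL' i s0 t0 (Sum.inl (i, x)) = Sum.inr (0, (x - t0) / (t0 - s0) + 1 / 2) := by
      simp only [eL', Sum.elim_inl, if_true]
      rw [if_neg (by linarith), if_pos (by linarith), if_neg (by linarith)]
    have e2 : (t0 - s0) * ((x - t0) / (t0 - s0) + 1 / 2 - 1 / 2) = x - t0 := by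
      rw [add_sub_cancel_right, mul_div_cancel₀ _ hP.ne']
    rw [e1, WinL_r]
    simp only [eL, Sum.elim_inr]
    rw [e2, if_pos (by linarith)]
    refine ⟨⟨?_, ?_⟩, hw2, by congr 2; ring⟩
    · have : -(1 / 2) ≤ (x - t0) / (t0 - s0) := (le_div_iff₀ hP).2 (by linarith)
      show 0 ≤ (x - t0) / (t0 - s0) + 1 / 2
      linarith
    · have : (x - t0) / (t0 - s0) < 1 / 2 := (div_lt_iff₀ hP).2 (by linarith)
      show (x - t0) / (t0 - s0) + 1 / 2 < 1
      linarith

/-- Surgery at a self crossing. -/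
lemma surgery_loop (S : Surg D i i s0 t0 ε f) (hm : s0 + ε < t0 - ε) :
    ∃ T : TripleDiagram n 1, T.tripleCount + 1 = D.tripleCount ∧
      T.arc = lpArc D i s0 t0 f := by
  have hP : 0 < t0 - s0 := by linarith [S.g.hε]
  have h1 : ∀ q ∈ Vd n 1, q ∉ WinL i s0 t0 ε → eL i s0 t0 q ∈ Vd n 0 ∧
      eL i s0 t0 q ∉ Win i i s0 t0 ε ∧
      pt D.toPreDiagram (eL i s0 t0 q) = pt (lpPre S hm) q ∧
      (∃ c : ℝ, 0 < c ∧ (lpPre S hm).tangent q = c • D.tangent (eL i s0 t0 q)) ∧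
      eL' i s0 t0 (eL i s0 t0 q) = q := by
    rintro (⟨k, τ⟩ | ⟨k, τ⟩) hq hw
    · show _ ∧ _ ∧ _ = lpArc D i s0 t0 f k τ ∧
        (∃ c : ℝ, 0 < c ∧ deriv (lpArc D i s0 t0 f k) τ = _) ∧ _
      by_cases hk : k = i
      · subst hk
        rw [WinL_i] at hw
        rw [lpArc_i]
        exact lp_h1i S hm hq hw
      · have e1 : eL i s0 t0 (Sum.inl (k, τ)) = Sum.inl (k, τ) := by simp [eL, hk]
        have e2 : eL' i s0 t0 (Sum.inl (k, τ)) = Sum.inl (k, τ) := by simp [eL', hk]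
        rw [e1, e2, lpArc_k hk]
        refine ⟨hq, ?_, rfl, ⟨1, one_pos, (one_smul _ _).symm⟩, rfl⟩
        rintro ⟨x, ⟨hx, -⟩ | ⟨hx, -⟩⟩
        · exact hk (congrArg Prod.fst (Sum.inl.inj hx))
        · exact hk (congrArg Prod.fst (Sum.inl.inj hx))
    · obtain rfl : k = 0 := Subsingleton.elim _ _
      rw [WinL_r] at hw
      exact lp_h1r S hm hq hw
  have h2 : ∀ q ∈ Vd n 0, q ∉ Win i i s0 t0 ε → eL' i s0 t0 q ∈ Vd n 1 ∧
      eL' i s0 t0 q ∉ WinL i s0 t0 ε ∧ eL i s0 t0 (eL' i s0 t0 q) = q := by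
    rintro (⟨k, x⟩ | ⟨k, y⟩) hq hw
    · by_cases hk : k = i
      · subst hk
        rw [Win_ii, not_or] at hw
        exact lp_h2i S hm hq hw.1 hw.2
      · have e1 : eL i s0 t0 (Sum.inl (k, x)) = Sum.inl (k, x) := by simp [eL, hk]
        have e2 : eL' i s0 t0 (Sum.inl (k, x)) = Sum.inl (k, x) := by simp [eL', hk]
        rw [e2, e1]
        refine ⟨hq, ?_, rfl⟩
        rintro ⟨x, ⟨hx, -⟩ | ⟨hx, -⟩⟩
        · exact hk (congrArg Prod.fst (Sum.inl.inj hx))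
        · cases hx
    · exact k.elim0
  have hlp : ∀ τ ∈ Ico (0:ℝ) 1, lpN D i s0 t0 f τ
      = cc D i i t0 s0 f ((t0 - s0) * (τ - 1 / 2)) := by
    intro τ hτ
    unfold lpN; rw [Int.fract_eq_self.2 hτ]
  have h3 : ∀ q ∈ Vd n 1, q ∈ WinL i s0 t0 ε → ∀ q'' ∈ Vd n 1,
      pt (lpPre S hm) q'' = pt (lpPre S hm) q → q'' = q := by
    intro q hq hw q'' hq'' heq
    have hnew : q'' ∈ WinL i s0 t0 ε := by
      by_contra hw''
      obtain ⟨a, b, c, -⟩ := h1 q'' hq'' hw''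
      rw [heq] at c
      generalize eL i s0 t0 q'' = r at a c
      rcases r with ⟨k, x⟩ | ⟨k, x⟩
      swap
      · exact k.elim0
      obtain ⟨τ, ⟨rfl, hτ⟩ | ⟨rfl, hτ⟩⟩ := hw
      · have c' : D.arc k x = lpArc D i s0 t0 f i τ := c
        rw [lpArc_i] at c'
        exact cc_new S (by convert hτ using 2; ring) a c'
      · have c' : D.arc k x = lpN D i s0 t0 f τ := c
        rw [hlp τ hq] at c'
        exact cc_new S.symm hτ a c'
    obtain ⟨τ, ⟨rfl, hτ⟩ | ⟨rfl, hτ⟩⟩ := hw <;> obtain ⟨τ', ⟨rfl, hτ'⟩ | ⟨rfl, hτ'⟩⟩ := hnew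
    · have c' : lpArc D i s0 t0 f i τ' = lpArc D i s0 t0 f i τ := heq
      rw [lpArc_i] at c'
      have := cc_inj S (by convert hτ' using 2; ring) (by convert hτ using 2; ring) c'
      rw [mul_right_cancel₀ (arcN_L S).ne' (add_left_cancel this)]
    · have c' : lpN D i s0 t0 f τ' = lpArc D i s0 t0 f i τ := heq
      rw [lpArc_i, hlp τ' hq''] at c'
      exact absurd c'.symm (cc_cc S (by convert hτ using 2; ring) hτ')
    · have c' : lpArc D i s0 t0 f i τ' = lpN D i s0 t0 f τ := heq
      rw [lpArc_i, hlp τ hq] at c'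
      exact absurd c' (cc_cc S (by convert hτ' using 2; ring) hτ)
    · have c' : lpN D i s0 t0 f τ' = lpN D i s0 t0 f τ := heq
      rw [hlp τ hq, hlp τ' hq''] at c'
      have := cc_inj S.symm hτ' hτ c'
      have := sub_left_injective (mul_left_cancel₀ hP.ne' this)
      rw [this]
  obtain ⟨T, hT, hc⟩ := transfer D (lpPre S hm) (D.arc i s0) (surg_mult S) _ _ _ _ h1 h2 h3
    (fun q _ hq hm => surg_h4 S q hq hm) (surg_h5 S)
  exact ⟨T, hc, by rw [hT]; rfl⟩

end

/-- Existence of surgery data. -/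
lemma exists_surg (D : TripleDiagram n 0) {i j : Fin n} {s0 t0 : ℝ} (hs : s0 ∈ Ioo (0:ℝ) 1)
    (ht : t0 ∈ Ioo (0:ℝ) 1) (heq : D.arc i s0 = D.arc j t0) (hne : (i, s0) ≠ (j, t0))
    {δ : ℝ} (hδ : 0 < δ) : ∃ ε f, Surg D i j s0 t0 ε f ∧ ε < δ := by
  have k : ∀ {δ : ℝ}, 0 < δ → ∀ᶠ ε in 𝓝[>] (0:ℝ), ε ∈ Ioo 0 δ := fun h => Ioo_mem_nhdsGT h
  obtain ⟨ε, hg, h1, h2, h3, h4, h5⟩ := ((good D hs ht heq hne).and ((k hs.1).and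
    ((k (sub_pos.2 hs.2)).and ((k ht.1).and ((k (sub_pos.2 ht.2)).and (k hδ)))))).exists
  obtain ⟨f, hf⟩ := exists_prof hg.hε
  exact ⟨ε, f, ⟨hg, hf, h1.2, by linarith [h2.2], h3.2, by linarith [h4.2]⟩, h5.2⟩

lemma Ioo_of_bdry {t : ℝ} (ht : t ∈ Icc (0:ℝ) 1) (h : ¬ (t = 0 ∨ t = 1)) : t ∈ Ioo (0:ℝ) 1 := by
  push Not at h
  exact ⟨lt_of_le_of_ne ht.1 (Ne.symm h.1), lt_of_le_of_ne ht.2 h.2⟩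

lemma monogon_not_minimal (D : TripleDiagram n 0) {σ : Equiv.Perm (Fin n)} (hD : Realizes D σ)
    {i : Fin n} {s t : ℝ} (hs : s ∈ Icc (0:ℝ) 1) (ht : t ∈ Icc (0:ℝ) 1) (hst : s < t)
    (heq : D.arc i s = D.arc i t) :
    ∃ T : TripleDiagram n 1, Realizes T σ ∧ T.tripleCount < D.tripleCount := by
  have hs' : s ∈ Ioo (0:ℝ) 1 := Ioo_of_bdry hs fun h =>
    bdry_ne (D := D) h ht (fun h' => hst.ne h'.2) heq
  have ht' : t ∈ Ioo (0:ℝ) 1 := Ioo_of_bdry ht fun h =>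
    bdry_ne (D := D) h hs (fun h' => hst.ne' h'.2) heq.symm
  obtain ⟨ε, f, S, hε⟩ := exists_surg D hs' ht' heq (fun h => hst.ne (congrArg Prod.snd h))
    (δ := (t - s) / 2) (by linarith)
  obtain ⟨T, hT, hA⟩ := surgery_loop S (by linarith)
  refine ⟨T, fun k => ?_, by omega⟩
  rw [hA, lpArc_zero S, lpArc_one S]
  exact hD k

lemma bigon_not_minimal (D : TripleDiagram n 0) {σ : Equiv.Perm (Fin n)} (hD : Realizes D σ)
    {i j : Fin n} (hij : i ≠ j) {s₁ s₂ t₁ t₂ : ℝ} (hs₁ : s₁ ∈ Ioo (0:ℝ) 1)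
    (hs₂ : s₂ ∈ Ioo (0:ℝ) 1) (ht₁ : t₁ ∈ Ioo (0:ℝ) 1) (ht₂ : t₂ ∈ Ioo (0:ℝ) 1)
    (hs : s₁ < s₂) (ht : t₁ < t₂) (h1 : D.arc i s₁ = D.arc j t₁) (h2 : D.arc i s₂ = D.arc j t₂) :
    ∃ T : TripleDiagram n 0, Realizes T σ ∧ T.tripleCount < D.tripleCount := by
  obtain ⟨ε, f, S, hε⟩ := exists_surg D hs₁ ht₁ h1 (fun h => hij (congrArg Prod.fst h))
    (δ := min (s₂ - s₁) (t₂ - t₁)) (lt_min (by linarith) (by linarith))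
  have hε1 := hε.trans_le (min_le_left _ _)
  have hε2 := hε.trans_le (min_le_right _ _)
  obtain ⟨T, hT, hA⟩ := surgery_swap S hij
  have hL := arcN_L S
  have hL' := arcN_L S.symm
  -- new parameters of the second crossing
  let u := (t₂ - t₁ + s₁) / (1 - t₁ + s₁)
  let v := (s₂ - s₁ + t₁) / (1 - s₁ + t₁)
  have hu : u ∈ Ioo (0:ℝ) 1 :=
    ⟨div_pos (by linarith [hs₁.1]) hL, (div_lt_one hL).2 (by linarith [ht₂.2])⟩
  have hv : v ∈ Ioo (0:ℝ) 1 :=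
    ⟨div_pos (by linarith [ht₁.1]) hL', (div_lt_one hL').2 (by linarith [hs₂.2])⟩
  have eu : u * (1 - t₁ + s₁) = t₂ - t₁ + s₁ := div_mul_cancel₀ _ hL.ne'
  have ev : v * (1 - s₁ + t₁) = s₂ - s₁ + t₁ := div_mul_cancel₀ _ hL'.ne'
  have hi : T.arc i u = D.arc j t₂ := by
    rw [hA, swArc_i, arcN_ptR S (by linarith), eu]; congr 1; ring
  have hj : T.arc j v = D.arc i s₂ := by
    rw [hA, swArc_j hij, arcN_ptR S.symm (by linarith), ev]; congr 1; ring
  obtain ⟨ε', f', S', -⟩ := exists_surg T hu hv (by rw [hi, hj, h2])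
    (fun h => hij (congrArg Prod.fst h)) one_pos
  obtain ⟨T', hT', hA'⟩ := surgery_swap S' hij
  refine ⟨T', fun k => ?_, by omega⟩
  rw [hA', swArc_zero S', swArc_one S', hA, swArc_zero S, swArc_one S, Equiv.swap_apply_self]
  exact hD k

end TD

end Part9

/-- **Theorem (characterization of minimal diagrams).** A triple diagram `D` without
closed strands realizing `σ` is minimal (has no more triple points than any triple
diagram whose arcs realize `σ`) if and only if it has no monogon (no arc passes through
the same point of the disk at two distinct parameter values) and no parallel bigon
(no two distinct arcs meet at two distinct points `x ≠ y`, with both arcs oriented from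
`x` to `y`). -/
theorem triple_diagram_minimal_iff_no_monogon_no_parallel_bigon
    (n : ℕ) (hn : 1 ≤ n) (σ : Equiv.Perm (Fin n))
    (D : TripleDiagram n 0) (hD : Realizes D σ) :
    (∀ (nl : ℕ) (D' : TripleDiagram n nl), Realizes D' σ →
        D.tripleCount ≤ D'.tripleCount) ↔
      ((¬ ∃ (i : Fin n) (s t : ℝ), s ∈ Set.Icc (0:ℝ) 1 ∧ t ∈ Set.Icc (0:ℝ) 1 ∧
          s ≠ t ∧ D.arc i s = D.arc i t) ∧
       (¬ ∃ (i j : Fin n), i ≠ j ∧ ∃ (x y : Plane), x ≠ y ∧ ‖x‖ < 1 ∧ ‖y‖ < 1 ∧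
          ∃ (s₁ s₂ t₁ t₂ : ℝ), s₁ ∈ Set.Icc (0:ℝ) 1 ∧ s₂ ∈ Set.Icc (0:ℝ) 1 ∧
            t₁ ∈ Set.Icc (0:ℝ) 1 ∧ t₂ ∈ Set.Icc (0:ℝ) 1 ∧ s₁ < s₂ ∧ t₁ < t₂ ∧
            D.arc i s₁ = x ∧ D.arc j t₁ = x ∧ D.arc i s₂ = y ∧ D.arc j t₂ = y)) := by
  constructor
  · intro hmin
    refine ⟨?_, ?_⟩
    · rintro ⟨i, s, t, hs, ht, hne, heq⟩
      rcases lt_or_gt_of_ne hne with h | h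
      · obtain ⟨T, hT, hlt⟩ := TD.monogon_not_minimal D hD hs ht h heq
        exact absurd (hmin 1 T hT) (not_le.2 hlt)
      · obtain ⟨T, hT, hlt⟩ := TD.monogon_not_minimal D hD ht hs h heq.symm
        exact absurd (hmin 1 T hT) (not_le.2 hlt)
    · rintro ⟨i, j, hij, x, y, hxy, hx, hy, s₁, s₂, t₁, t₂, hs₁, hs₂, ht₁, ht₂, hs, ht,
        rfl, h1, rfl, h2⟩
      have key : ∀ k r, r ∈ Set.Icc (0:ℝ) 1 → ‖D.arc k r‖ < 1 → r ∈ Set.Ioo (0:ℝ) 1 := by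
        intro k r hr hlt
        refine TD.Ioo_of_bdry hr ?_
        rintro (rfl | rfl)
        · exact hlt.ne (D.arc_start_bdry k)
        · exact hlt.ne (D.arc_end_bdry k)
      obtain ⟨T, hT, hlt⟩ := TD.bigon_not_minimal D hD hij (key i s₁ hs₁ hx) (key i s₂ hs₂ hy)
        (key j t₁ ht₁ (by rwa [h1])) (key j t₂ ht₂ (by rwa [h2])) hs ht h1.symm h2.symm
      exact absurd (hmin 0 T hT) (not_le.2 hlt)
  · rintro ⟨hmono, hbig⟩ nl D' hD'
    have hm : ∀ (i : Fin n) (s t : ℝ), s ∈ Set.Icc (0:ℝ) 1 → t ∈ Set.Icc (0:ℝ) 1 →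
        D.arc i s = D.arc i t → s = t := by
      intro i s t hs ht heq
      by_contra hne
      exact hmono ⟨i, s, t, hs, ht, hne, heq⟩
    refine TD.reduced_minimal hn hD ⟨hm, ?_⟩ hD'
    intro i j hij s₁ s₂ t₁ t₂ hs₁ hs₂ ht₁ ht₂ hs ht h1 h2
    have key : ∀ s t, s ∈ Set.Icc (0:ℝ) 1 → t ∈ Set.Icc (0:ℝ) 1 → D.arc i s = D.arc j t →
        ‖D.arc i s‖ < 1 := by
      intro s t hs ht heq
      refine D.arc_interior i s (TD.Ioo_of_bdry hs fun h => ?_)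
      exact TD.bdry_ne (D := D) h ht (fun h' => hij h'.1) heq
    exact hbig ⟨i, j, hij, D.arc i s₁, D.arc i s₂, fun h => hs.ne (hm i _ _ hs₁ hs₂ h),
      key s₁ t₁ hs₁ ht₁ h1, key s₂ t₂ hs₂ ht₂ h2, s₁, s₂, t₁, t₂, hs₁, hs₂, ht₁, ht₂, hs, ht,
      rfl, h1.symm, rfl, h2.symm⟩
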